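/- Let (R,m) be a Cohen-Macaulay local ring of dimension d, let M be a horizontally linked R-module of finite G-dimension, and let k be a non-negative integer. Then M satisfies Serre's condition (S_k) if and only if H^i_m(λM) = 0 for all i with d − k + 1 ≤ i ≤ d − 1. -/

import Mathlib

open CategoryTheory

noncomputable section

universe u

/-- The `i`-th Ext group `Ext^i_R(M,N)`, as a type (with its `R`-module structure). -/
abbrev extM (R : Type u) [CommRing R] (i : ℕ) (M N : Type u) [AddCommGroup M] [Module R M]
    [AddCommGroup N] [Module R N] : Type u :=
  ((Ext R (ModuleCat.{u} R) i).obj (Opposite.op (ModuleCat.of R M))).obj (ModuleCat.of R N)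

/-- The `i`-th Tor group `Tor^R_i(M,N)`, as a type. -/
abbrev torM (R : Type u) [CommRing R] (i : ℕ) (M N : Type u) [AddCommGroup M] [Module R M]
    [AddCommGroup N] [Module R N] : Type u :=
  ((Tor (ModuleCat.{u} R) i).obj (ModuleCat.of R M)).obj (ModuleCat.of R N)

/-- The `i`-th local cohomology `H^i_I(M)`, as a type. -/
abbrev locCoh (R : Type u) [CommRing R] (I : Ideal R) (i : ℕ) (M : Type u) [AddCommGroup M]
    [Module R M] : Type u :=
  (localCohomology I i).obj (ModuleCat.of R M)

/-- A submodule `N ≤ M` is superfluous if `K ⊔ N = ⊤` implies `K = ⊤`. -/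
def Submodule.IsSuperfluous {R M : Type u} [CommRing R] [AddCommGroup M] [Module R M]
    (N : Submodule R M) : Prop :=
  ∀ K : Submodule R M, K ⊔ N = ⊤ → K = ⊤

/-- A minimal projective resolution of `M` by finitely generated projective modules:
each `P i → Ω^i M` is a projective cover (i.e. has superfluous kernel). -/
structure MinRes (R : Type u) [CommRing R] (M : Type u) [AddCommGroup M] [Module R M] where
  P : ℕ → ModuleCat.{u} R
  projective : ∀ i, Module.Projective R (P i)
  finite : ∀ i, Module.Finite R (P i)
  d : (i : ℕ) → (↥(P (i + 1)) →ₗ[R] ↥(P i))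
  ε : ↥(P 0) →ₗ[R] M
  surj : Function.Surjective ε
  exact0 : LinearMap.range (d 0) = LinearMap.ker ε
  exact : ∀ i, LinearMap.range (d (i + 1)) = LinearMap.ker (d i)
  min_eps : (LinearMap.ker ε).IsSuperfluous
  min_d : ∀ i, (LinearMap.ker (d i)).IsSuperfluous

namespace MinRes

variable {R M : Type u} [CommRing R] [AddCommGroup M] [Module R M]

/-- `T k F` is the Auslander-Bridger transpose `𝒯_{k+1} M = Tr Ω^k M`, computed as the
cokernel of `P_k* → P_{k+1}*`. -/
def T (F : MinRes R M) (k : ℕ) : Type u :=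
  (Module.Dual R ↥(F.P (k + 1))) ⧸ LinearMap.range (F.d k).dualMap

instance (F : MinRes R M) (k : ℕ) : AddCommGroup (F.T k) :=
  inferInstanceAs (AddCommGroup ((Module.Dual R ↥(F.P (k + 1))) ⧸
    LinearMap.range (F.d k).dualMap))

instance (F : MinRes R M) (k : ℕ) : Module R (F.T k) :=
  inferInstanceAs (Module R ((Module.Dual R ↥(F.P (k + 1))) ⧸
    LinearMap.range (F.d k).dualMap))

/-- The transpose `Tr M = coker(P₀* → P₁*)` computed from a minimal projective presentation. -/
abbrev Tr (F : MinRes R M) : Type u := F.T 0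

/-- `λM = ΩTr M`, realized as the image of `P₀* → P₁*` for a minimal projective
presentation `P₁ → P₀ → M → 0`. -/
def lambdaMod (F : MinRes R M) : Type u :=
  ↥(LinearMap.range (F.d 0).dualMap)

instance (F : MinRes R M) : AddCommGroup F.lambdaMod :=
  inferInstanceAs (AddCommGroup ↥(LinearMap.range (F.d 0).dualMap))

instance (F : MinRes R M) : Module R F.lambdaMod :=
  inferInstanceAs (Module R ↥(LinearMap.range (F.d 0).dualMap))

end MinRes

/-- `M` is a horizontally linked `R`-module, i.e. `M ≅ λλM`. -/
def IsHorizontallyLinked (R : Type u) [CommRing R] (M : Type u) [AddCommGroup M]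
    [Module R M] : Prop :=
  ∃ (F : MinRes R M) (G : MinRes R F.lambdaMod), Nonempty (G.lambdaMod ≃ₗ[R] M)

/-- `M` and `N` are horizontally linked to each other: `M ≅ λN` and `N ≅ λM`. -/
def MutuallyLinked (A : Type u) [CommRing A] (M N : Type u) [AddCommGroup M] [Module A M]
    [AddCommGroup N] [Module A N] : Prop :=
  ∃ (F : MinRes A M) (G : MinRes A N),
    Nonempty (F.lambdaMod ≃ₗ[A] N) ∧ Nonempty (G.lambdaMod ≃ₗ[A] M)

/-- `M` is linked to `N` by the ideal `c`: `c` annihilates both modules and they are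
horizontally linked to each other as `R ⧸ c`-modules. -/
def LinkedBy (R : Type u) [CommRing R] (c : Ideal R) (M N : Type u) [AddCommGroup M]
    [Module R M] [AddCommGroup N] [Module R N] : Prop :=
  ∃ (hM : Module.IsTorsionBySet R M c) (hN : Module.IsTorsionBySet R N c),
    letI := hM.module
    letI := hN.module
    MutuallyLinked (R ⧸ c) M N

/-- A stable module: no nonzero projective direct summand. -/
def IsStableModule (R : Type u) [CommRing R] (M : Type u) [AddCommGroup M] [Module R M] : Prop :=
  ∀ N : Submodule R M, Module.Projective R ↥N → (∃ N' : Submodule R M, IsCompl N N') → N = ⊥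

/-- `M` has G-dimension zero: `M` is finitely generated and reflexive,
and `Ext^i(M,R) = 0 = Ext^i(M*,R)` for all `i > 0`. -/
def IsGDimZero (R : Type u) [CommRing R] (M : Type u) [AddCommGroup M] [Module R M] : Prop :=
  Module.Finite R M ∧ Function.Bijective (Module.Dual.eval R M) ∧
    (∀ i : ℕ, 0 < i → Subsingleton (extM R i M R)) ∧
    (∀ i : ℕ, 0 < i → Subsingleton (extM R i (Module.Dual R M) R))

/-- `M` admits a resolution of length `≤ n` by modules of G-dimension zero. -/
def GDimLE (R : Type u) [CommRing R] : ℕ → ModuleCat.{u} R → Prop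
  | 0, M => IsGDimZero R ↥M
  | n + 1, M =>
    ∃ (G : ModuleCat.{u} R) (f : ↥G →ₗ[R] ↥M), IsGDimZero R ↥G ∧ Function.Surjective f ∧
      GDimLE R n (ModuleCat.of R ↥(LinearMap.ker f))

/-- The G-dimension of `M`: the minimal length of a resolution of `M` by modules of
G-dimension zero (`∞` if there is none). -/
def GDim (R : Type u) [CommRing R] (M : Type u) [AddCommGroup M] [Module R M] : ℕ∞ :=
  sInf {n : ℕ∞ | ∃ k : ℕ, n = k ∧ GDimLE R k (ModuleCat.of R M)}

/-- The reduced grade of `M`: `rgr M = inf{ i > 0 | Ext^i(M,R) ≠ 0 }`. -/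
def rgr (R : Type u) [CommRing R] (M : Type u) [AddCommGroup M] [Module R M] : ℕ∞ :=
  sInf {n : ℕ∞ | ∃ k : ℕ, n = k ∧ 0 < k ∧ ¬ Subsingleton (extM R k M R)}

/-- The grade of `M`: `gr M = inf{ i ≥ 0 | Ext^i(M,R) ≠ 0 }`. -/
def egrade (R : Type u) [CommRing R] (M : Type u) [AddCommGroup M] [Module R M] : ℕ∞ :=
  sInf {n : ℕ∞ | ∃ k : ℕ, n = k ∧ ¬ Subsingleton (extM R k M R)}

/-- `depth_I(M) = inf{ i | Ext^i(R/I, M) ≠ 0 }`; for `I` the maximal ideal of a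
local ring this is the depth of `M`. -/
def edepth (R : Type u) [CommRing R] (I : Ideal R) (M : Type u) [AddCommGroup M]
    [Module R M] : ℕ∞ :=
  sInf {n : ℕ∞ | ∃ k : ℕ, n = k ∧ ¬ Subsingleton (extM R k (R ⧸ I) M)}

/-- The depth of the local ring `R`. -/
def rdepth (R : Type u) [CommRing R] [IsLocalRing R] : ℕ∞ :=
  edepth R (IsLocalRing.maximalIdeal R) R

/-- `depth_{R_p}(M_p)`. -/
def locDepth (R : Type u) [CommRing R] (p : Ideal R) [p.IsPrime] (M : Type u) [AddCommGroup M]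
    [Module R M] : ℕ∞ :=
  edepth (Localization.AtPrime p) (IsLocalRing.maximalIdeal (Localization.AtPrime p))
    (LocalizedModule p.primeCompl M)

/-- `depth R_p`. -/
def locRingDepth (R : Type u) [CommRing R] (p : Ideal R) [p.IsPrime] : ℕ∞ :=
  rdepth (Localization.AtPrime p)

/-- `Gdim_{R_p}(M_p)`. -/
def locGDim (R : Type u) [CommRing R] (p : Ideal R) [p.IsPrime] (M : Type u) [AddCommGroup M]
    [Module R M] : ℕ∞ :=
  GDim (Localization.AtPrime p) (LocalizedModule p.primeCompl M)

/-- `rgr_{R_p}(M_p)`. -/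
def locRgr (R : Type u) [CommRing R] (p : Ideal R) [p.IsPrime] (M : Type u) [AddCommGroup M]
    [Module R M] : ℕ∞ :=
  rgr (Localization.AtPrime p) (LocalizedModule p.primeCompl M)

/-- `dim_{R_p}(M_p)`, the Krull dimension of the support of `M_p` over `R_p`. -/
def locDim (R : Type u) [CommRing R] (p : Ideal R) [p.IsPrime] (M : Type u) [AddCommGroup M]
    [Module R M] : WithBot ℕ∞ :=
  ringKrullDim ((Localization.AtPrime p) ⧸
    Module.annihilator (Localization.AtPrime p) (LocalizedModule p.primeCompl M))

/-- `M` satisfies the condition `S̃_k`: `depth_{R_p}(M_p) ≥ min{k, depth R_p}` for all primes. -/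
def Stilde (R : Type u) [CommRing R] (k : ℕ) (M : Type u) [AddCommGroup M] [Module R M] : Prop :=
  ∀ (p : Ideal R) (_ : p.IsPrime), min (k : ℕ∞) (locRingDepth R p) ≤ locDepth R p M

/-- `M` satisfies Serre's condition `(S_k)`:
`depth_{R_p}(M_p) ≥ min{k, dim_{R_p}(M_p)}` for all primes. -/
def SerreS (R : Type u) [CommRing R] (k : ℕ) (M : Type u) [AddCommGroup M] [Module R M] : Prop :=
  ∀ (p : Ideal R) (_ : p.IsPrime),
    min (k : WithBot ℕ∞) (locDim R p M) ≤ (locDepth R p M : WithBot ℕ∞)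

/-- `M` is a `k`-th syzygy module. -/
def IsKthSyzygy (R : Type u) [CommRing R] : ℕ → ModuleCat.{u} R → Prop
  | 0, _ => True
  | k + 1, M =>
    ∃ (P : ModuleCat.{u} R) (f : ↥M →ₗ[R] ↥P), Module.Projective R ↥P ∧ Module.Finite R ↥P ∧
      Function.Injective f ∧ IsKthSyzygy R k (ModuleCat.of R (↥P ⧸ LinearMap.range f))

/-- The `I`-torsion submodule `Γ_I(M) = { x | I^n x = 0 for some n }`. -/
def gammaTorsion (R : Type u) [CommRing R] (I : Ideal R) (M : Type u) [AddCommGroup M]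
    [Module R M] : Submodule R M where
  carrier := {x | ∃ n : ℕ, ∀ a ∈ I ^ n, a • x = 0}
  zero_mem' := ⟨0, fun a _ => smul_zero a⟩
  add_mem' := by
    rintro x y ⟨n, hn⟩ ⟨m, hm⟩
    exact ⟨n + m, fun a ha => by
      rw [smul_add, hn a (Ideal.pow_le_pow_right (Nat.le_add_right n m) ha),
        hm a (Ideal.pow_le_pow_right (Nat.le_add_left m n) ha), add_zero]⟩
  smul_mem' := by
    rintro c x ⟨n, hn⟩
    exact ⟨n, fun a ha => by rw [smul_comm, hn a ha, smul_zero]⟩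

/-- `N` has finite flat dimension (characterized by uniform vanishing of `Tor`). -/
def HasFiniteFlatDim (R : Type u) [CommRing R] (N : Type u) [AddCommGroup N] [Module R N] : Prop :=
  ∃ n : ℕ, ∀ i : ℕ, n < i → ∀ (M : ModuleCat.{u} R), Subsingleton (torM R i ↥M N)

/-- `N` has finite injective dimension (characterized by uniform vanishing of `Ext`). -/
def HasFiniteInjDim (R : Type u) [CommRing R] (N : Type u) [AddCommGroup N] [Module R N] : Prop :=
  ∃ n : ℕ, ∀ i : ℕ, n < i → ∀ (M : ModuleCat.{u} R), Subsingleton (extM R i ↥M N)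

/-- `K` is a semidualizing `R`-module. -/
def IsSemidualizing (R : Type u) [CommRing R] (K : Type u) [AddCommGroup K] [Module R K] : Prop :=
  Module.Finite R K ∧ Function.Bijective (LinearMap.lsmul R K) ∧
    ∀ i : ℕ, 0 < i → Subsingleton (extM R i K K)

/-- The biduality map `M → Hom(Hom(M,K),K)`. -/
def evalK (R : Type u) [CommRing R] (K M : Type u) [AddCommGroup K] [Module R K]
    [AddCommGroup M] [Module R M] : M →ₗ[R] ((M →ₗ[R] K) →ₗ[R] K) :=
  LinearMap.applyₗ

/-- `M` has `G_K`-dimension zero. -/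
def IsGKDimZero (R : Type u) [CommRing R] (K M : Type u) [AddCommGroup K] [Module R K]
    [AddCommGroup M] [Module R M] : Prop :=
  Module.Finite R M ∧ Function.Bijective (evalK R K M) ∧
    (∀ i : ℕ, 0 < i → Subsingleton (extM R i M K)) ∧
    (∀ i : ℕ, 0 < i → Subsingleton (extM R i (M →ₗ[R] K) K))

/-- `M` admits a resolution of length `≤ n` by modules of `G_K`-dimension zero. -/
def GKDimLE (R : Type u) [CommRing R] (K : Type u) [AddCommGroup K] [Module R K] :
    ℕ → ModuleCat.{u} R → Prop
  | 0, M => IsGKDimZero R K ↥M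
  | n + 1, M =>
    ∃ (G : ModuleCat.{u} R) (f : ↥G →ₗ[R] ↥M), IsGKDimZero R K ↥G ∧ Function.Surjective f ∧
      GKDimLE R K n (ModuleCat.of R ↥(LinearMap.ker f))

/-- The `G_K`-dimension of `M`. -/
def GKDim (R : Type u) [CommRing R] (K M : Type u) [AddCommGroup K] [Module R K]
    [AddCommGroup M] [Module R M] : ℕ∞ :=
  sInf {n : ℕ∞ | ∃ k : ℕ, n = k ∧ GKDimLE R K k (ModuleCat.of R M)}

/-- The grade of a module, `gr_R(M) = grade(Ann_R(M), R) = inf{i | Ext^i(R/Ann M, R) ≠ 0}`. -/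
def grAnn (R : Type u) [CommRing R] (M : Type u) [AddCommGroup M] [Module R M] : ℕ∞ :=
  egrade R (R ⧸ Module.annihilator R M)

/-- The grade of an ideal, `grade(I) = inf{i | Ext^i(R/I, R) ≠ 0}`. -/
def gradeI (R : Type u) [CommRing R] (I : Ideal R) : ℕ∞ :=
  egrade R (R ⧸ I)

/-- The ideal `I` is `G_K`-Gorenstein: `R/I` is `G_K`-perfect and `Ext^{gr I}(R/I, K)` is
cyclic. -/
def IsGKGorensteinIdeal (R : Type u) [CommRing R] (K : Type u) [AddCommGroup K] [Module R K]
    (I : Ideal R) : Prop :=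
  ∃ n : ℕ, grAnn R (R ⧸ I) = (n : ℕ∞) ∧ GKDim R K (R ⧸ I) = (n : ℕ∞) ∧
    ∃ x : extM R n (R ⧸ I) K, Submodule.span R {x} = ⊤

end

namespace HL
open CategoryTheory Limits Opposite
section Rep
variable {R : Type u} [CommRing R]
variable (K L : HomologicalComplex (ModuleCat.{u} R)ᵒᵖ (ComplexShape.down ℕ))

def Rep (n : ℕ) (z : (K.X n).unop) (h : (K.homology n).unop) : Prop :=
  ∃ c : (K.opcycles n).unop, (K.pOpcycles n).unop c = z ∧ (K.homologyι n).unop c = h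

theorem Rep.exists_z (n : ℕ) (h : (K.homology n).unop) : ∃ z, Rep K n z h := by
  have : Epi (K.homologyι n).unop := inferInstance
  obtain ⟨c, hc⟩ := (ModuleCat.epi_iff_surjective _).1 this h
  exact ⟨_, c, rfl, hc⟩

theorem Rep.cocycle {n : ℕ} {z} {h : (K.homology n).unop} (H : Rep K n z h) :
    (K.d (n+1) n).unop z = 0 := by
  obtain ⟨c, rfl, _⟩ := H
  have : (K.pOpcycles n).unop ≫ (K.d (n+1) n).unop = 0 := by
    rw [← unop_comp, K.d_pOpcycles]; rfl
  exact congrArg (fun f => f c) (congrArg (fun f => (ModuleCat.Hom.hom f)) this)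

theorem Rep.exists_h (n : ℕ) (z : (K.X n).unop) (hz : (K.d (n+1) n).unop z = 0) :
    ∃ h, Rep K n z h := by
  have ex := ShortComplex.exact_of_g_is_cokernel
    (ShortComplex.mk (K.d (n+1) n) (K.pOpcycles n) (K.d_pOpcycles _ _))
    (K.opcyclesIsCokernel (n+1) n (by simp))
  have ex' := ex.unop
  rw [ShortComplex.moduleCat_exact_iff] at ex'
  obtain ⟨c, hc⟩ := ex' z hz
  exact ⟨_, c, hc, rfl⟩

theorem Rep.map {n : ℕ} (φ : K ⟶ L) {z} {h : (L.homology n).unop} (H : Rep L n z h) :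
    Rep K n ((φ.f n).unop z) ((HomologicalComplex.homologyMap φ n).unop h) := by
  obtain ⟨c, rfl, rfl⟩ := H
  refine ⟨(HomologicalComplex.opcyclesMap φ n).unop c, ?_, ?_⟩
  · have : (HomologicalComplex.opcyclesMap φ n).unop ≫ (K.pOpcycles n).unop =
      (L.pOpcycles n).unop ≫ (φ.f n).unop := by
      rw [← unop_comp, ← unop_comp, HomologicalComplex.p_opcyclesMap]
    exact congrArg (fun f => f c) (congrArg (fun f => (ModuleCat.Hom.hom f)) this)
  · have : (HomologicalComplex.opcyclesMap φ n).unop ≫ (K.homologyι n).unop =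
      (L.homologyι n).unop ≫ (HomologicalComplex.homologyMap φ n).unop := by
      rw [← unop_comp, ← unop_comp, HomologicalComplex.homologyι_naturality]
    exact congrArg (fun f => f c) (congrArg (fun f => (ModuleCat.Hom.hom f)) this)

theorem Rep.eq_zero_iff {n j : ℕ} (hj : (ComplexShape.down ℕ).next n = j)
    {z} {h : (K.homology n).unop} (H : Rep K n z h) :
    h = 0 ↔ ∃ w, (K.d n j).unop w = z := by
  have ex := ShortComplex.exact_of_f_is_kernel
    (ShortComplex.mk (K.homologyι n) (K.fromOpcycles n j) (K.homologyι_comp_fromOpcycles _ _))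
    (K.homologyIsKernel n j hj)
  have ex' := ex.unop
  rw [ShortComplex.moduleCat_exact_iff] at ex'
  have e : (K.fromOpcycles n j).unop ≫ (K.pOpcycles n).unop = (K.d n j).unop := by
    rw [← unop_comp, K.p_fromOpcycles]
  obtain ⟨c, rfl, rfl⟩ := H
  constructor
  · intro h0
    obtain ⟨w, hw⟩ := ex' c h0
    refine ⟨w, ?_⟩
    rw [← e, ← hw]; rfl
  · rintro ⟨w, hw⟩
    have : Mono (K.pOpcycles n).unop := inferInstance
    have hinj := (ModuleCat.mono_iff_injective _).1 this
    have : c = (K.fromOpcycles n j).unop w := by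
      apply hinj; rw [← hw, ← e]; rfl
    rw [this]
    have : (K.fromOpcycles n j).unop ≫ (K.homologyι n).unop = 0 := by
      rw [← unop_comp, K.homologyι_comp_fromOpcycles]; rfl
    exact congrArg (fun f => f w) (congrArg (fun f => (ModuleCat.Hom.hom f)) this)
end Rep

section cmp
variable {R : Type u} [CommRing R]
open Abelian

theorem extMk_eq_zero_zero_iff {X Y : ModuleCat.{u} R} (P : ProjectiveResolution X)
    (f : P.complex.X 0 ⟶ Y) (hf : P.complex.d 1 0 ≫ f = 0) :
    P.extMk f 1 rfl hf = 0 ↔ f = 0 := by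
  simp only [← P.extEquivCohomologyClass.apply_eq_iff_eq,
    ProjectiveResolution.extEquivCohomologyClass_extMk,
    ProjectiveResolution.extEquivCohomologyClass_zero,
    CochainComplex.HomComplex.CohomologyClass.mk_eq_zero_iff]
  rw [CochainComplex.HomComplex.Cocycle.toSingleMk_mem_coboundaries_iff _ _ _ _ _ (1) (by simp)]
  have hz : IsZero (P.cochainComplex.X 1) := by
    apply HomologicalComplex.isZero_extend_X
    intro i; simp; omega
  constructor
  · rintro ⟨g, hg⟩
    have : g = 0 := hz.eq_of_src _ _
    rw [this, comp_zero] at hg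
    rw [← cancel_epi (P.cochainComplexXIso (-(0:ℕ)) 0 rfl).hom, ← hg, comp_zero]
  · rintro rfl
    exact ⟨0, by simp⟩

theorem extMk_eq_zero_iff' {X Y : ModuleCat.{u} R} (P : ProjectiveResolution X) {n j : ℕ}
    (hj : (ComplexShape.down ℕ).next n = j)
    (f : P.complex.X n ⟶ Y) (hf : P.complex.d (n+1) n ≫ f = 0) :
    P.extMk f (n+1) rfl hf = 0 ↔ ∃ g : P.complex.X j ⟶ Y, P.complex.d n j ≫ g = f := by
  cases n with
  | zero =>
    rw [extMk_eq_zero_zero_iff P f hf]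
    have : ¬ (ComplexShape.down ℕ).Rel 0 j := by simp
    rw [P.complex.shape _ _ this]
    simp [eq_comm]
  | succ p =>
    simp at hj; subst hj
    exact P.extMk_eq_zero_iff f _ rfl hf p rfl

/-- representation of old ext classes -/
def RepO {X : ModuleCat.{u} R} (P : ProjectiveResolution X) (Y : ModuleCat.{u} R) (n : ℕ)
    (z : P.complex.X n ⟶ Y) (h : ((Ext R (ModuleCat.{u} R) n).obj (op X)).obj Y) : Prop :=
  Rep ((((linearYoneda R (ModuleCat.{u} R)).obj Y).rightOp.mapHomologicalComplex _).obj P.complex)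
    n z ((P.isoLeftDerivedObj ((linearYoneda R _).obj Y).rightOp n).inv.unop h)

theorem RepO.exists_z {X : ModuleCat.{u} R} (P : ProjectiveResolution X) (Y : ModuleCat.{u} R) (n : ℕ)
    (h : ((Ext R (ModuleCat.{u} R) n).obj (op X)).obj Y) : ∃ z, RepO P Y n z h :=
  Rep.exists_z ((((linearYoneda R (ModuleCat.{u} R)).obj Y).rightOp.mapHomologicalComplex _).obj P.complex) n _

theorem RepO.cocycle {X : ModuleCat.{u} R} (P : ProjectiveResolution X) {Y : ModuleCat.{u} R} {n : ℕ}
    {z} {h : ((Ext R (ModuleCat.{u} R) n).obj (op X)).obj Y} (H : RepO P Y n z h) :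
    P.complex.d (n+1) n ≫ z = 0 :=
  Rep.cocycle _ H

theorem RepO.exists_h {X : ModuleCat.{u} R} (P : ProjectiveResolution X) (Y : ModuleCat.{u} R) (n : ℕ)
    (z) (hz : P.complex.d (n+1) n ≫ z = 0) : ∃ h, RepO P Y n z h := by
  obtain ⟨h, hh⟩ := Rep.exists_h ((((linearYoneda R (ModuleCat.{u} R)).obj Y).rightOp.mapHomologicalComplex _).obj P.complex) n z hz
  refine ⟨(P.isoLeftDerivedObj ((linearYoneda R _).obj Y).rightOp n).hom.unop h, ?_⟩
  unfold RepO
  have : (P.isoLeftDerivedObj ((linearYoneda R _).obj Y).rightOp n).hom.unop ≫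
    (P.isoLeftDerivedObj ((linearYoneda R _).obj Y).rightOp n).inv.unop = 𝟙 _ := by
      rw [← unop_comp, Iso.inv_hom_id]; rfl
  have e := congrArg (fun f => f h) (congrArg (fun f => (ModuleCat.Hom.hom f)) this)
  exact (congrArg (Rep _ n z) e).mpr hh

theorem RepO.eq_zero_iff {X : ModuleCat.{u} R} (P : ProjectiveResolution X) {Y : ModuleCat.{u} R} {n j : ℕ}
    (hj : (ComplexShape.down ℕ).next n = j)
    {z} {h : ((Ext R (ModuleCat.{u} R) n).obj (op X)).obj Y} (H : RepO P Y n z h) :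
    h = 0 ↔ ∃ w, P.complex.d n j ≫ w = z := by
  have := Rep.eq_zero_iff _ hj H
  refine Iff.trans ?_ this
  have hinj := (ModuleCat.mono_iff_injective (P.isoLeftDerivedObj ((linearYoneda R (ModuleCat.{u} R)).obj Y).rightOp n).inv.unop).1 inferInstance
  exact ⟨fun h0 => by rw [h0]; exact map_zero _, fun h0 => hinj (h0.trans (map_zero _).symm)⟩

theorem RepO.map {X X' : ModuleCat.{u} R} (P : ProjectiveResolution X) (P' : ProjectiveResolution X')
    {f : X' ⟶ X} (φ : P'.complex ⟶ P.complex) (hφ : φ.f 0 ≫ P.π.f 0 = P'.π.f 0 ≫ f)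
    {Y : ModuleCat.{u} R} {n : ℕ}
    {z} {h : ((Ext R (ModuleCat.{u} R) n).obj (op X)).obj Y} (H : RepO P Y n z h) :
    RepO P' Y n (φ.f n ≫ z) ((((Ext R (ModuleCat.{u} R) n).map f.op).app Y) h) := by
  have H2 := Rep.map _ _ ((((linearYoneda R (ModuleCat.{u} R)).obj Y).rightOp.mapHomologicalComplex _).map φ) H
  unfold RepO
  have := ProjectiveResolution.isoLeftDerivedObj_inv_naturality f P' P φ hφ
    ((linearYoneda R (ModuleCat.{u} R)).obj Y).rightOp n
  have := congrArg (fun f => f.unop) this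
  have e := congrArg (fun f => f h) (congrArg (fun f => (ModuleCat.Hom.hom f)) this)
  exact (congrArg (Rep _ n _) e).mpr H2

theorem cmp_aux {X Y : ModuleCat.{u} R} (P : ProjectiveResolution X) (n : ℕ) (z : P.complex.X n ⟶ Y)
    (hz : P.complex.d (n+1) n ≫ z = 0)
    (h : ((Ext R (ModuleCat.{u} R) n).obj (op X)).obj Y) (H : RepO P Y n z h)
    (X' : ModuleCat.{u} R) (f : X' ⟶ X) :
    (((Ext R (ModuleCat.{u} R) n).map f.op).app Y) h = 0 ↔
      (Ext.mk₀ f).comp (P.extMk z (n+1) rfl hz) (zero_add _) = 0 := by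
  let P' := projectiveResolution X'
  have hφ : (ProjectiveResolution.lift f P' P).f 0 ≫ P.π.f 0 = P'.π.f 0 ≫ f :=
    ProjectiveResolution.lift_commutes_zero f P' P
  have H' := H.map P P' _ hφ
  rw [H'.eq_zero_iff P' rfl, ProjectiveResolution.mk₀_comp_extMk (R' := P') z _ rfl hz ⟨_, by simpa using hφ⟩,
    extMk_eq_zero_iff' P' rfl]

theorem cmp₁ {X Y : ModuleCat.{u} R} (n : ℕ) (h : ((Ext R (ModuleCat.{u} R) n).obj (op X)).obj Y) :
    ∃ e : Abelian.Ext X Y n, ∀ (X' : ModuleCat.{u} R) (f : X' ⟶ X),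
    (((Ext R (ModuleCat.{u} R) n).map f.op).app Y) h = 0 ↔ (Ext.mk₀ f).comp e (zero_add _) = 0 := by
  let P := projectiveResolution X
  obtain ⟨z, H⟩ := RepO.exists_z P Y n h
  exact ⟨_, cmp_aux P n z (H.cocycle P) h H⟩

theorem cmp₂ {X Y : ModuleCat.{u} R} (n : ℕ) (e : Abelian.Ext X Y n) :
    ∃ h : ((Ext R (ModuleCat.{u} R) n).obj (op X)).obj Y, ∀ (X' : ModuleCat.{u} R) (f : X' ⟶ X),
    (((Ext R (ModuleCat.{u} R) n).map f.op).app Y) h = 0 ↔ (Ext.mk₀ f).comp e (zero_add _) = 0 := by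
  let P := projectiveResolution X
  obtain ⟨z, hz, rfl⟩ := P.extMk_surjective e _ rfl
  obtain ⟨h, H⟩ := RepO.exists_h P Y n z hz
  exact ⟨_, cmp_aux P n z hz h H⟩

theorem extM_iff (n : ℕ) (X Y : Type u) [AddCommGroup X] [Module R X] [AddCommGroup Y] [Module R Y] :
    Subsingleton (extM R n X Y) ↔
      Subsingleton (Abelian.Ext (ModuleCat.of R X) (ModuleCat.of R Y) n) := by
  constructor
  · intro hs
    refine subsingleton_of_forall_eq 0 fun e => ?_
    obtain ⟨h, hh⟩ := cmp₂ n e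
    have := (hh _ (𝟙 _)).1 (by rw [Subsingleton.elim h 0]; exact map_zero _)
    simpa using this
  · intro hs
    refine subsingleton_of_forall_eq 0 fun h => ?_
    obtain ⟨e, hh⟩ := cmp₁ n h
    have := (hh _ (𝟙 _)).2 (by rw [Subsingleton.elim e 0]; simp)
    rw [op_id, CategoryTheory.Functor.map_id] at this
    exact this
end cmp
end HL

namespace HL
open CategoryTheory Limits Opposite
noncomputable section
section EX
variable {R : Type u} [CommRing R]

/-- short exact sequence -/
structure SES {A B C : Type u} [AddCommGroup A] [AddCommGroup B] [AddCommGroup C]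
    [Module R A] [Module R B] [Module R C] (f : A →ₗ[R] B) (g : B →ₗ[R] C) : Prop where
  inj : Function.Injective f
  exact : Function.Exact f g
  surj : Function.Surjective g

abbrev EX (R : Type u) [CommRing R] (X Y : Type u) [AddCommGroup X] [AddCommGroup Y]
    [Module R X] [Module R Y] (i : ℕ) : Type u :=
  Abelian.Ext (ModuleCat.of R X) (ModuleCat.of R Y) i

variable {X X' X'' Y Y' Y'' A B C A' B' C' : Type u}
variable [AddCommGroup X] [AddCommGroup X'] [AddCommGroup X''] [AddCommGroup Y] [AddCommGroup Y']
  [AddCommGroup Y''] [AddCommGroup A] [AddCommGroup B] [AddCommGroup C]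
  [AddCommGroup A'] [AddCommGroup B'] [AddCommGroup C']
variable [Module R X] [Module R X'] [Module R X''] [Module R Y] [Module R Y'] [Module R Y'']
  [Module R A] [Module R B] [Module R C] [Module R A'] [Module R B'] [Module R C']

namespace EX
open Abelian

def push {i : ℕ} (f : Y →ₗ[R] Y') : EX R X Y i →ₗ[R] EX R X Y' i where
  toFun e := e.comp (Ext.mk₀ (ModuleCat.ofHom f)) (add_zero _)
  map_add' := by intros; simp
  map_smul' := by intros; simp

def pull {i : ℕ} (f : X' →ₗ[R] X) : EX R X Y i →ₗ[R] EX R X' Y i where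
  toFun e := (Ext.mk₀ (ModuleCat.ofHom f)).comp e (zero_add _)
  map_add' := by intros; simp
  map_smul' := by intros; simp

theorem push_apply {i : ℕ} (f : Y →ₗ[R] Y') (e : EX R X Y i) :
    push f e = e.comp (Ext.mk₀ (ModuleCat.ofHom f)) (add_zero _) := rfl
theorem pull_apply {i : ℕ} (f : X' →ₗ[R] X) (e : EX R X Y i) :
    pull f e = (Ext.mk₀ (ModuleCat.ofHom f)).comp e (zero_add _) := rfl

@[simp] theorem push_id {i : ℕ} (e : EX R X Y i) : push LinearMap.id e = e := by
  simp [push_apply, ModuleCat.ofHom_id]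
@[simp] theorem pull_id {i : ℕ} (e : EX R X Y i) : pull LinearMap.id e = e := by
  simp [pull_apply, ModuleCat.ofHom_id]
theorem push_push {i : ℕ} (f : Y →ₗ[R] Y') (g : Y' →ₗ[R] Y'') (e : EX R X Y i) :
    push g (push f e) = push (g ∘ₗ f) e := by
  simp [push_apply, ModuleCat.ofHom_comp]
theorem pull_pull {i : ℕ} (f : X'' →ₗ[R] X') (g : X' →ₗ[R] X) (e : EX R X Y i) :
    pull f (pull g e) = pull (g ∘ₗ f) e := by
  simp [pull_apply, ModuleCat.ofHom_comp]
theorem pull_push {i : ℕ} (f : X' →ₗ[R] X) (g : Y →ₗ[R] Y') (e : EX R X Y i) :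
    pull f (push g e) = push g (pull f e) := by
  simp only [push_apply, pull_apply]
  rw [Ext.comp_assoc_of_third_deg_zero]
theorem push_add {i : ℕ} (f g : Y →ₗ[R] Y') (e : EX R X Y i) :
    push (f + g) e = push f e + push g e := by
  simp [push_apply, ModuleCat.ofHom_add, Ext.mk₀_add]
theorem push_zero {i : ℕ} (e : EX R X Y i) : push (0 : Y →ₗ[R] Y') e = 0 := by
  have : ModuleCat.ofHom (0 : Y →ₗ[R] Y') = 0 := rfl
  simp [push_apply, this]
theorem pull_zero {i : ℕ} (e : EX R X Y i) : pull (0 : X' →ₗ[R] X) e = 0 := by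
  have : ModuleCat.ofHom (0 : X' →ₗ[R] X) = 0 := rfl
  simp [pull_apply, this]
theorem push_smul {i : ℕ} (r : R) (f : Y →ₗ[R] Y') (e : EX R X Y i) :
    push (r • f) e = r • push f e := by
  have : ModuleCat.ofHom (r • f) = r • ModuleCat.ofHom f := rfl
  simp [push_apply, this, Ext.mk₀_smul]
theorem pull_smul {i : ℕ} (r : R) (f : X' →ₗ[R] X) (e : EX R X Y i) :
    pull (r • f) e = r • pull f e := by
  have : ModuleCat.ofHom (r • f) = r • ModuleCat.ofHom f := rfl
  simp [pull_apply, this, Ext.mk₀_smul]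

/-- degree zero -/
def mk (f : X →ₗ[R] Y) : EX R X Y 0 := Ext.mk₀ (ModuleCat.ofHom f)
theorem mk_surj (e : EX R X Y 0) : ∃ f : X →ₗ[R] Y, mk f = e := by
  obtain ⟨f, hf⟩ := (Ext.mk₀_bijective _ _).2 e
  exact ⟨f.hom, hf⟩
theorem mk_eq_zero (f : X →ₗ[R] Y) : mk f = 0 ↔ f = 0 := by
  rw [mk, Ext.mk₀_eq_zero_iff]
  constructor
  · intro h; exact congrArg ModuleCat.Hom.hom h
  · rintro rfl; rfl
theorem mk_inj {f g : X →ₗ[R] Y} (h : mk f = mk g) : f = g := by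
  have := (Ext.mk₀_bijective _ _).1 h
  exact congrArg ModuleCat.Hom.hom this
theorem pull_mk (f : X' →ₗ[R] X) (g : X →ₗ[R] Y) : pull f (mk g) = mk (g ∘ₗ f) := by
  simp [pull_apply, mk, ModuleCat.ofHom_comp]
theorem push_mk (f : X →ₗ[R] Y) (g : Y →ₗ[R] Y') : push g (mk f) = mk (g ∘ₗ f) := by
  simp [push_apply, mk, ModuleCat.ofHom_comp]

end EX

namespace SES
open Abelian
variable {f : A →ₗ[R] B} {g : B →ₗ[R] C}

def sc (h : SES f g) : ShortComplex (ModuleCat.{u} R) :=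
  ShortComplex.mk (ModuleCat.ofHom f) (ModuleCat.ofHom g) (by
    ext x; simpa using h.exact.apply_apply_eq_zero x)

theorem sc_exact (h : SES f g) : h.sc.ShortExact where
  exact := by
    rw [ShortComplex.moduleCat_exact_iff]
    intro x hx
    exact (h.exact x).1 hx
  mono_f := (ModuleCat.mono_iff_injective _).2 h.inj
  epi_g := (ModuleCat.epi_iff_surjective _).2 h.surj

def cls (h : SES f g) : EX R C A 1 := h.sc_exact.extClass

theorem cls_g (h : SES f g) : (Ext.mk₀ (ModuleCat.ofHom g)).comp h.cls (zero_add 1) = 0 :=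
  ShortComplex.ShortExact.comp_extClass h.sc_exact
theorem cls_f (h : SES f g) : Ext.comp h.cls (Ext.mk₀ (ModuleCat.ofHom f)) (add_zero 1) = 0 :=
  ShortComplex.ShortExact.extClass_comp h.sc_exact

/-- covariant connecting map -/
def δ (h : SES f g) (X : Type u) [AddCommGroup X] [Module R X] (i : ℕ) :
    EX R X C i →ₗ[R] EX R X A (i+1) where
  toFun e := Ext.comp e h.cls rfl
  map_add' := by intros; simp
  map_smul' := by intros; simp

theorem push_push_zero (h : SES f g) {i : ℕ} (e : EX R X A i) : EX.push g (EX.push f e) = 0 := by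
  rw [EX.push_push, h.exact.linearMap_comp_eq_zero, EX.push_zero]

theorem δ_push (h : SES f g) {i : ℕ} (e : EX R X B i) : h.δ X i (EX.push g e) = 0 := by
  change (Ext.comp (Ext.comp e (Ext.mk₀ (ModuleCat.ofHom g)) (by omega)) h.cls rfl) = 0
  rw [Ext.comp_assoc_of_second_deg_zero, cls_g, Ext.comp_zero]

theorem push_δ (h : SES f g) {i : ℕ} (e : EX R X C i) : EX.push f (h.δ X i e) = 0 := by
  change (Ext.comp (Ext.comp e h.cls rfl) (Ext.mk₀ (ModuleCat.ofHom f)) (by omega)) = 0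
  rw [Ext.comp_assoc_of_third_deg_zero, cls_f, Ext.comp_zero]

theorem ex1 (h : SES f g) {i : ℕ} (e : EX R X A (i+1)) (he : EX.push f e = 0) :
    ∃ e', h.δ X i e' = e := Ext.covariant_sequence_exact₁ (X := ModuleCat.of R X) h.sc_exact e he rfl
theorem ex2 (h : SES f g) {i : ℕ} (e : EX R X B i) (he : EX.push g e = 0) :
    ∃ e', EX.push f e' = e := Ext.covariant_sequence_exact₂ (X := ModuleCat.of R X) h.sc_exact e he
theorem ex3 (h : SES f g) {i : ℕ} (e : EX R X C i) (he : h.δ X i e = 0) :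
    ∃ e', EX.push g e' = e := Ext.covariant_sequence_exact₃ (X := ModuleCat.of R X) h.sc_exact e rfl he
theorem ex0 (h : SES f g) (e : EX R X A 0) (he : EX.push f e = 0) : e = 0 := by
  obtain ⟨a, rfl⟩ := EX.mk_surj e
  rw [EX.push_mk, EX.mk_eq_zero] at he
  rw [EX.mk_eq_zero]
  ext x
  exact h.inj (by simpa using LinearMap.congr_fun he x)

theorem pull_δ (h : SES f g) {i : ℕ} (t : X' →ₗ[R] X) (e : EX R X C i) :
    EX.pull t (h.δ X i e) = h.δ X' i (EX.pull t e) := by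
  change Ext.comp _ (Ext.comp e h.cls rfl) (by omega) = Ext.comp (Ext.comp _ e (by omega)) h.cls rfl
  rw [Ext.comp_assoc]
  omega

/-- contravariant connecting map -/
def δ' (h : SES f g) (Y : Type u) [AddCommGroup Y] [Module R Y] (i : ℕ) :
    EX R A Y i →ₗ[R] EX R C Y (i+1) where
  toFun e := Ext.comp h.cls e (add_comm _ _)
  map_add' := by intros; simp
  map_smul' := by intros; simp

theorem cex1 (h : SES f g) {i : ℕ} (e : EX R A Y i) (he : h.δ' Y i e = 0) :
    ∃ e', EX.pull f e' = e := Ext.contravariant_sequence_exact₁ (Y := ModuleCat.of R Y) h.sc_exact e (add_comm _ _) he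
theorem cex2 (h : SES f g) {i : ℕ} (e : EX R B Y i) (he : EX.pull f e = 0) :
    ∃ e', EX.pull g e' = e := Ext.contravariant_sequence_exact₂ (Y := ModuleCat.of R Y) h.sc_exact e he
theorem cex3 (h : SES f g) {i : ℕ} (e : EX R C Y (i+1)) (he : EX.pull g e = 0) :
    ∃ e', h.δ' Y i e' = e := Ext.contravariant_sequence_exact₃ (Y := ModuleCat.of R Y) h.sc_exact e he (add_comm _ _)
theorem cex0 (h : SES f g) (e : EX R C Y 0) (he : EX.pull g e = 0) : e = 0 := by
  obtain ⟨a, rfl⟩ := EX.mk_surj e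
  rw [EX.pull_mk, EX.mk_eq_zero] at he
  rw [EX.mk_eq_zero]
  ext x
  obtain ⟨y, rfl⟩ := h.surj x
  simpa using LinearMap.congr_fun he y

theorem δ'_pull (h : SES f g) {i : ℕ} (e : EX R B Y i) : h.δ' Y i (EX.pull f e) = 0 := by
  change (Ext.comp h.cls (Ext.comp (Ext.mk₀ (ModuleCat.ofHom f)) e (by omega)) (by omega)) = 0
  rw [← Ext.comp_assoc_of_second_deg_zero, cls_f, Ext.zero_comp]

theorem cls_nat (h : SES f g) {f' : A' →ₗ[R] B'} {g' : B' →ₗ[R] C'} (h' : SES f' g')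
    (a : A →ₗ[R] A') (b : B →ₗ[R] B') (c : C →ₗ[R] C') (h1 : b ∘ₗ f = f' ∘ₗ a)
    (h2 : c ∘ₗ g = g' ∘ₗ b) : EX.push a h.cls = EX.pull c h'.cls := by
  exact ShortComplex.ShortExact.extClass_naturality h.sc_exact h'.sc_exact
    { τ₁ := ModuleCat.ofHom a, τ₂ := ModuleCat.ofHom b, τ₃ := ModuleCat.ofHom c
      comm₁₂ := by ext x; exact (LinearMap.congr_fun h1 x).symm
      comm₂₃ := by ext x; exact (LinearMap.congr_fun h2 x).symm }

theorem δ_nat (h : SES f g) {f' : A' →ₗ[R] B'} {g' : B' →ₗ[R] C'} (h' : SES f' g')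
    (a : A →ₗ[R] A') (b : B →ₗ[R] B') (c : C →ₗ[R] C') (h1 : b ∘ₗ f = f' ∘ₗ a)
    (h2 : c ∘ₗ g = g' ∘ₗ b) {i : ℕ} (e : EX R X C i) :
    EX.push a (h.δ X i e) = h'.δ X i (EX.push c e) := by
  change Ext.comp (Ext.comp e h.cls rfl) (Ext.mk₀ _) (by omega) = Ext.comp (Ext.comp e (Ext.mk₀ _) (by omega)) h'.cls rfl
  rw [Ext.comp_assoc_of_third_deg_zero, Ext.comp_assoc_of_second_deg_zero]
  congr 1
  exact cls_nat h h' a b c h1 h2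

theorem δ'_nat (h : SES f g) {f' : A' →ₗ[R] B'} {g' : B' →ₗ[R] C'} (h' : SES f' g')
    (a : A →ₗ[R] A') (b : B →ₗ[R] B') (c : C →ₗ[R] C') (h1 : b ∘ₗ f = f' ∘ₗ a)
    (h2 : c ∘ₗ g = g' ∘ₗ b) {i : ℕ} (e : EX R A' Y i) :
    EX.pull c (h'.δ' Y i e) = h.δ' Y i (EX.pull a e) := by
  change Ext.comp (Ext.mk₀ _) (Ext.comp h'.cls e (by omega)) (by omega) = Ext.comp h.cls (Ext.comp (Ext.mk₀ _) e (by omega)) (by omega)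
  rw [← Ext.comp_assoc_of_second_deg_zero]
  have := cls_nat h h' a b c h1 h2
  rw [EX.push_apply, EX.pull_apply] at this
  rw [this, Ext.comp_assoc]
  omega
end SES

/-- vanishing -/
theorem EX.sub_iff {i : ℕ} : Subsingleton (EX R X Y i) ↔ ∀ e : EX R X Y i, e = 0 :=
  ⟨fun _ e => Subsingleton.elim _ _, fun h => subsingleton_of_forall_eq 0 h⟩

theorem EX.sub_proj [Module.Projective R X] (i : ℕ) : Subsingleton (EX R X Y (i+1)) := by
  have : Projective (ModuleCat.of R X) := (IsProjective.iff_projective (ModuleCat.of R X)).1 inferInstance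
  exact Abelian.Ext.subsingleton_of_projective _ _ _

theorem EX.sub_congr_left {i : ℕ} (e : X ≃ₗ[R] X') (h : Subsingleton (EX R X Y i)) :
    Subsingleton (EX R X' Y i) := by
  rw [EX.sub_iff]
  intro a
  have : EX.pull e.symm.toLinearMap (EX.pull e.toLinearMap a) = a := by
    rw [EX.pull_pull]; simp
  rw [← this, Subsingleton.elim (EX.pull e.toLinearMap a) 0, map_zero]
theorem EX.sub_congr_right {i : ℕ} (e : Y ≃ₗ[R] Y') (h : Subsingleton (EX R X Y i)) :
    Subsingleton (EX R X Y' i) := by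
  rw [EX.sub_iff]
  intro a
  have : EX.push e.toLinearMap (EX.push e.symm.toLinearMap a) = a := by
    rw [EX.push_push]; simp
  rw [← this, Subsingleton.elim (EX.push e.symm.toLinearMap a) 0, map_zero]

theorem EX.sub_of_retract {i : ℕ} (a : X →ₗ[R] X') (b : X' →ₗ[R] X) (hab : b ∘ₗ a = LinearMap.id)
    (h : Subsingleton (EX R X' Y i)) : Subsingleton (EX R X Y i) := by
  rw [EX.sub_iff]
  intro e
  have : EX.pull a (EX.pull b e) = e := by
    rw [EX.pull_pull, hab, EX.pull_id]
  rw [← this, Subsingleton.elim (EX.pull b e) 0, map_zero]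

namespace SES
variable {f : A →ₗ[R] B} {g : B →ₗ[R] C}
theorem sub_mid (h : SES f g) {i : ℕ} (h1 : Subsingleton (EX R X A i)) (h2 : Subsingleton (EX R X C i)) :
    Subsingleton (EX R X B i) := by
  rw [EX.sub_iff]; intro e
  obtain ⟨e', rfl⟩ := h.ex2 e (Subsingleton.elim _ _)
  rw [Subsingleton.elim e' 0, map_zero]
theorem sub_left (h : SES f g) {i : ℕ} (h1 : Subsingleton (EX R X C i)) (h2 : Subsingleton (EX R X B (i+1))) :
    Subsingleton (EX R X A (i+1)) := by
  rw [EX.sub_iff]; intro e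
  obtain ⟨e', rfl⟩ := h.ex1 e (Subsingleton.elim _ _)
  rw [Subsingleton.elim e' 0, map_zero]
theorem sub_left0 (h : SES f g) (h2 : Subsingleton (EX R X B 0)) :
    Subsingleton (EX R X A 0) := by
  rw [EX.sub_iff]; intro e
  exact h.ex0 e (Subsingleton.elim _ _)
theorem sub_right (h : SES f g) {i : ℕ} (h1 : Subsingleton (EX R X B i)) (h2 : Subsingleton (EX R X A (i+1))) :
    Subsingleton (EX R X C i) := by
  rw [EX.sub_iff]; intro e
  obtain ⟨e', rfl⟩ := h.ex3 e (Subsingleton.elim _ _)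
  rw [Subsingleton.elim e' 0, map_zero]
theorem csub_mid (h : SES f g) {i : ℕ} (h1 : Subsingleton (EX R A Y i)) (h2 : Subsingleton (EX R C Y i)) :
    Subsingleton (EX R B Y i) := by
  rw [EX.sub_iff]; intro e
  obtain ⟨e', rfl⟩ := h.cex2 e (Subsingleton.elim _ _)
  rw [Subsingleton.elim e' 0, map_zero]
theorem csub_left (h : SES f g) {i : ℕ} (h1 : Subsingleton (EX R B Y i)) (h2 : Subsingleton (EX R C Y (i+1))) :
    Subsingleton (EX R A Y i) := by
  rw [EX.sub_iff]; intro e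
  obtain ⟨e', rfl⟩ := h.cex1 e (Subsingleton.elim _ _)
  rw [Subsingleton.elim e' 0, map_zero]
theorem csub_right (h : SES f g) {i : ℕ} (h1 : Subsingleton (EX R A Y i)) (h2 : Subsingleton (EX R B Y (i+1))) :
    Subsingleton (EX R C Y (i+1)) := by
  rw [EX.sub_iff]; intro e
  obtain ⟨e', rfl⟩ := h.cex3 e (Subsingleton.elim _ _)
  rw [Subsingleton.elim e' 0, map_zero]
theorem csub_right0 (h : SES f g) (h2 : Subsingleton (EX R B Y 0)) :
    Subsingleton (EX R C Y 0) := by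
  rw [EX.sub_iff]; intro e
  exact h.cex0 e (Subsingleton.elim _ _)
/-- Ext^{1}(C,Y)=0 from lifting. -/
theorem csub_right1 (h : SES f g) (h1 : ∀ φ : A →ₗ[R] Y, ∃ ψ : B →ₗ[R] Y, ψ ∘ₗ f = φ)
    (h2 : Subsingleton (EX R B Y 1)) : Subsingleton (EX R C Y 1) := by
  rw [EX.sub_iff]; intro e
  obtain ⟨e', rfl⟩ := h.cex3 e (Subsingleton.elim _ _)
  obtain ⟨φ, rfl⟩ := EX.mk_surj e'
  obtain ⟨ψ, rfl⟩ := h1 φ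
  rw [← EX.pull_mk, h.δ'_pull]
theorem extend_of_sub (h : SES f g) (h1 : Subsingleton (EX R C Y 1)) (φ : A →ₗ[R] Y) :
    ∃ ψ : B →ₗ[R] Y, ψ ∘ₗ f = φ := by
  obtain ⟨e, he⟩ := h.cex1 (EX.mk φ) (Subsingleton.elim _ _)
  obtain ⟨ψ, rfl⟩ := EX.mk_surj e
  exact ⟨ψ, EX.mk_inj (by rw [← he, EX.pull_mk])⟩

theorem of_ker {g : B →ₗ[R] C} (hg : Function.Surjective g) : SES (LinearMap.ker g).subtype g where
  inj := Subtype.val_injective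
  exact := LinearMap.exact_subtype_ker_map g
  surj := hg
theorem of_mkQ (N : Submodule R B) : SES N.subtype N.mkQ where
  inj := Subtype.val_injective
  exact := LinearMap.exact_subtype_mkQ N
  surj := N.mkQ_surjective
theorem of_inj {f : A →ₗ[R] B} (hf : Function.Injective f) : SES f (LinearMap.range f).mkQ where
  inj := hf
  exact := LinearMap.exact_map_mkQ_range f
  surj := Submodule.mkQ_surjective _
end SES
end EX
end
end HL

namespace HL
open CategoryTheory Limits Opposite
noncomputable section
section LC
variable {R : Type u} [CommRing R]

/-- the factor map `R/I → R/J`. -/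
def fac {I J : Ideal R} (h : I ≤ J) : (R ⧸ I) →ₗ[R] (R ⧸ J) :=
  Submodule.mapQ _ _ LinearMap.id h

@[simp] theorem fac_mk {I J : Ideal R} (h : I ≤ J) (x : R) :
    fac h (Ideal.Quotient.mk I x) = Ideal.Quotient.mk J x := rfl
theorem fac_comp {I J K : Ideal R} (h : I ≤ J) (h' : J ≤ K) : fac h' ∘ₗ fac h = fac (h.trans h') := by
  ext; rfl
theorem fac_self {I : Ideal R} (h : I ≤ I) : fac h = LinearMap.id := by
  ext; rfl

variable {N A B C : Type u}
variable [AddCommGroup N] [AddCommGroup A] [AddCommGroup B] [AddCommGroup C]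
  [Module R N] [Module R A] [Module R B] [Module R C]

def PZ (J : ℕ → Ideal R) (N : Type u) [AddCommGroup N] [Module R N] (i : ℕ) : Prop :=
  ∀ n (e : EX R (R ⧸ J n) N i), ∃ m, ∃ h : J m ≤ J n, EX.pull (fac h) e = 0

theorem PZ.cofinal {J J' : ℕ → Ideal R} {i : ℕ} (h1 : ∀ n, ∃ m, J m ≤ J' n)
    (h2 : ∀ n, ∃ m, J' m ≤ J n) (h : PZ J N i) : PZ J' N i := by
  intro n e
  obtain ⟨m, hm⟩ := h1 n
  obtain ⟨m2, hm2, h0⟩ := h m (EX.pull (fac hm) e)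
  obtain ⟨m3, hm3⟩ := h2 m2
  refine ⟨m3, hm3.trans (hm2.trans hm), ?_⟩
  have := congrArg (EX.pull (fac hm3)) h0
  rwa [EX.pull_pull, EX.pull_pull, fac_comp, fac_comp, map_zero] at this

def trm (I : Ideal R) (N : Type u) [AddCommGroup N] [Module R N] (i : ℕ) (n m : ℕ) (h : n ≤ m) :
    EX R (R ⧸ I ^ n) N i →ₗ[R] EX R (R ⧸ I ^ m) N i :=
  EX.pull (fac (Ideal.pow_le_pow_right h))

instance (I : Ideal R) (i : ℕ) : DirectedSystem (fun n => EX R (R ⧸ I ^ n) N i) (fun n m h => trm I N i n m h) where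
  map_self := by intro n x; change EX.pull _ _ = _; rw [fac_self, EX.pull_id]
  map_map := by
    intro k j i h1 h2 x
    change EX.pull _ (EX.pull _ _) = EX.pull _ _
    rw [EX.pull_pull, fac_comp]

def LC (I : Ideal R) (N : Type u) [AddCommGroup N] [Module R N] (i : ℕ) : Type u :=
  Module.DirectLimit (fun n => EX R (R ⧸ I ^ n) N i) (trm I N i)

instance (I : Ideal R) (i : ℕ) : AddCommGroup (LC I N i) :=
  inferInstanceAs (AddCommGroup (Module.DirectLimit (fun n => EX R (R ⧸ I ^ n) N i) (trm I N i)))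
instance (I : Ideal R) (i : ℕ) : Module R (LC I N i) :=
  inferInstanceAs (Module R (Module.DirectLimit (fun n => EX R (R ⧸ I ^ n) N i) (trm I N i)))

namespace LC
variable {I : Ideal R} {i : ℕ}

def of (I : Ideal R) (N : Type u) [AddCommGroup N] [Module R N] (i n : ℕ) : EX R (R ⧸ I ^ n) N i →ₗ[R] LC I N i :=
  Module.DirectLimit.of R ℕ (fun n => EX R (R ⧸ I ^ n) N i) (trm I N i) n

theorem of_trm {n m : ℕ} (h : n ≤ m) (e : EX R (R ⧸ I ^ n) N i) :
    of I N i m (trm I N i n m h e) = of I N i n e := Module.DirectLimit.of_f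

theorem exists_of (x : LC I N i) : ∃ n e, of I N i n e = x := Module.DirectLimit.exists_of x

theorem of_zero {n : ℕ} {e : EX R (R ⧸ I ^ n) N i} (h : of I N i n e = 0) :
    ∃ m, ∃ h : n ≤ m, trm I N i n m h e = 0 := by
  obtain ⟨m, hm, h'⟩ := Module.DirectLimit.of.zero_exact h
  exact ⟨m, hm, h'⟩

theorem sub_iff : Subsingleton (LC I N i) ↔ PZ (fun n => I ^ n) N i := by
  constructor
  · intro h n e
    obtain ⟨m, hm, h0⟩ := of_zero (Subsingleton.elim (of I N i n e) 0)
    exact ⟨m, _, h0⟩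
  · intro h
    refine subsingleton_of_forall_eq 0 fun x => ?_
    obtain ⟨n, e, rfl⟩ := exists_of x
    obtain ⟨m, hm, h0⟩ := h n e
    rw [← of_trm (le_max_left n m)]
    have : trm I N i n (max n m) (le_max_left n m) e =
      EX.pull (fac (Ideal.pow_le_pow_right (le_max_right n m))) (EX.pull (fac hm) e) := by
      rw [EX.pull_pull, fac_comp]; rfl
    rw [this, h0, map_zero, map_zero]

def map (I : Ideal R) (i : ℕ) (f : A →ₗ[R] B) : LC I A i →ₗ[R] LC I B i :=
  Module.DirectLimit.map (fun n => EX.push f) (by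
    intro n m h; ext e
    exact (EX.pull_push _ _ _).symm)

theorem map_of (f : A →ₗ[R] B) {n : ℕ} (e : EX R (R ⧸ I ^ n) A i) :
    map I i f (of I A i n e) = of I B i n (EX.push f e) :=
  Module.DirectLimit.map_apply_of _ _ _

theorem map_map (f : A →ₗ[R] B) (g : B →ₗ[R] C) (x : LC I A i) :
    map I i g (map I i f x) = map I i (g ∘ₗ f) x := by
  obtain ⟨n, e, rfl⟩ := exists_of x
  rw [map_of, map_of, map_of, EX.push_push]
theorem map_id (x : LC I A i) : map I i LinearMap.id x = x := by
  obtain ⟨n, e, rfl⟩ := exists_of x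
  rw [map_of, EX.push_id]
theorem map_smul (r : R) (f : A →ₗ[R] B) (x : LC I A i) :
    map I i (r • f) x = r • map I i f x := by
  obtain ⟨n, e, rfl⟩ := exists_of x
  rw [map_of, map_of, EX.push_smul, _root_.map_smul]
theorem map_add (f g : A →ₗ[R] B) (x : LC I A i) :
    map I i (f + g) x = map I i f x + map I i g x := by
  obtain ⟨n, e, rfl⟩ := exists_of x
  rw [map_of, map_of, map_of, EX.push_add, _root_.map_add]
theorem map_zero (x : LC I A i) : map I i (0 : A →ₗ[R] B) x = 0 := by
  obtain ⟨n, e, rfl⟩ := exists_of x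
  rw [map_of, EX.push_zero, _root_.map_zero]

variable {f : A →ₗ[R] B} {g : B →ₗ[R] C}

def δ (I : Ideal R) (i : ℕ) (h : SES f g) : LC I C i →ₗ[R] LC I A (i+1) :=
  Module.DirectLimit.map (fun n => h.δ _ i) (by
    intro n m h; ext e
    exact (SES.pull_δ _ _ _).symm)
theorem δ_of (h : SES f g) {n : ℕ} (e : EX R (R ⧸ I ^ n) C i) :
    δ I i h (of I C i n e) = of I A (i+1) n (h.δ _ i e) :=
  Module.DirectLimit.map_apply_of _ _ _

theorem trm_push (f : A →ₗ[R] B) {n m : ℕ} (h : n ≤ m) (e : EX R (R ⧸ I ^ n) A i) :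
  trm I B i n m h (EX.push f e) = EX.push f (trm I A i n m h e) := EX.pull_push _ _ _
theorem trm_δ (hs : SES f g) {n m : ℕ} (h : n ≤ m) (e : EX R (R ⧸ I ^ n) C i) :
  trm I A (i+1) n m h (hs.δ _ i e) = hs.δ _ i (trm I C i n m h e) := SES.pull_δ _ _ _

theorem δ_map (h : SES f g) (x : LC I B i) : δ I i h (map I i g x) = 0 := by
  obtain ⟨n, e, rfl⟩ := exists_of x
  rw [map_of, δ_of, SES.δ_push, _root_.map_zero]
theorem map_δ (h : SES f g) (x : LC I C i) : map I (i+1) f (δ I i h x) = 0 := by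
  obtain ⟨n, e, rfl⟩ := exists_of x
  rw [δ_of, map_of, SES.push_δ, _root_.map_zero]
theorem map_map_zero (h : SES f g) (x : LC I A i) : map I i g (map I i f x) = 0 := by
  obtain ⟨n, e, rfl⟩ := exists_of x
  rw [map_of, map_of, SES.push_push_zero h, _root_.map_zero]

theorem ex0 (h : SES f g) (x : LC I A 0) (hx : map I 0 f x = 0) : x = 0 := by
  obtain ⟨n, e, rfl⟩ := exists_of x
  rw [map_of] at hx
  obtain ⟨m, hm, h0⟩ := of_zero hx
  rw [trm_push] at h0
  rw [← of_trm hm, h.ex0 _ h0, _root_.map_zero]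
theorem ex1 (h : SES f g) (x : LC I A (i+1)) (hx : map I (i+1) f x = 0) : ∃ y, δ I i h y = x := by
  obtain ⟨n, e, rfl⟩ := exists_of x
  rw [map_of] at hx
  obtain ⟨m, hm, h0⟩ := of_zero hx
  rw [trm_push] at h0
  obtain ⟨e', he'⟩ := h.ex1 _ h0
  exact ⟨of _ _ _ _ e', by rw [δ_of, he', of_trm]⟩
theorem ex2 (h : SES f g) (x : LC I B i) (hx : map I i g x = 0) : ∃ y, map I i f y = x := by
  obtain ⟨n, e, rfl⟩ := exists_of x
  rw [map_of] at hx
  obtain ⟨m, hm, h0⟩ := of_zero hx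
  rw [trm_push] at h0
  obtain ⟨e', he'⟩ := h.ex2 _ h0
  exact ⟨of _ _ _ _ e', by rw [map_of, he', of_trm]⟩
theorem ex3 (h : SES f g) (x : LC I C i) (hx : δ I i h x = 0) : ∃ y, map I i g y = x := by
  obtain ⟨n, e, rfl⟩ := exists_of x
  rw [δ_of] at hx
  obtain ⟨m, hm, h0⟩ := of_zero hx
  rw [trm_δ] at h0
  obtain ⟨e', he'⟩ := h.ex3 _ h0
  exact ⟨of _ _ _ _ e', by rw [map_of, he', of_trm]⟩

theorem sub_of_forall (h : ∀ x : LC I N i, x = 0) : Subsingleton (LC I N i) := subsingleton_of_forall_eq 0 h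

theorem sub_mid (h : SES f g) (h1 : Subsingleton (LC I A i)) (h2 : Subsingleton (LC I C i)) :
    Subsingleton (LC I B i) := sub_of_forall fun x => by
  obtain ⟨y, rfl⟩ := ex2 h x (Subsingleton.elim _ _)
  rw [Subsingleton.elim y 0, _root_.map_zero]
theorem sub_left (h : SES f g) (h1 : Subsingleton (LC I C i)) (h2 : Subsingleton (LC I B (i+1))) :
    Subsingleton (LC I A (i+1)) := sub_of_forall fun x => by
  obtain ⟨y, rfl⟩ := ex1 h x (Subsingleton.elim _ _)
  rw [Subsingleton.elim y 0, _root_.map_zero]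
theorem sub_left0 (h : SES f g) (h2 : Subsingleton (LC I B 0)) :
    Subsingleton (LC I A 0) := sub_of_forall fun x => ex0 h x (Subsingleton.elim _ _)
theorem sub_right (h : SES f g) (h1 : Subsingleton (LC I B i)) (h2 : Subsingleton (LC I A (i+1))) :
    Subsingleton (LC I C i) := sub_of_forall fun x => by
  obtain ⟨y, rfl⟩ := ex3 h x (Subsingleton.elim _ _)
  rw [Subsingleton.elim y 0, _root_.map_zero]
theorem sub_congr (e : A ≃ₗ[R] B) (h : Subsingleton (LC I A i)) : Subsingleton (LC I B i) :=
  sub_of_forall fun x => by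
  have : map I i e.toLinearMap (map I i e.symm.toLinearMap x) = x := by
    rw [map_map]; simp [map_id]
  rw [← this, Subsingleton.elim (map I i e.symm.toLinearMap x) 0, _root_.map_zero]
theorem sub_of_subsingleton [Subsingleton A] : Subsingleton (LC I A i) :=
  sub_of_forall fun x => by
  rw [← map_id x, Subsingleton.elim LinearMap.id (0 : A →ₗ[R] A), map_zero]
end LC

theorem colim_sub {J : Type} [SmallCategory J] [IsFiltered J] {K : J ⥤ ModuleCat.{u} R} {c : Cocone K}
    (hc : IsColimit c) : Subsingleton c.pt ↔ ∀ j (x : K.obj j), ∃ k, ∃ f : j ⟶ k, K.map f x = 0 := by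
  haveI : PreservesFilteredColimitsOfSize.{0, 0} (forget (ModuleCat.{u} R)) :=
    preservesFilteredColimitsOfSize_shrink.{0, u, 0, u} _
  constructor
  · intro hs j x
    obtain ⟨k, a, b, hk⟩ := (Concrete.isColimit_rep_eq_iff_exists _ hc x (0 : K.obj j)).1 (@Subsingleton.elim c.pt hs _ _)
    exact ⟨k, a, hk.trans (_root_.map_zero _)⟩
  · intro h
    refine subsingleton_of_forall_eq 0 fun x => ?_
    obtain ⟨j, y, rfl⟩ := Concrete.isColimit_exists_rep _ hc x
    obtain ⟨k, f, hf⟩ := h j y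
    rw [← c.w f]
    change c.ι.app k (K.map f y) = 0
    rw [hf, _root_.map_zero]

theorem colim_ev_sub {J : Type} [SmallCategory J] [IsFiltered J] (D : J ⥤ ModuleCat.{u} R ⥤ ModuleCat.{u} R)
    (N : ModuleCat.{u} R) : Subsingleton ((colimit D).obj N) ↔
      ∀ j (x : (D.obj j).obj N), ∃ k, ∃ f : j ⟶ k, (D.map f).app N x = 0 :=
  colim_sub (isColimitOfPreserves ((evaluation (ModuleCat.{u} R) (ModuleCat.{u} R)).obj N) (colimit.isColimit D))

theorem locCoh_aux (I : Ideal R) (i : ℕ) (N : Type u) [AddCommGroup N] [Module R N] :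
    Subsingleton (locCoh R I i N) ↔
      ∀ (n : ℕ) (x : extM R i (R ⧸ I ^ n) N), ∃ m, ∃ h : n ≤ m,
        ((Ext R (ModuleCat.{u} R) i).map (ModuleCat.ofHom (fac (Ideal.pow_le_pow_right h) :
          (R ⧸ I ^ m) →ₗ[R] (R ⧸ I ^ n))).op).app (ModuleCat.of R N) x = 0 := by
  refine (colim_ev_sub (localCohomology.diagram (localCohomology.idealPowersDiagram I) i) _).trans ?_
  constructor
  · intro h n x
    obtain ⟨k, f, hf⟩ := h (op (op n)) x
    exact ⟨k.unop.unop, leOfHom f.unop.unop, hf⟩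
  · intro h j x
    obtain ⟨m, hm, hf⟩ := h j.unop.unop x
    exact ⟨op (op m), (homOfLE hm).op.op, hf⟩

theorem locCoh_iff (I : Ideal R) (i : ℕ) (N : Type u) [AddCommGroup N] [Module R N] :
    Subsingleton (locCoh R I i N) ↔ Subsingleton (LC I N i) := by
  rw [LC.sub_iff, locCoh_aux]
  constructor
  · intro hs n e
    obtain ⟨h, hh⟩ := cmp₂ i e
    obtain ⟨m, hm, h0⟩ := hs n h
    exact ⟨m, _, (hh _ _).1 h0⟩
  · intro h n x
    obtain ⟨e, he⟩ := cmp₁ i x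
    obtain ⟨m, hm, h0⟩ := h n e
    refine ⟨max n m, le_max_left _ _, (he _ _).2 ?_⟩
    have := congrArg (EX.pull (fac (I := I ^ (max n m)) (J := I ^ m) (Ideal.pow_le_pow_right (le_max_right _ _)))) h0
    rwa [EX.pull_pull, fac_comp, _root_.map_zero] at this
end LC
end
end HL

namespace HL
open CategoryTheory Limits Opposite
noncomputable section
section Gd
variable {R : Type u} [CommRing R]

/-- resolution by finite projectives -/
structure Res (R : Type u) [CommRing R] (M : Type u) [AddCommGroup M] [Module R M] where
  P : ℕ → Type u
  [acg : ∀ i, AddCommGroup (P i)]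
  [mod : ∀ i, Module R (P i)]
  [proj : ∀ i, Module.Projective R (P i)]
  [fin : ∀ i, Module.Finite R (P i)]
  d : (i : ℕ) → (P (i + 1) →ₗ[R] P i)
  ε : P 0 →ₗ[R] M
  surj : Function.Surjective ε
  exact0 : LinearMap.range (d 0) = LinearMap.ker ε
  exact : ∀ i, LinearMap.range (d (i + 1)) = LinearMap.ker (d i)

attribute [instance] Res.acg Res.mod Res.proj Res.fin

variable {M L A B C X Y : Type u} [AddCommGroup M] [Module R M] [AddCommGroup L] [Module R L]
variable [AddCommGroup A] [Module R A] [AddCommGroup B] [Module R B] [AddCommGroup C] [Module R C]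
variable [AddCommGroup X] [Module R X] [AddCommGroup Y] [Module R Y]

theorem ext_comp_surj {f g : B →ₗ[R] Y} {p : A →ₗ[R] B} (hp : Function.Surjective p)
    (h : f ∘ₗ p = g ∘ₗ p) : f = g := by
  ext x; obtain ⟨a, rfl⟩ := hp x; exact LinearMap.congr_fun h a

theorem factor_surj {p : A →ₗ[R] B} (hp : Function.Surjective p) (f : A →ₗ[R] Y)
    (h : ∀ a, p a = 0 → f a = 0) : ∃ g : B →ₗ[R] Y, g ∘ₗ p = f := by
  refine ⟨(LinearMap.ker p).liftQ f (fun a ha => h a ha) ∘ₗ (p.quotKerEquivOfSurjective hp).symm.toLinearMap, ?_⟩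
  ext a
  have : (p.quotKerEquivOfSurjective hp).symm (p a) = (LinearMap.ker p).mkQ a := by
    rw [LinearEquiv.symm_apply_eq]; rfl
  simp [this]
  rfl

namespace Res

def shift (F : Res R M) : Res R (LinearMap.range (F.d 0)) where
  P i := F.P (i+1)
  d i := F.d (i+1)
  ε := (F.d 0).rangeRestrict
  surj := LinearMap.surjective_rangeRestrict _
  exact0 := by rw [LinearMap.ker_rangeRestrict]; exact F.exact 0
  exact i := F.exact (i+1)

theorem ses0 (F : Res R M) : SES (LinearMap.range (F.d 0)).subtype F.ε where
  inj := Subtype.val_injective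
  exact := by
    rw [LinearMap.exact_iff, Submodule.range_subtype, F.exact0]
  surj := F.surj

/-- exactness of `Hom(F,Y)` at spot `i+1`. -/
def E0 (F : Res R M) (Y : Type u) [AddCommGroup Y] [Module R Y] (i : ℕ) : Prop :=
  ∀ f : F.P (i+1) →ₗ[R] Y, f ∘ₗ F.d (i+1) = 0 → ∃ g : F.P i →ₗ[R] Y, g ∘ₗ F.d i = f

theorem shift_E0 (F : Res R M) (i : ℕ) : F.shift.E0 Y i ↔ F.E0 Y (i+1) := Iff.rfl

theorem ext_iff (F : Res R M) (i : ℕ) : Subsingleton (EX R M Y (i+1)) ↔ F.E0 Y i := by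
  induction i generalizing M with
  | zero =>
    constructor
    · intro h f hf
      obtain ⟨g, hg⟩ := factor_surj F.shift.surj f (by
        intro a ha
        have : a ∈ LinearMap.range (F.d 1) := by
          rw [F.exact 0]; exact congrArg Subtype.val ha
        obtain ⟨b, rfl⟩ := this
        exact LinearMap.congr_fun hf b)
      obtain ⟨ψ, hψ⟩ := F.ses0.extend_of_sub h g
      refine ⟨ψ, ?_⟩
      rw [← hg, ← hψ]; rfl
    · intro h
      refine F.ses0.csub_right1 (fun φ => ?_) (EX.sub_proj 0)
      obtain ⟨g, hg⟩ := h (φ ∘ₗ F.shift.ε) (by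
        ext x
        have : F.shift.ε (F.shift.d 0 x) = 0 := by
          have : F.shift.d 0 x ∈ LinearMap.ker F.shift.ε := by rw [← F.shift.exact0]; exact ⟨x, rfl⟩
          exact this
        change φ (F.shift.ε (F.shift.d 0 x)) = 0
        rw [this, map_zero])
      refine ⟨g, ext_comp_surj F.shift.surj hg⟩
  | succ i ih =>
    rw [← F.shift_E0, ← ih F.shift]
    exact ⟨fun h => F.ses0.csub_left (EX.sub_proj _) h, fun h => F.ses0.csub_right h (EX.sub_proj _)⟩

end Res

theorem exists_res [IsNoetherianRing R] (M : Type u) [AddCommGroup M] [Module R M] [Module.Finite R M] :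
    Nonempty (Res R M) := by
  classical
  -- build the sequence of submodules of free modules
  let Obj := Σ n : ℕ, Submodule R (Fin n → R)
  have step : ∀ o : Obj, ∃ m : ℕ, ∃ f : (Fin m → R) →ₗ[R] (Fin o.1 → R), LinearMap.range f = o.2 := by
    intro o
    obtain ⟨m, g, hg⟩ := Module.Finite.exists_fin' R o.2
    exact ⟨m, o.2.subtype ∘ₗ g, by rw [LinearMap.range_comp, LinearMap.range_eq_top.2 hg]; simp⟩
  choose m f hf using step
  obtain ⟨m0, ε, hε⟩ := Module.Finite.exists_fin' R M
  let o : ℕ → Obj := fun n => Nat.rec ⟨m0, LinearMap.ker ε⟩ (fun _ o => ⟨m o, LinearMap.ker (f o)⟩) n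
  exact ⟨{ P := fun n => Fin (o n).1 → R
           d := fun n => f (o n)
           ε := ε
           surj := hε
           exact0 := hf (o 0)
           exact := fun i => hf (o (i+1)) }⟩

/-- G-dimension zero (with the new `Ext`). -/
structure GZ (R : Type u) [CommRing R] (L : Type u) [AddCommGroup L] [Module R L] : Prop where
  fin : Module.Finite R L
  ev : Function.Bijective (Module.Dual.eval R L)
  ext : ∀ i, Subsingleton (EX R L R (i+1))
  ext' : ∀ i, Subsingleton (EX R (Module.Dual R L) R (i+1))

theorem GZ_iff : GZ R L ↔ IsGDimZero R L := by
  constructor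
  · intro h
    refine ⟨h.fin, h.ev, fun i hi => ?_, fun i hi => ?_⟩
    · obtain ⟨i, rfl⟩ := Nat.exists_eq_succ_of_ne_zero hi.ne'
      exact (extM_iff _ _ _).2 (h.ext i)
    · obtain ⟨i, rfl⟩ := Nat.exists_eq_succ_of_ne_zero hi.ne'
      exact (extM_iff _ _ _).2 (h.ext' i)
  · rintro ⟨h1, h2, h3, h4⟩
    exact ⟨h1, h2, fun i => (extM_iff _ _ _).1 (h3 _ i.succ_pos), fun i => (extM_iff _ _ _).1 (h4 _ i.succ_pos)⟩

theorem SES.dual {f : A →ₗ[R] B} {g : B →ₗ[R] C} (h : SES f g)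
    (hs : ∀ φ : A →ₗ[R] R, ∃ ψ : B →ₗ[R] R, ψ ∘ₗ f = φ) : SES g.dualMap f.dualMap where
  inj := LinearMap.dualMap_injective_of_surjective h.surj
  exact := by
    intro φ
    constructor
    · intro h0
      obtain ⟨γ, hγ⟩ := factor_surj h.surj φ (by
        intro b hb
        obtain ⟨a, rfl⟩ := (h.exact b).1 hb
        exact LinearMap.congr_fun h0 a)
      exact ⟨γ, hγ⟩
    · rintro ⟨γ, rfl⟩
      ext a
      simp [h.exact.apply_apply_eq_zero]
  surj := hs

variable [IsNoetherianRing R]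

namespace GZ

theorem congr (e : L ≃ₗ[R] M) (h : GZ R L) : GZ R M where
  fin := haveI := h.fin; Module.Finite.equiv e
  ev := by
    haveI : Module.IsReflexive R L := ⟨h.ev⟩
    haveI := Module.equiv e
    exact Module.bijective_dual_eval R M
  ext i := EX.sub_congr_left e (h.ext i)
  ext' i := EX.sub_congr_left e.symm.dualMap (h.ext' i)

theorem of_proj [Module.Projective R L] [Module.Finite R L] : GZ R L where
  fin := inferInstance
  ev := Module.bijective_dual_eval R L
  ext i := EX.sub_proj i
  ext' i := EX.sub_proj i

variable {f : A →ₗ[R] B} {g : B →ₗ[R] C}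

theorem left (h : SES f g) (hB : GZ R B) (hC : GZ R C) : GZ R A := by
  have hs := h.extend_of_sub (hC.ext 0)
  have hd := h.dual hs
  haveI := hB.fin
  refine ⟨Module.Finite.of_injective f h.inj, ⟨?_, ?_⟩, fun i => h.csub_left (hB.ext i) (hC.ext (i+1)), ?_⟩
  · rw [injective_iff_map_eq_zero]
    intro a ha
    refine h.inj (hB.ev.1 ?_)
    ext ψ
    simpa using LinearMap.congr_fun ha (ψ ∘ₗ f)
  · intro Φ
    obtain ⟨b, hb⟩ := hB.ev.2 (Φ ∘ₗ f.dualMap)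
    have hb' : ∀ ψ : B →ₗ[R] R, ψ b = Φ (ψ ∘ₗ f) := fun ψ => LinearMap.congr_fun hb ψ
    have : g b = 0 := by
      refine hC.ev.1 ?_
      ext γ
      have : γ ∘ₗ g ∘ₗ f = 0 := by rw [h.exact.linearMap_comp_eq_zero]; simp
      have := hb' (γ ∘ₗ g)
      simpa [LinearMap.comp_assoc, ‹γ ∘ₗ g ∘ₗ f = 0›] using this
    obtain ⟨a, rfl⟩ := (h.exact b).1 this
    refine ⟨a, ?_⟩
    ext φ
    obtain ⟨ψ, rfl⟩ := hs φ
    simpa using hb' ψ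
  · intro i
    cases i with
    | zero =>
      refine hd.csub_right1 (fun φ => ?_) (hB.ext' 0)
      obtain ⟨c, rfl⟩ := hC.ev.2 φ
      obtain ⟨b, rfl⟩ := h.surj c
      exact ⟨Module.Dual.eval R B b, by ext; simp⟩
    | succ i => exact hd.csub_right (hC.ext' i) (hB.ext' (i+1))

theorem right (h : SES f g) (hA : GZ R A) (hB : GZ R B)
    (hs : ∀ φ : A →ₗ[R] R, ∃ ψ : B →ₗ[R] R, ψ ∘ₗ f = φ) : GZ R C := by
  have hd := h.dual hs
  haveI := hB.fin
  refine ⟨Module.Finite.of_surjective g h.surj, ⟨?_, ?_⟩, ?_, fun i => hd.csub_left (hB.ext' i) (hA.ext' (i+1))⟩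
  · rw [injective_iff_map_eq_zero]
    intro c hc
    obtain ⟨b, rfl⟩ := h.surj c
    obtain ⟨Φ, hΦ⟩ := factor_surj hd.surj (Module.Dual.eval R B b) (by
      intro β hβ
      obtain ⟨γ, rfl⟩ := (hd.exact β).1 hβ
      simpa using LinearMap.congr_fun hc γ)
    obtain ⟨a, rfl⟩ := hA.ev.2 Φ
    have : f a = b := hB.ev.1 (by
      ext ψ; simpa using LinearMap.congr_fun hΦ ψ)
    rw [← this, h.exact.apply_apply_eq_zero]
  · intro Γ
    obtain ⟨ψ, hψ⟩ := hd.extend_of_sub (hA.ext' 0) Γ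
    obtain ⟨b, rfl⟩ := hB.ev.2 ψ
    exact ⟨g b, by rw [← hψ]; ext; simp⟩
  · intro i
    cases i with
    | zero => exact h.csub_right1 hs (hB.ext 0)
    | succ i => exact h.csub_right (hA.ext i) (hB.ext (i+1))

theorem mid (h : SES f g) (hA : GZ R A) (hC : GZ R C) : GZ R B := by
  have hs := h.extend_of_sub (hC.ext 0)
  have hd := h.dual hs
  refine ⟨?_, ⟨?_, ?_⟩, fun i => h.csub_mid (hA.ext i) (hC.ext i), fun i => hd.csub_mid (hC.ext' i) (hA.ext' i)⟩
  · haveI := hA.fin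
    haveI := hC.fin
    exact Module.Finite.of_exact h.exact h.surj
  · rw [injective_iff_map_eq_zero]
    intro b hb
    have hb' : ∀ ψ : B →ₗ[R] R, ψ b = 0 := fun ψ => LinearMap.congr_fun hb ψ
    have : g b = 0 := hC.ev.1 (by ext γ; simpa using hb' (γ ∘ₗ g))
    obtain ⟨a, rfl⟩ := (h.exact b).1 this
    have : a = 0 := hA.ev.1 (by
      ext φ
      obtain ⟨ψ, rfl⟩ := hs φ
      simpa using hb' ψ)
    rw [this, map_zero]
  · intro Φ
    obtain ⟨c, hc⟩ := hC.ev.2 (Φ ∘ₗ g.dualMap)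
    obtain ⟨b, rfl⟩ := h.surj c
    obtain ⟨Ψ, hΨ⟩ := factor_surj hd.surj (Φ - Module.Dual.eval R B b) (by
      intro β hβ
      obtain ⟨γ, rfl⟩ := (hd.exact β).1 hβ
      have := LinearMap.congr_fun hc γ
      simp at this
      simp [this])
    obtain ⟨a, rfl⟩ := hA.ev.2 Ψ
    refine ⟨f a + b, ?_⟩
    ext ψ
    have := LinearMap.congr_fun hΨ ψ
    simp at this
    simp [this]

theorem cosyz (h : GZ R L) : ∃ m, ∃ ι : L →ₗ[R] (Fin m → R), Function.Injective ι ∧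
    (∀ φ : L →ₗ[R] R, ∃ ψ : (Fin m → R) →ₗ[R] R, ψ ∘ₗ ι = φ) ∧ GZ R ((Fin m → R) ⧸ LinearMap.range ι) := by
  haveI := h.fin
  obtain ⟨m, π, hπ⟩ := Module.Finite.exists_fin' R (Module.Dual R L)
  let ι : L →ₗ[R] (Fin m → R) := LinearMap.pi fun i => π (Pi.single i 1)
  have key : ∀ v l, π v l = ∑ i, v i * ι l i := by
    intro v l
    conv_lhs => rw [pi_eq_sum_univ' v]
    simp [ι]
  have inj : Function.Injective ι := by
    rw [injective_iff_map_eq_zero]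
    intro l hl
    refine h.ev.1 ?_
    ext φ
    obtain ⟨v, rfl⟩ := hπ φ
    simp [key, hl]
  have hs : (∀ φ : L →ₗ[R] R, ∃ ψ : (Fin m → R) →ₗ[R] R, ψ ∘ₗ ι = φ) := by
    intro φ
    obtain ⟨v, rfl⟩ := hπ φ
    refine ⟨∑ i, v i • LinearMap.proj i, ?_⟩
    ext l
    simp [key]
  exact ⟨m, ι, inj, hs, right (SES.of_inj inj) h of_proj hs⟩
end GZ

abbrev Gd (n : ℕ) (M : Type u) [AddCommGroup M] [Module R M] : Prop := GDimLE R n (ModuleCat.of R M)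

theorem Gd.zero_iff : Gd (R := R) 0 M ↔ GZ R M := GZ_iff.symm
theorem Gd.succ_iff {n} : Gd (R := R) (n+1) M ↔ ∃ (G : ModuleCat.{u} R) (f : ↥G →ₗ[R] M), GZ R G ∧
    Function.Surjective f ∧ Gd (R := R) n (LinearMap.ker f) := by
  simp only [GZ_iff]; rfl

theorem Gd.congr {n} (e : L ≃ₗ[R] M) (h : Gd (R := R) n L) : Gd (R := R) n M := by
  cases n with
  | zero => rw [Gd.zero_iff] at *; exact h.congr e
  | succ n =>
    rw [Gd.succ_iff] at *
    obtain ⟨G, f, hG, hf, hk⟩ := h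
    refine ⟨G, e.toLinearMap ∘ₗ f, hG, e.surjective.comp hf, ?_⟩
    rwa [LinearMap.ker_comp, LinearEquiv.ker, ← LinearMap.ker]

theorem SES.kerEquiv {f : A →ₗ[R] B} {g : B →ₗ[R] C} (h : SES f g) : Nonempty (A ≃ₗ[R] LinearMap.ker g) :=
  ⟨(LinearEquiv.ofInjective f h.inj).trans (LinearEquiv.ofEq _ _ (LinearMap.exact_iff.1 h.exact).symm)⟩

theorem Gd.left {n} {f : A →ₗ[R] B} {g : B →ₗ[R] C} (h : SES f g) (hC : GZ R C) (hB : Gd (R := R) n B) :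
    Gd (R := R) n A := by
  obtain ⟨e⟩ := h.kerEquiv
  refine Gd.congr e.symm ?_
  cases n with
  | zero => rw [Gd.zero_iff] at *; exact GZ.left (SES.of_ker h.surj) hB hC
  | succ n =>
    rw [Gd.succ_iff] at *
    obtain ⟨G, π, hG, hπ, hk⟩ := hB
    have h2 : SES (LinearMap.ker (g ∘ₗ π)).subtype (g ∘ₗ π) := SES.of_ker (h.surj.comp hπ)
    let r : LinearMap.ker (g ∘ₗ π) →ₗ[R] LinearMap.ker g := π.restrict (fun x hx => hx)
    refine ⟨ModuleCat.of R (LinearMap.ker (g ∘ₗ π)), r, GZ.left h2 hG hC, ?_, ?_⟩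
    · rintro ⟨x, hx⟩
      obtain ⟨y, rfl⟩ := hπ x
      exact ⟨⟨y, hx⟩, rfl⟩
    · refine Gd.congr (LinearEquiv.ofBijective
        (LinearMap.codRestrict (LinearMap.ker r) (LinearMap.codRestrict (LinearMap.ker (g ∘ₗ π)) (LinearMap.ker π).subtype ?_) ?_) ⟨?_, ?_⟩) hk
      · rintro ⟨x, hx⟩
        have hx : π x = 0 := hx
        simp [hx]
      · rintro ⟨x, hx⟩
        exact Subtype.ext hx
      · intro x y hxy
        exact Subtype.ext (congrArg (fun z => z.1.1) hxy)
      · rintro ⟨⟨x, hx⟩, hx2⟩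
        exact ⟨⟨x, congrArg Subtype.val hx2⟩, rfl⟩

theorem SES.prod : SES (LinearMap.inl R A B) (LinearMap.snd R A B) where
  inj := LinearMap.inl_injective
  exact := Function.Exact.inl_snd
  surj := LinearMap.snd_surjective

theorem Gd.prod {n} (hB : GZ R B) (hA : Gd (R := R) n A) : Gd (R := R) n (A × B) := by
  cases n with
  | zero => rw [Gd.zero_iff] at *; exact GZ.mid SES.prod hA hB
  | succ n =>
    rw [Gd.succ_iff] at *
    obtain ⟨G, π, hG, hπ, hk⟩ := hA
    refine ⟨ModuleCat.of R (G × B), π.prodMap LinearMap.id, GZ.mid SES.prod hG hB,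
      Function.Surjective.prodMap hπ Function.surjective_id, ?_⟩
    refine Gd.congr (LinearEquiv.ofBijective (LinearMap.codRestrict _ (LinearMap.inl R G B ∘ₗ (LinearMap.ker π).subtype) ?_) ⟨?_, ?_⟩) hk
    · rintro ⟨x, hx⟩
      have hx : π x = 0 := hx
      simp [hx]
    · intro x y hxy
      exact Subtype.ext (congrArg (fun z => z.1.1) hxy)
    · rintro ⟨⟨x, y⟩, h⟩
      have h1 : π x = 0 := congrArg Prod.fst h
      have h2 : y = 0 := congrArg Prod.snd h
      subst h2
      exact ⟨⟨x, h1⟩, rfl⟩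

theorem Gd.syz {n} [Module.Projective R B] [Module.Finite R B] {f : A →ₗ[R] B} {g : B →ₗ[R] C} (h : SES f g)
    (hC : Gd (R := R) (n+1) C) : Gd (R := R) n A := by
  rw [Gd.succ_iff] at hC
  obtain ⟨G, π, hG, hπ, hk⟩ := hC
  obtain ⟨s, hs⟩ := Module.projective_lifting_property π g hπ
  have hs' : ∀ b, π (s b) = g b := fun b => LinearMap.congr_fun hs b
  have hgf : ∀ a, g (f a) = 0 := h.exact.apply_apply_eq_zero
  let i : A →ₗ[R] (LinearMap.ker π × B) :=
    LinearMap.prod (LinearMap.codRestrict _ (-(s ∘ₗ f)) (fun a => by simp [hs', hgf])) f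
  let q : (LinearMap.ker π × B) →ₗ[R] G := LinearMap.coprod (LinearMap.ker π).subtype s
  have : SES i q := by
    refine ⟨fun x y hxy => h.inj (congrArg Prod.snd hxy), ?_, ?_⟩
    · rintro ⟨⟨x, hx⟩, y⟩
      have hx : π x = 0 := hx
      constructor
      · intro h0
        have h0 : x + s y = 0 := h0
        have : g y = 0 := by
          have := congrArg π h0
          simpa [hx, hs'] using this
        obtain ⟨a, rfl⟩ := (h.exact y).1 this
        refine ⟨a, Prod.ext (Subtype.ext ?_) rfl⟩
        exact (eq_neg_of_add_eq_zero_left h0).symm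
      · rintro ⟨a, ha⟩
        have h1 : - s (f a) = x := congrArg (fun z => z.1.1) ha
        have h2 : f a = y := congrArg (fun z => z.2) ha
        change x + s y = 0
        rw [← h1, ← h2, neg_add_cancel]
    · intro x
      obtain ⟨b, hb⟩ := h.surj (π x)
      refine ⟨⟨⟨x - s b, by simp [hs', hb]⟩, b⟩, ?_⟩
      simp [q]
  exact Gd.left this hG (Gd.prod GZ.of_proj hk)

theorem Res.omGZ (F : Res R M) (n : ℕ) (h : Gd (R := R) n M) : GZ R (LinearMap.range (F.d n)) := by
  induction n generalizing M with
  | zero => rw [Gd.zero_iff] at h; exact GZ.left F.ses0 GZ.of_proj h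
  | succ n ih => exact ih F.shift (Gd.syz F.ses0 h)

theorem Res.ext_zero_of_omGZ (F : Res R M) (n : ℕ) (h : GZ R (LinearMap.range (F.d n))) (i : ℕ) (hi : n < i) :
    F.E0 R i := by
  induction n generalizing M i with
  | zero =>
    obtain ⟨i, rfl⟩ := Nat.exists_eq_succ_of_ne_zero hi.ne'
    exact (F.shift.ext_iff i).1 (h.ext i)
  | succ n ih =>
    obtain ⟨i, rfl⟩ := Nat.exists_eq_succ_of_ne_zero (by omega : i ≠ 0)
    exact ih F.shift h i (by omega)

theorem Res.gz (F : Res R M) (n : ℕ) (h : GZ R (LinearMap.range (F.d n))) (h0 : ∀ i, F.E0 R i) : GZ R M := by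
  induction n generalizing M with
  | zero => exact GZ.right F.ses0 h GZ.of_proj (F.ses0.extend_of_sub ((F.ext_iff 0).2 (h0 0)))
  | succ n ih =>
    exact GZ.right F.ses0 (ih F.shift h (fun i => h0 (i+1))) GZ.of_proj (F.ses0.extend_of_sub ((F.ext_iff 0).2 (h0 0)))
end Gd
end
end HL

namespace HL
open CategoryTheory Limits Opposite
noncomputable section
section AB
variable {R : Type u} [CommRing R]
variable {M L P X Y Y' : Type u} [AddCommGroup M] [Module R M] [AddCommGroup L] [Module R L]
variable [AddCommGroup P] [Module R P] 
variable [AddCommGroup X] [Module R X] [AddCommGroup Y] [Module R Y] [AddCommGroup Y'] [Module R Y']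

theorem EX.push_sum {i m : ℕ} (f : Fin m → (Y →ₗ[R] Y')) (e : EX R X Y i) :
    EX.push (∑ k, f k) e = ∑ k, EX.push (f k) e :=
  map_sum (⟨⟨fun f => EX.push f e, EX.push_zero e⟩, fun f g => EX.push_add f g e⟩ : (Y →ₗ[R] Y') →+ EX R X Y' i) f _

theorem sum_single_proj (m : ℕ) :
    (∑ k, LinearMap.single R (fun _ : Fin m => R) k ∘ₗ LinearMap.proj k) = LinearMap.id := by
  ext i j
  simp [LinearMap.sum_apply, Finset.sum_apply, Pi.single_apply]

theorem EX.pi_ext {i m : ℕ} (e : EX R X (Fin m → R) i)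
    (h : ∀ k, EX.push (LinearMap.proj k : (Fin m → R) →ₗ[R] R) e = 0) : e = 0 := by
  rw [← EX.push_id e, ← sum_single_proj, EX.push_sum]
  refine Finset.sum_eq_zero fun k _ => ?_
  rw [← EX.push_push, h, map_zero]

theorem exists_retract (P : Type u) [AddCommGroup P] [Module R P] [Module.Projective R P] [Module.Finite R P] :
    ∃ m, ∃ s : P →ₗ[R] (Fin m → R), ∃ π : (Fin m → R) →ₗ[R] P, π ∘ₗ s = LinearMap.id := by
  obtain ⟨m, π, hπ⟩ := Module.Finite.exists_fin' R P
  obtain ⟨s, hs⟩ := Module.projective_lifting_property π LinearMap.id hπ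
  exact ⟨m, s, π, hs⟩

theorem EX.proj_ext [Module.Projective R P] [Module.Finite R P] {i : ℕ} (e : EX R X P i)
    (h : ∀ φ : P →ₗ[R] R, EX.push φ e = 0) : e = 0 := by
  obtain ⟨m, s, π, hs⟩ := exists_retract (R := R) P
  rw [← EX.push_id e, ← hs, ← EX.push_push, EX.pi_ext (EX.push s e), map_zero]
  intro k
  rw [EX.push_push, h]

theorem EX.sub_proj_right [Module.Projective R P] [Module.Finite R P] {i : ℕ} (h : Subsingleton (EX R X R i)) :
    Subsingleton (EX R X P i) := EX.sub_iff.2 fun e => EX.proj_ext e fun _ => Subsingleton.elim _ _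

variable [IsNoetherianRing R]

theorem GZ.sub {h : ℕ} (hL : GZ R L) (h0 : ∀ t < h, Subsingleton (EX R X R t)) (t : ℕ) (ht : t < h) :
    Subsingleton (EX R X L t) := by
  induction t generalizing L with
  | zero =>
    obtain ⟨m, ι, hι, -, -⟩ := hL.cosyz
    exact (SES.of_inj hι).sub_left0 (EX.sub_proj_right (h0 0 ht))
  | succ t ih =>
    obtain ⟨m, ι, hι, -, hC⟩ := hL.cosyz
    exact (SES.of_inj hι).sub_left (ih hC (by omega)) (EX.sub_proj_right (h0 _ ht))

/-- injectivity of `Ext^h(X,L) → Ext^h(X,R^m)` -/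
theorem push_inj_of {A B C : Type u} [AddCommGroup A] [Module R A] [AddCommGroup B] [Module R B]
    [AddCommGroup C] [Module R C] {f : A →ₗ[R] B} {g : B →ₗ[R] C} (hs : SES f g) {h : ℕ}
    (h0 : ∀ t < h, Subsingleton (EX R X C t)) (z : EX R X A h) (hz : EX.push f z = 0) : z = 0 := by
  cases h with
  | zero => exact hs.ex0 z hz
  | succ h =>
    obtain ⟨w, rfl⟩ := hs.ex1 z hz
    haveI := h0 h (by omega)
    rw [Subsingleton.elim w 0, map_zero]

theorem GZ.theta {h : ℕ} (hL : GZ R L) (h0 : ∀ t < h, Subsingleton (EX R X R t))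
    (g : (L →ₗ[R] R) →ₗ[R] EX R X R h) : ∃ z : EX R X L h, ∀ f : L →ₗ[R] R, EX.push f z = g f := by
  obtain ⟨m, ι, hι, hs, hC⟩ := hL.cosyz
  obtain ⟨m', j, hj, -, hC'⟩ := hC.cosyz
  have S := SES.of_inj hι
  let w : EX R X (Fin m → R) h := ∑ k, EX.push (LinearMap.single R (fun _ : Fin m => R) k) (g (LinearMap.proj k ∘ₗ ι))
  have hw : ∀ φ : (Fin m → R) →ₗ[R] R, EX.push φ w = g (φ ∘ₗ ι) := by
    intro φ
    have : φ = ∑ k, φ (Pi.single k 1) • LinearMap.proj k := by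
      ext k; simp [Pi.single_apply]
    conv_rhs => rw [this]
    rw [show (∑ k, φ (Pi.single k 1) • LinearMap.proj k) ∘ₗ ι = ∑ k, φ (Pi.single k 1) • (LinearMap.proj k ∘ₗ ι) by
      ext l; simp, map_sum, map_sum]
    refine Finset.sum_congr rfl fun k _ => ?_
    rw [EX.push_push, map_smul]
    have : φ ∘ₗ LinearMap.single R (fun _ => R) k = φ (Pi.single k 1) • LinearMap.id := by
      ext; simp
    rw [this, EX.push_smul, EX.push_id]
  have hw0 : EX.push (LinearMap.range ι).mkQ w = 0 := by
    refine push_inj_of (SES.of_inj hj) (fun t ht => hC'.sub h0 t ht) _ ?_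
    refine EX.pi_ext _ fun k => ?_
    rw [EX.push_push, EX.push_push, hw]
    rw [LinearMap.comp_assoc, LinearMap.comp_assoc, S.exact.linearMap_comp_eq_zero]
    simp
  obtain ⟨z, hz⟩ := S.ex2 w hw0
  refine ⟨z, fun f => ?_⟩
  obtain ⟨φ, rfl⟩ := hs f
  rw [← EX.push_push, hz, hw]

variable [IsLocalRing R]
open IsLocalRing

theorem smul_EX_eq_zero {I : Ideal R} {i : ℕ} (e : EX R (R ⧸ I) Y i) (r : R) (hr : r ∈ I) : r • e = 0 := by
  rw [← EX.pull_id e, ← EX.pull_smul]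
  have : (r • LinearMap.id : (R ⧸ I) →ₗ[R] (R ⧸ I)) = 0 := by
    ext
    simp only [LinearMap.comp_apply, LinearMap.smul_apply, LinearMap.id_apply]
    change Ideal.Quotient.mk I (r * 1) = 0
    rw [Ideal.Quotient.eq_zero_iff_mem]; simpa using hr
  rw [this, EX.pull_zero]

theorem exists_to_residue (N : Type u) [AddCommGroup N] [Module R N] [Module.Finite R N] [Nontrivial N] :
    ∃ φ : N →ₗ[R] (R ⧸ maximalIdeal R), φ ≠ 0 := by
  obtain ⟨K, hK, -⟩ := (eq_top_or_exists_le_coatom (⊥ : Submodule R N)).resolve_left bot_ne_top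
  haveI : IsSimpleModule R (N ⧸ K) := isSimpleModule_iff_isCoatom.2 hK
  obtain ⟨I, hI, ⟨e⟩⟩ := isSimpleModule_iff_quot_maximal.1 this
  obtain rfl := IsLocalRing.eq_maximalIdeal hI
  refine ⟨e.toLinearMap ∘ₗ K.mkQ, fun h => hK.1 ?_⟩
  rw [eq_top_iff]
  intro x _
  have := LinearMap.congr_fun h x
  simpa using this

theorem GZ.not_inj {h : ℕ} (hL : GZ R L) (h0 : ∀ t < h, Subsingleton (EX R (R ⧸ maximalIdeal R) R t))
    (h1 : ¬ Subsingleton (EX R (R ⧸ maximalIdeal R) R h)) [Module.Projective R P] [Module.Finite R P]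
    (i : L →ₗ[R] P) (hi : ¬ ∀ φ : L →ₗ[R] R, ∃ ψ : P →ₗ[R] R, ψ ∘ₗ i = φ) :
    ∃ z : EX R (R ⧸ maximalIdeal R) L h, z ≠ 0 ∧ EX.push i z = 0 := by
  haveI := hL.fin
  obtain ⟨e, he⟩ : ∃ e : EX R (R ⧸ maximalIdeal R) R h, e ≠ 0 := by
    by_contra hc; push Not at hc; exact h1 (EX.sub_iff.2 hc)
  have hne : LinearMap.range i.dualMap ≠ ⊤ := by
    intro h; apply hi; intro φ
    have : φ ∈ LinearMap.range i.dualMap := by rw [h]; trivial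
    exact this
  haveI : Nontrivial (Module.Dual R L ⧸ LinearMap.range i.dualMap) := Submodule.Quotient.nontrivial_iff.2 hne
  obtain ⟨φ, hφ⟩ := exists_to_residue (R := R) (Module.Dual R L ⧸ LinearMap.range i.dualMap)
  let u : (R ⧸ maximalIdeal R) →ₗ[R] EX R (R ⧸ maximalIdeal R) R h :=
    Submodule.liftQ _ (LinearMap.toSpanSingleton R _ e) (fun r hr => smul_EX_eq_zero e r hr)
  have hu : ∀ x, u x = 0 → x = 0 := by
    intro x
    obtain ⟨r, rfl⟩ := Ideal.Quotient.mk_surjective x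
    intro hx
    have hx : r • e = 0 := hx
    rw [Ideal.Quotient.eq_zero_iff_mem]
    by_contra hr
    have hr : IsUnit r := by simpa using hr
    obtain ⟨v, rfl⟩ := hr
    exact he (by simpa using congrArg (fun z => (v⁻¹ : Rˣ).1 • z) hx)
  obtain ⟨z, hz⟩ := hL.theta h0 (u ∘ₗ φ ∘ₗ (LinearMap.range i.dualMap).mkQ)
  refine ⟨z, ?_, EX.proj_ext _ fun ψ => ?_⟩
  · rintro rfl
    apply hφ
    ext f
    refine hu _ ?_
    have := (hz f).symm
    simpa using this
  · rw [EX.push_push, hz]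
    have : (LinearMap.range i.dualMap).mkQ (ψ ∘ₗ i) = 0 := by
      rw [Submodule.mkQ_apply, Submodule.Quotient.mk_eq_zero]
      exact ⟨ψ, rfl⟩
    simp only [LinearMap.comp_apply, this, map_zero]

theorem Res.om_succ (F : Res R M) (n : ℕ) (hn : GZ R (LinearMap.range (F.d n))) :
    GZ R (LinearMap.range (F.d (n+1))) := by
  have := GZ.left (A := LinearMap.ker (F.d n).rangeRestrict)
    (SES.of_ker (LinearMap.surjective_rangeRestrict (F.d n))) GZ.of_proj hn
  exact this.congr (LinearEquiv.ofEq _ _ (by rw [LinearMap.ker_rangeRestrict, F.exact n]))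

theorem Res.ab1 {h : ℕ} (h0 : ∀ t < h, Subsingleton (EX R (R ⧸ maximalIdeal R) R t)) (F : Res R M) (n j : ℕ)
    (hn : GZ R (LinearMap.range (F.d n))) (hj : ∀ i ≥ j, F.E0 R i) (t : ℕ) (ht : t + j < h) :
    Subsingleton (EX R (R ⧸ maximalIdeal R) M t) := by
  induction j generalizing M n t with
  | zero => exact (F.gz n hn (fun i => hj i (Nat.zero_le _))).sub h0 t ht
  | succ j ih =>
    refine F.ses0.sub_right (EX.sub_proj_right (h0 t (by omega))) ?_
    have hn' : GZ R (LinearMap.range (F.shift.d n)) := by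
      exact Res.om_succ F n hn
    exact ih F.shift n hn' (fun i hi => hj (i+1) (by omega)) (t+1) (by omega)

theorem Res.ab2 {h : ℕ} (h0 : ∀ t < h, Subsingleton (EX R (R ⧸ maximalIdeal R) R t))
    (h1 : ¬ Subsingleton (EX R (R ⧸ maximalIdeal R) R h)) (F : Res R M) (n j : ℕ)
    (hn : GZ R (LinearMap.range (F.d n))) (hj : ∀ i > j, F.E0 R i) (hj' : ¬ F.E0 R j) :
    ∃ t, t + j + 1 = h ∧ ¬ Subsingleton (EX R (R ⧸ maximalIdeal R) M t) := by
  have hn' : GZ R (LinearMap.range (F.shift.d n)) := by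
    exact Res.om_succ F n hn
  induction j generalizing M n with
  | zero =>
    have hK := F.shift.gz n hn' (fun i => hj (i+1) (by omega))
    obtain ⟨z, hz, hz0⟩ := hK.not_inj h0 h1 (LinearMap.range (F.d 0)).subtype (by
      intro hc
      exact hj' ((F.ext_iff 0).1 (F.ses0.csub_right1 hc (EX.sub_proj 0))))
    cases h with
    | zero => exact absurd (F.ses0.ex0 z hz0) hz
    | succ h =>
      obtain ⟨w, rfl⟩ := F.ses0.ex1 z hz0
      refine ⟨h, rfl, fun hs => hz ?_⟩
      rw [Subsingleton.elim w 0, map_zero]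
  | succ j ih =>
    have hn'' : GZ R (LinearMap.range (F.shift.shift.d n)) := by
      exact Res.om_succ F.shift n hn'
    obtain ⟨t, ht, hs⟩ := ih F.shift n hn' (fun i hi => hj (i+1) (by omega)) hj' hn''
    have hP := EX.sub_proj_right (P := F.P 0) (h0 t (by omega))
    cases t with
    | zero => exact absurd (F.ses0.sub_left0 hP) hs
    | succ t => exact ⟨t, by omega, fun hc => hs (F.ses0.sub_left hc hP)⟩
end AB
end
end HL

namespace HL
open CategoryTheory Limits Opposite
noncomputable section
section Loc
variable {R : Type u} [CommRing R] (S : Submonoid R)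
variable {X X' Y Y' M M' L L' : Type u} [AddCommGroup X] [AddCommGroup X'] [AddCommGroup Y] [AddCommGroup Y']
  [AddCommGroup M] [AddCommGroup M'] [AddCommGroup L] [AddCommGroup L']
  [Module R X] [Module R X'] [Module R Y] [Module R Y'] [Module R M] [Module R M'] [Module R L] [Module R L']
  [Module (Localization S) X'] [Module (Localization S) Y'] [Module (Localization S) M'] [Module (Localization S) L']
  [IsScalarTower R (Localization S) X'] [IsScalarTower R (Localization S) Y'] [IsScalarTower R (Localization S) M'] [IsScalarTower R (Localization S) L']
  (gX : X →ₗ[R] X') (gY : Y →ₗ[R] Y') (g : M →ₗ[R] M') (gL : L →ₗ[R] L')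
  
theorem smul_inj_loc (s : S) {x y : X'} (h : (s : R) • x = (s : R) • y) : x = y := by
  have hu : IsUnit (algebraMap R (Localization S) s) := IsLocalization.map_units _ s
  rw [← algebraMap_smul (Localization S), ← algebraMap_smul (Localization S) (s : R) y] at h
  exact hu.smul_left_cancel.1 h

theorem smul_surj_loc (s : S) (x : X') : ∃ y : X', (s : R) • y = x := by
  obtain ⟨u, hu⟩ : IsUnit (algebraMap R (Localization S) s) := IsLocalization.map_units _ s
  refine ⟨(u⁻¹ : (Localization S)ˣ).1 • x, ?_⟩
  rw [← algebraMap_smul (Localization S), ← hu, smul_smul, Units.mul_inv, one_smul]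

theorem isLoc_of (surj : ∀ y : X', ∃ s ∈ S, ∃ x, s • y = gX x)
    (inj : ∀ x, gX x = 0 → ∃ s ∈ S, s • x = 0) : IsLocalizedModule S gX where
  map_units s := by
    rw [Module.End.isUnit_iff]
    exact ⟨fun x y h => smul_inj_loc S s h, fun x => smul_surj_loc S s x⟩
  surj y := by
    obtain ⟨s, hs, x, h⟩ := surj y
    exact ⟨(x, ⟨s, hs⟩), h⟩
  exists_of_eq {x y} h := by
    obtain ⟨s, hs, h⟩ := inj (x - y) (by rw [map_sub, h, sub_self])
    exact ⟨⟨s, hs⟩, by rw [smul_sub, sub_eq_zero] at h; exact h⟩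

variable [IsLocalizedModule S gX] [IsLocalizedModule S gY] [IsLocalizedModule S g] [IsLocalizedModule S gL]

theorem loc_surj (y : X') : ∃ s : S, ∃ x, (s : R) • y = gX x := by
  obtain ⟨⟨x, s⟩, h⟩ := IsLocalizedModule.surj S gX y
  exact ⟨s, x, h⟩

theorem loc_zero {x : X} (h : gX x = 0) : ∃ s : S, (s : R) • x = 0 :=
  (IsLocalizedModule.eq_zero_iff S gX).1 h

abbrev lmap : (X →ₗ[R] Y) →ₗ[R] (X' →ₗ[Localization S] Y') := IsLocalizedModule.mapExtendScalars S gX gY (Localization S)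

theorem lmap_apply (f : X →ₗ[R] Y) (x : X) : lmap S gX gY f (gX x) = gY (f x) := by
  rw [IsLocalizedModule.mapExtendScalars_apply_apply, IsLocalizedModule.map_apply]

theorem lmap_ext {φ ψ : X' →ₗ[Localization S] Y'} (h : ∀ x, φ (gX x) = ψ (gX x)) : φ = ψ := by
  ext x'
  obtain ⟨s, x, hx⟩ := loc_surj S gX x'
  refine smul_inj_loc S s ?_
  have := h x
  rw [← hx, ← algebraMap_smul (Localization S), map_smul, map_smul] at this
  rwa [← algebraMap_smul (Localization S), ← algebraMap_smul (Localization S) (s : R) (ψ x')]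

theorem map_smul_loc (φ : X' →ₗ[Localization S] Y') (r : R) (x : X') : φ (r • x) = r • φ x := by
  rw [← algebraMap_smul (Localization S), map_smul, algebraMap_smul]

theorem lmap_surj {f : X →ₗ[R] Y} (h : Function.Surjective f) : Function.Surjective (lmap S gX gY f) := by
  intro y
  obtain ⟨s, y0, hy⟩ := loc_surj S gY y
  obtain ⟨x0, rfl⟩ := h y0
  obtain ⟨x, hx⟩ := smul_surj_loc S s (gX x0)
  refine ⟨x, smul_inj_loc S s ?_⟩
  rw [← map_smul_loc, hx, lmap_apply, hy]

theorem lmap_range_ker {f : M →ₗ[R] X} {h : X →ₗ[R] Y} (H : LinearMap.range f = LinearMap.ker h) :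
    LinearMap.range (lmap S g gX f) = LinearMap.ker (lmap S gX gY h) := by
  have H0 : ∀ m, h (f m) = 0 := fun m => by
    have : f m ∈ LinearMap.ker h := by rw [← H]; exact ⟨m, rfl⟩
    exact this
  apply le_antisymm
  · rw [LinearMap.range_le_ker_iff]
    refine lmap_ext S g fun m => ?_
    simp only [LinearMap.comp_apply, LinearMap.zero_apply]
    rw [lmap_apply, lmap_apply, H0, map_zero]
  · intro x hx
    obtain ⟨s, x0, h0⟩ := loc_surj S gX x
    have : gY (h x0) = 0 := by
      rw [← lmap_apply S gX gY, ← h0, map_smul_loc, LinearMap.mem_ker.1 hx, smul_zero]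
    obtain ⟨t, ht⟩ := loc_zero S gY this
    have : (t : R) • x0 ∈ LinearMap.range f := by rw [H, LinearMap.mem_ker, map_smul, ht]
    obtain ⟨m, hm⟩ := this
    obtain ⟨m', hm'⟩ := smul_surj_loc S (t * s) (g m)
    refine ⟨m', smul_inj_loc S (t * s) ?_⟩
    rw [← map_smul_loc, hm', lmap_apply, hm, map_smul, ← h0, smul_smul]
    rfl

def Res.loc (F : Res R M) : Res (Localization S) M' where
  P i := LocalizedModule S (F.P i)
  proj i := Module.projective_of_isLocalizedModule S (LocalizedModule.mkLinearMap S (F.P i))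
  fin i := Module.Finite.of_isLocalizedModule S (LocalizedModule.mkLinearMap S (F.P i))
  d i := lmap S (LocalizedModule.mkLinearMap S (F.P (i+1))) (LocalizedModule.mkLinearMap S (F.P i)) (F.d i)
  ε := lmap S (LocalizedModule.mkLinearMap S (F.P 0)) g F.ε
  surj := lmap_surj S _ _ F.surj
  exact0 := lmap_range_ker S _ _ _ F.exact0
  exact i := lmap_range_ker S _ _ _ (F.exact i)

variable [IsNoetherianRing R]

theorem dual_lift [Module.Finite R X] (φ : X' →ₗ[Localization S] (Localization S)) : ∃ s : S, ∃ f : X →ₗ[R] R,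
    ∀ x, algebraMap R (Localization S) (f x) = (s : R) • φ (gX x) := by
  haveI : Module.FinitePresentation R X := Module.finitePresentation_of_finite R X
  obtain ⟨f, s, h⟩ := Module.FinitePresentation.exists_lift_of_isLocalizedModule S (Algebra.linearMap R (Localization S))
    (φ.restrictScalars R ∘ₗ gX)
  exact ⟨s, f, fun x => LinearMap.congr_fun h x⟩

theorem dual_zero [Module.Finite R X] (f : X →ₗ[R] R) (h : ∀ x, algebraMap R (Localization S) (f x) = 0) :
    ∃ s : S, (s : R) • f = 0 := by
  obtain ⟨s, h⟩ := Module.Finite.exists_smul_of_comp_eq_of_isLocalizedModule S (Algebra.linearMap R (Localization S)) f 0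
    (by ext x; simpa using h x)
  exact ⟨s, by rw [smul_zero] at h; exact h⟩

theorem Res.loc_E0 (F : Res R M) (i : ℕ) : (F.loc S g).E0 (Localization S) i ↔
    ∀ f : F.P (i+1) →ₗ[R] R, f ∘ₗ F.d (i+1) = 0 → ∃ s : S, ∃ h : F.P i →ₗ[R] R, h ∘ₗ F.d i = (s : R) • f := by
  let mk := fun j => LocalizedModule.mkLinearMap S (F.P j)
  let D := fun j => lmap S (mk (j+1)) (mk j) (F.d j)
  let al := Algebra.linearMap R (Localization S)
  have E0 : (F.loc S g).E0 (Localization S) i ↔ ∀ f : LocalizedModule S (F.P (i+1)) →ₗ[Localization S] (Localization S), f ∘ₗ D (i+1) = 0 →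
    ∃ h : LocalizedModule S (F.P i) →ₗ[Localization S] (Localization S), h ∘ₗ D i = f := Iff.rfl
  rw [E0]
  constructor
  · intro H f hf
    obtain ⟨h', hh⟩ := H (lmap S (mk (i+1)) al f) (by
      refine lmap_ext S (mk (i+2)) fun x => ?_
      simp only [LinearMap.comp_apply, LinearMap.zero_apply, D]
      rw [lmap_apply, lmap_apply]
      have := LinearMap.congr_fun hf x
      simp only [LinearMap.comp_apply, LinearMap.zero_apply] at this
      rw [this, map_zero])
    obtain ⟨s, h, hs⟩ := dual_lift S (mk i) h'
    obtain ⟨t, ht⟩ := dual_zero S ((s : R) • f - h ∘ₗ F.d i) (by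
      intro x
      have := LinearMap.congr_fun hh (mk (i+1) x)
      simp only [LinearMap.comp_apply, D] at this
      rw [lmap_apply, lmap_apply] at this
      simp only [LinearMap.sub_apply, LinearMap.smul_apply, LinearMap.comp_apply, map_sub]
      rw [hs, this, smul_eq_mul, map_mul, Algebra.smul_def]
      simp [al])
    refine ⟨t * s, (t : R) • h, ?_⟩
    rw [smul_sub, sub_eq_zero, smul_smul] at ht
    rw [LinearMap.smul_comp, ← ht]; rfl
  · intro H φ hφ
    obtain ⟨s, f, hs⟩ := dual_lift S (mk (i+1)) φ
    obtain ⟨t, ht⟩ := dual_zero S (f ∘ₗ F.d (i+1)) (by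
      intro x
      have := LinearMap.congr_fun hφ (mk (i+2) x)
      simp only [LinearMap.comp_apply, LinearMap.zero_apply, D] at this
      rw [lmap_apply] at this
      rw [LinearMap.comp_apply, hs, this, smul_zero])
    obtain ⟨v, h, hv⟩ := H ((t : R) • f) (by rw [LinearMap.smul_comp, ht])
    have hu : IsUnit (algebraMap R (Localization S) (v * t * s : S)) := IsLocalization.map_units _ _
    obtain ⟨u, hu⟩ := hu
    refine ⟨(u⁻¹ : (Localization S)ˣ).1 • lmap S (mk i) al h, ?_⟩
    refine lmap_ext S (mk (i+1)) fun x => ?_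
    simp only [LinearMap.comp_apply, LinearMap.smul_apply, D]
    rw [lmap_apply, lmap_apply]
    have := LinearMap.congr_fun hv x
    simp only [LinearMap.comp_apply, LinearMap.smul_apply] at this
    rw [this]
    have h2 : al ((v : R) • (t : R) • f x) = (u : (Localization S)) * φ (mk (i+1) x) := by
      rw [map_smul, map_smul, hu]
      change (v : R) • (t : R) • algebraMap R (Localization S) (f x) = _
      rw [hs, ← algebraMap_smul (Localization S), ← algebraMap_smul (Localization S) (t : R), ← algebraMap_smul (Localization S) (s : R)]
      simp [mul_assoc]
    rw [h2, smul_eq_mul, Units.inv_mul_cancel_left]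

theorem loc_ext_zero (g : M →ₗ[R] M') [IsLocalizedModule S g] [Module.Finite R M] {i : ℕ} (h : Subsingleton (EX R M R (i+1))) :
    Subsingleton (EX (Localization S) M' (Localization S) (i+1)) := by
  obtain ⟨F⟩ := exists_res (R := R) M
  refine ((F.loc S g).ext_iff i).2 ((Res.loc_E0 S g F i).2 ?_)
  rw [F.ext_iff] at h
  intro f hf
  obtain ⟨k, hk⟩ := h f hf
  exact ⟨1, k, by simpa using hk⟩

theorem GZ.loc (gL : L →ₗ[R] L') [IsLocalizedModule S gL] (h : GZ R L) : GZ (Localization S) L' := by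
  haveI := h.fin
  haveI : Module.FinitePresentation R L := Module.finitePresentation_of_finite R L
  refine ⟨Module.Finite.of_isLocalizedModule S gL, ⟨?_, ?_⟩, fun i => loc_ext_zero S gL (h.ext i),
    fun i => loc_ext_zero S (lmap S gL (Algebra.linearMap R (Localization S))) (h.ext' i)⟩
  · rw [injective_iff_map_eq_zero]
    intro x hx
    obtain ⟨s, l, hl⟩ := loc_surj S gL x
    refine smul_inj_loc S s ?_
    rw [hl, smul_zero]
    obtain ⟨t, ht⟩ := dual_zero S (Module.Dual.eval R L l) (by
      intro φ
      have := LinearMap.congr_fun hx (lmap S gL (Algebra.linearMap R (Localization S)) φ)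
      have h2 : lmap S gL (Algebra.linearMap R (Localization S)) φ x = 0 := this
      change Algebra.linearMap R (Localization S) (φ l) = 0
      rw [← lmap_apply S gL, ← hl, map_smul_loc, h2, smul_zero])
    have : (t : R) • l = 0 := h.ev.1 (by rw [map_smul, ht, map_zero])
    refine smul_inj_loc S t ?_
    rw [← map_smul, this, map_zero, smul_zero]
  · intro Φ
    obtain ⟨s, Ψ, hΨ⟩ := dual_lift S (lmap S gL (Algebra.linearMap R (Localization S))) Φ
    obtain ⟨l, rfl⟩ := h.ev.2 Ψ
    obtain ⟨x, hx⟩ := smul_surj_loc S s (gL l)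
    refine ⟨x, lmap_ext S (lmap S gL (Algebra.linearMap R (Localization S))) fun φ => smul_inj_loc S s ?_⟩
    rw [← hΨ]
    change (s : R) • (lmap S gL (Algebra.linearMap R (Localization S)) φ x) = Algebra.linearMap R (Localization S) (φ l)
    rw [← map_smul_loc, hx, lmap_apply]

theorem Res.loc_om (F : Res R M) (n : ℕ) (h : GZ R (LinearMap.range (F.d n))) :
    GZ (Localization S) (LinearMap.range ((F.loc S g).d n)) := by
  let mk := fun j => LocalizedModule.mkLinearMap S (F.P j)
  let D := lmap S (mk (n+1)) (mk n) (F.d n)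
  change GZ (Localization S) (LinearMap.range D)
  let ρ : LinearMap.range (F.d n) →ₗ[R] ((LinearMap.range D).restrictScalars R) :=
    LinearMap.restrict (mk n) (by
      rintro _ ⟨x, rfl⟩
      exact ⟨mk (n+1) x, lmap_apply S _ _ _ _⟩)
  let ρ' : LinearMap.range (F.d n) →ₗ[R] (LinearMap.range D) := ρ
  haveI : IsLocalizedModule S ρ' := by
    apply isLoc_of
    · rintro ⟨_, x, rfl⟩
      obtain ⟨s, x0, hs⟩ := loc_surj S (mk (n+1)) x
      refine ⟨s, s.2, ⟨F.d n x0, x0, rfl⟩, Subtype.ext ?_⟩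
      change (s : R) • D x = mk n (F.d n x0)
      rw [← lmap_apply S (mk (n+1)), ← hs, map_smul_loc]
    · rintro ⟨x, hx⟩ h0
      obtain ⟨s, hs⟩ := loc_zero S (mk n) (congrArg Subtype.val h0 : mk n x = 0)
      exact ⟨s, s.2, Subtype.ext hs⟩
  exact GZ.loc S ρ' h
end Loc
end
end HL

namespace HL
open CategoryTheory Limits Opposite
noncomputable section
section Dim
variable {R : Type u} [CommRing R]
variable {N : Type u} [AddCommGroup N] [Module R N]
open IsLocalRing Pointwise

theorem SES.of_smul (x : R) (hx : IsSMulRegular N x) :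
    SES (LinearMap.lsmul R N x) ((x • (⊤ : Submodule R N)).mkQ) where
  inj := hx
  exact := LinearMap.exact_lsmul_mkQ_smul_top N x
  surj := Submodule.mkQ_surjective _

theorem SES.of_smul_quot (I : Ideal R) (x : R) (hx : IsSMulRegular (R ⧸ I) x) :
    SES (LinearMap.lsmul R (R ⧸ I) x) (fac (le_sup_left : I ≤ I ⊔ Ideal.span {x})) where
  inj := hx
  exact := by
    intro y
    obtain ⟨y, rfl⟩ := Ideal.Quotient.mk_surjective y
    rw [fac_mk, Ideal.Quotient.eq_zero_iff_mem]
    constructor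
    · intro h
      obtain ⟨a, ha, b, hb, hab⟩ := Submodule.mem_sup.1 h
      obtain ⟨c, rfl⟩ := Ideal.mem_span_singleton'.1 hb
      refine ⟨Ideal.Quotient.mk I c, ?_⟩
      change Ideal.Quotient.mk I (x * c) = _
      rw [Ideal.Quotient.eq, ← hab, mul_comm x c]
      have : c * x - (a + c * x) = - a := by ring
      rw [this]; exact I.neg_mem ha
    · rintro ⟨c, hc⟩
      obtain ⟨c, rfl⟩ := Ideal.Quotient.mk_surjective c
      change Ideal.Quotient.mk I (x * c) = _ at hc
      rw [Ideal.Quotient.eq] at hc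
      have : y = - (x * c - y) + x * c := by ring
      rw [this]
      exact Submodule.add_mem_sup (I.neg_mem hc) (Ideal.mul_mem_right _ _ (Ideal.mem_span_singleton_self x))
  surj := by
    intro y
    obtain ⟨y, rfl⟩ := Ideal.Quotient.mk_surjective y
    exact ⟨Ideal.Quotient.mk I y, fac_mk _ _⟩

variable [IsNoetherianRing R]

/-- prime avoidance -/
theorem exists_reg_or [Module.Finite R N] [Nontrivial N] (J : Ideal R) :
    (∃ x ∈ J, IsSMulRegular N x) ∨ ∃ p ∈ associatedPrimes R N, J ≤ p := by
  by_cases h : ∃ x ∈ J, IsSMulRegular N x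
  · exact Or.inl h
  right
  push Not at h
  rcases associatedPrimes.nonempty R N with ⟨Ia, hIa⟩
  apply (Ideal.subset_union_prime_finite (associatedPrimes.finite R N) Ia Ia _).mp
  · rw [biUnion_associatedPrimes_eq_compl_regular R N]
    exact fun r hr ↦ h r hr
  · exact fun I hin _ _ ↦ IsAssociatedPrime.isPrime hin

theorem exists_reg_of_ext [Module.Finite R N] (J : Ideal R) (h : Subsingleton (EX R (R ⧸ J) N 0)) :
    ∃ x ∈ J, IsSMulRegular N x := by
  have : Subsingleton ((R ⧸ J) →ₗ[R] N) := by
    refine subsingleton_of_forall_eq 0 fun f => ?_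
    rw [← EX.mk_eq_zero]
    exact Subsingleton.elim _ _
  obtain ⟨x, hx, h⟩ := IsSMulRegular.subsingleton_linearMap_iff.1 this
  rw [Ideal.annihilator_quotient] at hx
  exact ⟨x, hx, h⟩

variable [IsLocalRing R]

theorem ass_coheight (s : ℕ) : ∀ (N : Type u) [AddCommGroup N] [Module R N] [Module.Finite R N]
    (_ : ∀ i < s, Subsingleton (EX R (R ⧸ maximalIdeal R) N i)) (p : PrimeSpectrum R)
    (_ : p.asIdeal ∈ associatedPrimes R N), (s : ℕ∞) ≤ Order.coheight p := by
  induction s with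
  | zero => intros; simp
  | succ s ih =>
    intro N _ _ _ h p hp
    obtain ⟨x, hxm, hx⟩ := exists_reg_of_ext _ (h 0 (by omega))
    have h' : ∀ i < s, Subsingleton (EX R (R ⧸ maximalIdeal R) (QuotSMulTop x N) i) := fun i hi =>
      (SES.of_smul x hx).sub_right (h i (by omega)) (h (i+1) (by omega))
    obtain ⟨hpp, n0, hn0⟩ := isAssociatedPrime_iff.1 hp
    have hn0' : ∀ a, a ∈ p.asIdeal ↔ a • n0 = 0 := by
      intro a; rw [hn0, Submodule.mem_colon_singleton, Submodule.mem_bot]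
    have hn0z : n0 ≠ 0 := by
      rintro rfl
      exact hpp.ne_top ((Ideal.eq_top_iff_one _).2 ((hn0' 1).2 (smul_zero _)))
    let K : Submodule R N := 
      { carrier := {n | ∀ a ∈ p.asIdeal, a • n = 0}
        zero_mem' := fun a _ => smul_zero a
        add_mem' := fun ha hb c hc => by rw [smul_add, ha c hc, hb c hc, add_zero]
        smul_mem' := fun r n hn a ha => by rw [smul_comm, hn a ha, smul_zero] }
    have hn0K : n0 ∈ K := fun a ha => (hn0' a).1 ha
    have hK : ¬ (K ≤ x • (⊤ : Submodule R N)) := by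
      intro hle
      have h1 : K ≤ maximalIdeal R • K := by
        intro n hn
        obtain ⟨n', -, hn'⟩ := hle hn
        have hn'' : n = x • n' := hn'.symm
        rw [hn'']
        refine Submodule.smul_mem_smul hxm ?_
        intro a ha
        refine hx ?_
        change x • a • n' = x • 0
        rw [smul_zero, smul_comm, ← hn'']
        exact hn a ha
      have h2 : K = ⊥ := Submodule.eq_bot_of_le_smul_of_le_jacobson_bot _ _ (IsNoetherian.noetherian K) h1
        (IsLocalRing.maximalIdeal_le_jacobson _)
      rw [h2] at hn0K
      exact hn0z hn0K
    obtain ⟨n, hnK, hnx⟩ := Set.not_subset.1 hK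
    let nb : QuotSMulTop x N := Submodule.Quotient.mk n
    have hnb : nb ≠ 0 := fun h0 => hnx ((Submodule.Quotient.mk_eq_zero _).1 h0)
    obtain ⟨q, hq, hqle⟩ := exists_le_isAssociatedPrime_of_isNoetherianRing (R := R) nb hnb
    have hpq : p.asIdeal ≤ q := by
      intro a ha
      apply hqle
      rw [Submodule.mem_colon_singleton, Submodule.mem_bot]
      change (Submodule.Quotient.mk (a • n) : QuotSMulTop x N) = 0
      rw [hnK a ha]; rfl
    have hxq : x ∈ q := by
      apply hqle
      rw [Submodule.mem_colon_singleton, Submodule.mem_bot]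
      change (Submodule.Quotient.mk (x • n) : QuotSMulTop x N) = 0
      rw [Submodule.Quotient.mk_eq_zero]
      exact ⟨n, trivial, rfl⟩
    have hxp : x ∉ p.asIdeal := by
      intro hxp
      have := (hn0' x).1 hxp
      exact hn0z (hx (by change x • n0 = x • 0; rw [this, smul_zero]))
    have hlt : p < (⟨q, hq.isPrime⟩ : PrimeSpectrum R) := 
      lt_of_le_of_ne hpq (fun h => hxp (by rw [h]; exact hxq))
    have := ih (QuotSMulTop x N) h' ⟨q, hq.isPrime⟩ hq
    calc ((s+1 : ℕ) : ℕ∞) = (s : ℕ∞) + 1 := by push_cast; rfl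
      _ ≤ _ := by gcongr
      _ ≤ _ := Order.coheight_add_one_le hlt

theorem ht_add_coht (p : PrimeSpectrum R) : p.asIdeal.height + Order.coheight p ≤ (maximalIdeal R).height := by
  have h1 := IsLocalRing.maximalIdeal_height_eq_ringKrullDim (R := R)
  unfold ringKrullDim at h1
  rw [Order.krullDim_eq_iSup_height_add_coheight_of_nonempty] at h1
  rw [WithBot.coe_inj] at h1
  rw [h1, PrimeSpectrum.height_eq_orderHeight]
  exact le_iSup (fun a : PrimeSpectrum R => Order.height a + Order.coheight a) p

/-- generated by a regular sequence in the maximal ideal -/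
inductive Rg : ℕ → Ideal R → Prop
  | zero : Rg 0 ⊥
  | succ (r : ℕ) (I : Ideal R) (x : R) (h : Rg r I) (hx : x ∈ maximalIdeal R) (hreg : IsSMulRegular (R ⧸ I) x) :
    Rg (r+1) (I ⊔ Ideal.span {x})

theorem Rg.le {r : ℕ} {I : Ideal R} (h : Rg r I) : I ≤ maximalIdeal R := by
  induction h with
  | zero => exact bot_le
  | succ r I x h hx _ ih => exact sup_le ih ((Ideal.span_singleton_le_iff_mem _).2 hx)

theorem Rg.height {r : ℕ} {I : Ideal R} (h : Rg r I) : ∀ (p : Ideal R) [p.IsPrime], I ≤ p → (r : ℕ∞) ≤ p.height := by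
  induction h with
  | zero => intros; simp
  | succ r I x h hx hreg ih =>
    intro p _ hp
    obtain ⟨q, hq, hqp⟩ := Ideal.exists_minimalPrimes_le (le_sup_left.trans hp)
    haveI : q.IsPrime := hq.1.1
    have h2 : q ∈ associatedPrimes R (R ⧸ I) := by
      apply Module.associatedPrimes.minimalPrimes_annihilator_subset_associatedPrimes
      rwa [Ideal.annihilator_quotient]
    have hxq : x ∉ q := by
      intro hxq
      have : x ∈ ⋃ p ∈ associatedPrimes R (R ⧸ I), (p : Set R) := Set.mem_biUnion h2 hxq
      rw [biUnion_associatedPrimes_eq_compl_regular] at this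
      exact this hreg
    have hlt : q < p := lt_of_le_of_ne hqp (fun h => hxq (by
      rw [h]; exact hp (Ideal.mem_sup_right (Ideal.mem_span_singleton_self x))))
    calc ((r+1 : ℕ) : ℕ∞) = (r : ℕ∞) + 1 := by push_cast; rfl
      _ ≤ q.height + 1 := by gcongr; exact ih q hq.1.2
      _ ≤ _ := Ideal.height_add_one_le_of_lt_of_isPrime hlt

theorem Rg.ext {d : ℕ} {X : Type u} [AddCommGroup X] [Module R X] (hX : ∀ i < d, Subsingleton (EX R X R i))
    {r : ℕ} {I : Ideal R} (h : Rg r I) : ∀ i, i + r < d → Subsingleton (EX R X (R ⧸ I) i) := by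
  induction h with
  | zero => 
    intro i hi
    exact EX.sub_congr_right (Submodule.quotEquivOfEqBot ⊥ rfl).symm (hX i hi)
  | succ r I x h hx hreg ih =>
    intro i hi
    exact (SES.of_smul_quot I x hreg).sub_right (ih i (by omega)) (ih (i+1) (by omega))

variable (R) in
structure CM (d : ℕ) : Prop where
  ext : ∀ i < d, Subsingleton (EX R (R ⧸ maximalIdeal R) R i)
  dim : (maximalIdeal R).height = d

variable {d : ℕ}

theorem CM.ass_height (hR : CM R d) {r : ℕ} {I : Ideal R} (h : Rg r I) (p : Ideal R) (hp : p ∈ associatedPrimes R (R ⧸ I)) :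
    p.height ≤ r ∧ r ≤ d := by
  have hrd : r ≤ d := by
    have := h.height (maximalIdeal R) h.le
    rw [hR.dim] at this; exact_mod_cast this
  refine ⟨?_, hrd⟩
  have h1 := ass_coheight (d - r) (R ⧸ I) (fun i hi => h.ext hR.ext i (by omega)) ⟨p, hp.isPrime⟩ hp
  have h2 := ht_add_coht (⟨p, hp.isPrime⟩ : PrimeSpectrum R)
  rw [hR.dim] at h2
  have h3 : p.height + ((d - r : ℕ) : ℕ∞) ≤ d := le_trans (by gcongr) h2
  have h4 : p.height ≠ ⊤ := by
    intro h; rw [h] at h3; simp at h3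
  lift p.height to ℕ using h4 with a
  norm_cast at h3 ⊢
  omega

/-- extension of regular sequences inside an ideal -/
theorem CM.extend (hR : CM R d) {r : ℕ} {I : Ideal R} (h : Rg r I) (J : Ideal R)
    (hJ : ∀ p : Ideal R, p.IsPrime → J ≤ p → ((r + 1 : ℕ) : ℕ∞) ≤ p.height) : ∃ x ∈ J, IsSMulRegular (R ⧸ I) x := by
  haveI : Nontrivial (R ⧸ I) := Ideal.Quotient.nontrivial_iff.2 (fun h' => (maximalIdeal.isMaximal R).ne_top (top_le_iff.1 (h' ▸ h.le)))
  rcases exists_reg_or (N := R ⧸ I) J with h1 | ⟨p, hp, hJp⟩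
  · exact h1
  · have h1 := (hR.ass_height h p hp).1
    have h2 := (hJ p hp.isPrime hJp).trans h1
    norm_cast at h2
    omega

theorem CM.exists_rg (hR : CM R d) (J : Ideal R) (hJm : J ≤ maximalIdeal R) (r : ℕ)
    (hJ : ∀ p : Ideal R, p.IsPrime → J ≤ p → (r : ℕ∞) ≤ p.height) : ∃ I, Rg r I ∧ I ≤ J := by
  induction r with
  | zero => exact ⟨⊥, Rg.zero, bot_le⟩
  | succ r ih =>
    obtain ⟨I, hI, hIJ⟩ := ih (fun p hp hle => le_trans (by norm_cast; omega) (hJ p hp hle))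
    obtain ⟨x, hx, hreg⟩ := hR.extend hI J hJ
    exact ⟨_, Rg.succ r I x hI (hJm hx) hreg, sup_le hIJ ((Ideal.span_singleton_le_iff_mem _).2 hx)⟩

theorem Rg.rad {I : Ideal R} (hd : (maximalIdeal R).height = d) (h : Rg d I) : ∃ n, maximalIdeal R ^ n ≤ I := by
  have : maximalIdeal R ≤ I.radical := by
    rw [Ideal.radical_eq_sInf]
    refine le_sInf ?_
    rintro p ⟨hIp, hp⟩
    have h1 := h.height p hIp
    by_contra hlt
    have h2 : p < maximalIdeal R := lt_of_le_of_ne (IsLocalRing.le_maximalIdeal hp.ne_top) (fun h => hlt h.ge)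
    have h3 := Ideal.height_add_one_le_of_lt_of_isPrime h2
    rw [hd] at h3
    have h4 : (d : ℕ∞) + 1 ≤ d := le_trans (by gcongr) h3
    norm_cast at h4
    omega
  exact Ideal.exists_pow_le_of_le_radical_of_fg this (IsNoetherian.noetherian _)

/-- powers of the maximal ideal -/
theorem CM.ext_pow (hR : CM R d) (n : ℕ) : ∀ i < d, Subsingleton (EX R (R ⧸ maximalIdeal R ^ n) R i) := by
  have hlt : maximalIdeal R • (⊤ : Submodule R R) < ⊤ := by
    rw [smul_eq_mul, Ideal.mul_top, lt_top_iff_ne_top]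
    exact (maximalIdeal.isMaximal R).ne_top
  obtain ⟨rs, hl, hm, hreg⟩ := ModuleCat.exists_isRegular_of_exists_subsingleton_ext (maximalIdeal R) d (ModuleCat.of R R) hlt
    (ModuleCat.of R (R ⧸ maximalIdeal R)) (by
      change Module.support R (R ⧸ maximalIdeal R) = _
      rw [Module.support_eq_zeroLocus, Ideal.annihilator_quotient]) hR.ext
  have := ModuleCat.subsingleton_ext_of_exists_isRegular (maximalIdeal R) (ModuleCat.of R (R ⧸ maximalIdeal R ^ n)) (by
      change Module.support R (R ⧸ maximalIdeal R ^ n) ⊆ _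
      rw [Module.support_eq_zeroLocus, Ideal.annihilator_quotient, PrimeSpectrum.zeroLocus_subset_zeroLocus_iff]
      intro x hx
      exact ⟨n, Ideal.pow_mem_pow hx n⟩) (ModuleCat.of R R) hlt rs hm hreg
  rw [hl] at this
  exact this

theorem CM.ext_ne (hR : CM R d) : ¬ Subsingleton (EX R (R ⧸ maximalIdeal R) R d) := by
  intro h
  obtain ⟨I, hI, hIm⟩ := hR.exists_rg (maximalIdeal R) le_rfl d (fun p hp hle => by
    rw [(maximalIdeal.isMaximal R).eq_of_le hp.ne_top hle |>.symm, hR.dim])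
  have h1 := hI.ext (d := d + 1) (X := R ⧸ maximalIdeal R) (fun i hi => by
    rcases Nat.lt_succ_iff_lt_or_eq.1 hi with h' | h2
    · exact hR.ext i h'
    · rw [h2]; exact h) 0 (by omega)
  obtain ⟨x, hx, hreg⟩ := exists_reg_of_ext _ h1
  have := (Rg.succ d I x hI hx hreg).height (maximalIdeal R) (Rg.succ d I x hI hx hreg).le
  rw [hR.dim] at this
  norm_cast at this
  omega
end Dim
end
end HL

namespace HL
open CategoryTheory Limits Opposite
noncomputable section
section LocDim
variable {R : Type u} [CommRing R]
open IsLocalRing Pointwise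

theorem reg_quot_iff (I : Ideal R) (x : R) : IsSMulRegular (R ⧸ I) x ↔ ∀ a, x * a ∈ I → a ∈ I := by
  constructor
  · intro h a ha
    rw [← Ideal.Quotient.eq_zero_iff_mem]
    refine h ?_
    change Ideal.Quotient.mk I (x * a) = x • 0
    rw [smul_zero, Ideal.Quotient.eq_zero_iff_mem]
    exact ha
  · intro h
    rw [isSMulRegular_iff_right_eq_zero_of_smul]
    intro y hy
    obtain ⟨y, rfl⟩ := Ideal.Quotient.mk_surjective y
    rw [Ideal.Quotient.eq_zero_iff_mem]
    apply h
    rw [← Ideal.Quotient.eq_zero_iff_mem]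
    exact hy

variable [IsNoetherianRing R]

theorem Rg.loc [IsLocalRing R] (p : Ideal R) [p.IsPrime] {r : ℕ} {I : Ideal R} (h : Rg r I) :
    I ≤ p → Rg r (I.map (algebraMap R (Localization.AtPrime p))) := by
  induction h with
  | zero => intro _; rw [Ideal.map_bot]; exact Rg.zero
  | succ r I x h hx hreg ih =>
    intro hp
    have hxp : x ∈ p := hp (Ideal.mem_sup_right (Ideal.mem_span_singleton_self x))
    rw [Ideal.map_sup, Ideal.map_span, Set.image_singleton]
    refine Rg.succ r _ _ (ih (le_sup_left.trans hp)) ?_ ?_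
    · rw [← Localization.AtPrime.map_eq_maximalIdeal]
      exact Ideal.mem_map_of_mem _ hxp
    · rw [reg_quot_iff] at hreg ⊢
      intro a ha
      obtain ⟨⟨b, s⟩, hb⟩ := IsLocalization.surj p.primeCompl a
      obtain ⟨⟨c, t⟩, hc⟩ := (IsLocalization.mem_map_algebraMap_iff p.primeCompl _).1 ha
      have h1 : algebraMap R (Localization.AtPrime p) (x * b * t) = algebraMap R (Localization.AtPrime p) (c * s) := by
        simp only [map_mul]
        rw [← hc]; simp only at hb; rw [← hb]; ring
      obtain ⟨v, hv⟩ := (IsLocalization.eq_iff_exists p.primeCompl _).1 h1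
      have h2 : v * (b * t) ∈ I := by
        apply hreg
        have : x * (v * (b * t)) = v * (c * s) := by rw [← hv]; ring
        rw [this]
        exact I.mul_mem_left _ (I.mul_mem_right _ c.2)
      refine (IsLocalization.mem_map_algebraMap_iff p.primeCompl _).2 ⟨(⟨_, h2⟩, v * t * s), ?_⟩
      simp only [map_mul, Submonoid.coe_mul]
      simp only at hb; rw [← hb]; ring

theorem Rg.ext_lt [IsLocalRing R] {r : ℕ} {I : Ideal R} (h : Rg r I) :
    ∀ s, (∀ i < s, Subsingleton (EX R (R ⧸ maximalIdeal R) (R ⧸ I) i)) →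
    ∀ i < r + s, Subsingleton (EX R (R ⧸ maximalIdeal R) R i) := by
  induction h with
  | zero =>
    intro s hs i hi
    exact EX.sub_congr_right (Submodule.quotEquivOfEqBot ⊥ rfl) (hs i (by omega))
  | succ r I x h hx hreg ih =>
    intro s hs i hi
    refine ih (s + 1) ?_ i (by omega)
    intro j hj
    have hS := SES.of_smul_quot I x hreg
    have key : ∀ e : EX R (R ⧸ maximalIdeal R) (R ⧸ I) j, EX.push (LinearMap.lsmul R (R ⧸ I) x) e = 0 := by
      intro e
      have : LinearMap.lsmul R (R ⧸ I) x = x • LinearMap.id := by ext; simp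
      rw [this, EX.push_smul, EX.push_id]
      exact smul_EX_eq_zero e x hx
    rw [EX.sub_iff]
    intro e
    cases j with
    | zero => exact hS.ex0 e (key e)
    | succ j =>
      obtain ⟨y, rfl⟩ := hS.ex1 e (key e)
      rw [(EX.sub_iff.1 (hs j (by omega))) y, map_zero]

theorem CM.loc [IsLocalRing R] {d : ℕ} (hR : CM R d) (p : Ideal R) [p.IsPrime] (h : ℕ) (hp : p.height = h) :
    CM (Localization.AtPrime p) h where
  ext := by
    obtain ⟨I, hI, hIp⟩ := hR.exists_rg p (IsLocalRing.le_maximalIdeal (Ideal.IsPrime.ne_top ‹_›)) h (fun q hq hle => by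
      rw [← hp]; exact Ideal.height_mono hle)
    exact fun i hi => (hI.loc p hIp).ext_lt 0 (by simp) i (by omega)
  dim := by
    have h1 := IsLocalRing.maximalIdeal_height_eq_ringKrullDim (R := Localization.AtPrime p)
    rw [IsLocalization.AtPrime.ringKrullDim_eq_height p, hp] at h1
    exact_mod_cast h1

section
variable [IsLocalRing R] {h : ℕ} {M : Type u} [AddCommGroup M] [Module R M] [Module.Finite R M]

theorem CM.dim_tl (hR : CM R h) [Nontrivial M] (m : ℕ) (f : M →ₗ[R] (Fin m → R)) (hf : Function.Injective f) :
    ringKrullDim (R ⧸ Module.annihilator R M) = ((h : ℕ∞) : WithBot ℕ∞) := by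
  apply le_antisymm
  · refine (ringKrullDim_quotient_le _).trans ?_
    rw [← IsLocalRing.maximalIdeal_height_eq_ringKrullDim, hR.dim]
  · obtain ⟨p, hp⟩ := associatedPrimes.nonempty R M
    have h1 := ass_coheight h (Fin m → R) (fun i hi => EX.sub_proj_right (hR.ext i hi)) ⟨p, hp.isPrime⟩ 
      (hp.map_of_injective f hf)
    have h2 : Module.annihilator R M ≤ p := by
      rw [← Submodule.annihilator_top]; exact hp.annihilator_le
    rw [ringKrullDim_quotient]
    have h3 : (Order.coheight (⟨p, hp.isPrime⟩ : PrimeSpectrum R) : WithBot ℕ∞) ≤ Order.krullDim (PrimeSpectrum.zeroLocus (R := R) (Module.annihilator R M)) := by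
      rw [Order.coheight_eq_krullDim_Ici]
      exact Order.krullDim_le_of_strictMono (fun a => ⟨a.1, h2.trans a.2⟩) (fun a b hab => hab)
    exact le_trans (by exact_mod_cast h1) h3

theorem depth_iff (c : ℕ) : (c : ℕ∞) ≤ edepth R (maximalIdeal R) M ↔
    ∀ t < c, Subsingleton (EX R (R ⧸ maximalIdeal R) M t) := by
  unfold edepth
  rw [le_sInf_iff]
  constructor
  · intro H t ht
    by_contra hns
    have := H (t : ℕ∞) ⟨t, rfl, fun hs => hns ((extM_iff t _ _).1 hs)⟩
    norm_cast at this
    omega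
  · rintro H _ ⟨t, rfl, ht⟩
    by_contra hlt
    push Not at hlt
    norm_cast at hlt
    exact ht ((extM_iff t _ _).2 (H t hlt))

theorem CM.serre_local (hR : CM R h) (F : Res R M) (n : ℕ) (hn : GZ R (LinearMap.range (F.d n))) (k : ℕ) :
    (∀ t < min k h, Subsingleton (EX R (R ⧸ maximalIdeal R) M t)) ↔ ∀ i, ¬ F.E0 R i → i + 1 + k ≤ h := by
  constructor
  · intro H i hi
    classical
    have hbd : ∀ j, ¬ F.E0 R j → j ≤ n := by
      intro j hj
      by_contra hlt
      exact hj (F.ext_zero_of_omGZ n hn j (by omega))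
    let j := Nat.findGreatest (fun j => ¬ F.E0 R j) n
    have hj : ¬ F.E0 R j := Nat.findGreatest_spec (P := fun j => ¬ F.E0 R j) (hbd i hi) hi
    have hij : i ≤ j := Nat.le_findGreatest (hbd i hi) hi
    have hgt : ∀ l > j, F.E0 R l := by
      intro l hl
      by_contra hns
      have : l ≤ j := Nat.le_findGreatest (hbd l hns) hns
      omega
    obtain ⟨t, ht, hnt⟩ := F.ab2 hR.ext hR.ext_ne n j hn hgt hj
    have : ¬ t < min k h := fun hlt => hnt (H t hlt)
    omega
  · intro H t ht
    have ht' := lt_min_iff.1 ht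
    refine F.ab1 hR.ext n (h - t - 1) hn ?_ t (by omega)
    intro i hi
    by_contra hns
    have := H i hns
    omega
end

variable {M : Type u} [AddCommGroup M] [Module R M] [Module.Finite R M]

theorem Res.E0_of_subsingleton {Y : Type u} [AddCommGroup Y] [Module R Y] [Subsingleton M] (F : Res R M) (i : ℕ) : F.E0 Y i := by
  rw [← F.ext_iff]
  rw [EX.sub_iff]
  intro e
  have : (LinearMap.id : M →ₗ[R] M) = 0 := by ext x; exact Subsingleton.elim _ _
  rw [← EX.pull_id e, this, EX.pull_zero]

theorem tl_loc {m : ℕ} (f : M →ₗ[R] (Fin m → R)) (hf : Function.Injective f) (S : Submonoid R) :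
    ∃ f' : LocalizedModule S M →ₗ[Localization S] (Fin m → Localization S), Function.Injective f' := by
  let al : (Fin m → R) →ₗ[R] (Fin m → Localization S) := LinearMap.pi fun i => Algebra.linearMap R (Localization S) ∘ₗ LinearMap.proj i
  let mk := LocalizedModule.mkLinearMap S M
  haveI : IsLocalizedModule S al := IsLocalizedModule.pi S fun _ : Fin m => Algebra.linearMap R (Localization S)
  refine ⟨lmap S mk al f, ?_⟩
  rw [injective_iff_map_eq_zero]
  intro x hx
  obtain ⟨s, y, hs⟩ := loc_surj S mk x
  refine smul_inj_loc S s ?_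
  rw [hs, smul_zero]
  have h1 : al (f y) = 0 := by rw [← lmap_apply S mk, ← hs, map_smul_loc, hx, smul_zero]
  obtain ⟨t, ht⟩ := loc_zero S al h1
  have h2 : (t : R) • y = 0 := hf (by rw [map_smul, ht, map_zero])
  refine smul_inj_loc S t ?_
  rw [← map_smul, h2, map_zero, smul_zero]

theorem CM.serre_iff [IsLocalRing R] {d : ℕ} (hR : CM R d) (m : ℕ) (f : M →ₗ[R] (Fin m → R)) (hf : Function.Injective f)
    (F : Res R M) (n : ℕ) (hn : GZ R (LinearMap.range (F.d n))) (k : ℕ) :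
    SerreS R k M ↔ ∀ i, ∀ (p : Ideal R) [p.IsPrime],
      (¬ ∀ f : F.P (i+1) →ₗ[R] R, f ∘ₗ F.d (i+1) = 0 → ∃ s : p.primeCompl, ∃ h : F.P i →ₗ[R] R, h ∘ₗ F.d i = (s : R) • f) →
      ((i + 1 + k : ℕ) : ℕ∞) ≤ p.height := by
  rw [forall_comm]
  unfold SerreS
  refine forall_congr' fun p => ?_
  rw [forall_comm]
  refine forall_congr' fun hp => ?_
  have hht : p.height ≠ ⊤ := by
    intro h
    have h1 := Ideal.height_mono (IsLocalRing.le_maximalIdeal hp.ne_top)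
    rw [h, hR.dim] at h1
    simp at h1
  obtain ⟨h, hh⟩ := ENat.ne_top_iff_exists.1 hht
  have hA := hR.loc p h hh.symm
  let S := p.primeCompl
  let G := F.loc S (LocalizedModule.mkLinearMap S M)
  have hG : GZ (Localization.AtPrime p) (LinearMap.range (G.d n)) := F.loc_om S (LocalizedModule.mkLinearMap S M) n hn
  haveI : Module.Finite (Localization.AtPrime p) (LocalizedModule S M) :=
    Module.Finite.of_isLocalizedModule S (LocalizedModule.mkLinearMap S M)
  have h1 := hA.serre_local G n hG k
  have h2 : ∀ i, G.E0 (Localization.AtPrime p) i ↔ _ := fun i => F.loc_E0 S (LocalizedModule.mkLinearMap S M) i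
  rw [← hh]
  rcases subsingleton_or_nontrivial (LocalizedModule S M) with hs | hnt
  · constructor
    · intro _ i hi
      exact absurd ((h2 i).1 (G.E0_of_subsingleton i)) hi
    · intro _
      have : locDim R p M = ⊥ := by
        unfold locDim
        rw [← Module.supportDim_eq_ringKrullDim_quotient_annihilator, Module.supportDim_eq_bot_iff_subsingleton]
        exact hs
      rw [this]
      simp
  · obtain ⟨f', hf'⟩ := tl_loc f hf S
    have h3 : locDim R p M = ((h : ℕ∞) : WithBot ℕ∞) := hA.dim_tl m f' hf'
    rw [h3]
    have h4 : min (k : WithBot ℕ∞) ((h : ℕ∞) : WithBot ℕ∞) = (((min k h : ℕ) : ℕ∞) : WithBot ℕ∞) := by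
      push_cast; rfl
    rw [h4, WithBot.coe_le_coe]
    unfold locDepth
    rw [depth_iff, h1]
    refine forall_congr' fun i => ?_
    rw [h2 i]
    norm_cast
end LocDim
end
end HL

namespace HL
open CategoryTheory Limits Opposite
noncomputable section
section LCV
variable {R : Type u} [CommRing R] [IsNoetherianRing R]
open IsLocalRing Pointwise

theorem tor_claim (I : Ideal R) (k : ℕ) (N : Type u) [AddCommGroup N] [Module R N]
    (hN : ∀ r ∈ I ^ k, ∀ x : N, r • x = 0) (i : ℕ) : ∀ (X : Type u) [AddCommGroup X] [Module R X] [Module.Finite R X]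
    (e : EX R X N i), ∃ n, EX.pull (I ^ n • (⊤ : Submodule R X)).subtype e = 0 := by
  induction i with
  | zero =>
    intro X _ _ _ e
    obtain ⟨φ, rfl⟩ := EX.mk_surj e
    refine ⟨k, ?_⟩
    rw [EX.pull_mk, EX.mk_eq_zero]
    ext ⟨x, hx⟩
    change φ x = 0
    induction hx using Submodule.smul_induction_on' with
    | smul r hr x _ => rw [_root_.map_smul, hN r hr]
    | add x _ y _ h1 h2 => rw [_root_.map_add, h1, h2, add_zero]
  | succ i ih =>
    intro X _ _ _ e
    obtain ⟨m, g, hg⟩ := Module.Finite.exists_fin' R X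
    have hs := SES.of_ker hg
    haveI := EX.sub_proj (R := R) (X := Fin m → R) (Y := N) i
    obtain ⟨e', rfl⟩ := hs.cex3 e (Subsingleton.elim _ _)
    obtain ⟨n0, hn0⟩ := ih _ e'
    obtain ⟨k, hk⟩ := Ideal.exists_pow_inf_eq_pow_smul I (LinearMap.ker g)
    refine ⟨k + n0, ?_⟩
    have hmap : ∀ x ∈ I ^ (k + n0) • (⊤ : Submodule R (Fin m → R)), g x ∈ I ^ (k+n0) • (⊤ : Submodule R X) := by
      intro x hx
      have := Submodule.mem_map_of_mem (f := g) hx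
      rw [Submodule.map_smul''] at this
      exact Submodule.smul_mono le_rfl le_top this
    let g' := g.restrict hmap
    have hg' : Function.Surjective g' := by
      rintro ⟨y, hy⟩
      rw [← LinearMap.range_eq_top.2 hg, LinearMap.range_eq_map, ← Submodule.map_smul''] at hy
      obtain ⟨x, hx, rfl⟩ := hy
      exact ⟨⟨x, hx⟩, rfl⟩
    have hs' := SES.of_ker hg'
    have hmem : ∀ x : LinearMap.ker g', ∃ h : (x : (I ^ (k + n0) • (⊤ : Submodule R (Fin m → R)) : Submodule R _)).1 ∈ LinearMap.ker g,
        (⟨_, h⟩ : LinearMap.ker g) ∈ I ^ n0 • (⊤ : Submodule R (LinearMap.ker g)) := by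
      rintro ⟨⟨x, hx⟩, hx'⟩
      have h1 : g x = 0 := congrArg Subtype.val hx'
      refine ⟨h1, ?_⟩
      have h2 : x ∈ I ^ (k + n0) • ⊤ ⊓ LinearMap.ker g := ⟨hx, h1⟩
      rw [hk _ (by omega), show k + n0 - k = n0 by omega] at h2
      have h3 : x ∈ I ^ n0 • LinearMap.ker g := Submodule.smul_mono le_rfl inf_le_right h2
      have h4 : I ^ n0 • LinearMap.ker g = (I ^ n0 • (⊤ : Submodule R (LinearMap.ker g))).map (LinearMap.ker g).subtype := by
        rw [Submodule.map_smul'']; simp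
      rw [h4] at h3
      obtain ⟨y, hy, hyx⟩ := h3
      have : y = ⟨x, h1⟩ := Subtype.ext hyx
      rwa [← this]
    let a' : LinearMap.ker g' →ₗ[R] (I ^ n0 • (⊤ : Submodule R (LinearMap.ker g)) : Submodule R (LinearMap.ker g)) :=
      { toFun := fun x => ⟨⟨x.1.1, (hmem x).1⟩, (hmem x).2⟩
        map_add' := fun _ _ => rfl
        map_smul' := fun _ _ => rfl }
    have h0 := EX.pull_pull (X'' := LinearMap.ker g') (X' := (I ^ n0 • (⊤ : Submodule R (LinearMap.ker g)) : Submodule R (LinearMap.ker g))) a' (Submodule.subtype (I ^ n0 • (⊤ : Submodule R (LinearMap.ker g)))) e'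
    rw [hn0, _root_.map_zero] at h0
    refine (SES.δ'_nat hs' hs ((Submodule.subtype _) ∘ₗ a') (Submodule.subtype _) (Submodule.subtype _) (by ext; rfl) (by ext; rfl) e').trans ?_
    exact (congrArg _ h0.symm).trans (_root_.map_zero _)

theorem LC.sub_of_torsion (I : Ideal R) (k : ℕ) (N : Type u) [AddCommGroup N] [Module R N]
    (hN : ∀ r ∈ I ^ k, ∀ x : N, r • x = 0) (i : ℕ) : Subsingleton (LC I N (i+1)) := by
  rw [LC.sub_iff]
  intro n e
  have hs : SES (Submodule.subtype (I ^ n)) (Submodule.mkQ (I ^ n)) := SES.of_mkQ (I ^ n)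
  haveI := EX.sub_proj (R := R) (X := R) (Y := N) i
  obtain ⟨e', rfl⟩ := hs.cex3 e (Subsingleton.elim _ _)
  obtain ⟨n0, hn0⟩ := tor_claim I k N hN i _ e'
  have hle : I ^ (n0 + n) ≤ I ^ n := Ideal.pow_le_pow_right (by omega)
  refine ⟨n0 + n, hle, ?_⟩
  have hs' : SES (Submodule.subtype (I ^ (n0 + n))) (Submodule.mkQ (I ^ (n0 + n))) := SES.of_mkQ (I ^ (n0 + n))
  have h4 : I ^ (n0 + n) = (I ^ n0 • (⊤ : Submodule R (I ^ n : Ideal R))).map (Submodule.subtype (I ^ n)) := by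
    rw [Submodule.map_smul'']; simp [pow_add]
  have hmem : ∀ x : (I ^ (n0 + n) : Ideal R), (⟨x.1, hle x.2⟩ : (I ^ n : Ideal R)) ∈ I ^ n0 • (⊤ : Submodule R (I ^ n : Ideal R)) := by
    rintro ⟨x, hx⟩
    have h3 := hx
    rw [h4] at h3
    obtain ⟨y, hy, hyx⟩ := h3
    have : y = ⟨x, hle hx⟩ := Subtype.ext hyx
    rwa [← this]
  let a' : (I ^ (n0 + n) : Ideal R) →ₗ[R] (I ^ n0 • (⊤ : Submodule R (I ^ n : Ideal R)) : Submodule R (I ^ n : Ideal R)) :=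
      { toFun := fun x => ⟨⟨x.1, hle x.2⟩, hmem x⟩
        map_add' := fun _ _ => rfl
        map_smul' := fun _ _ => rfl }
  have h0 := EX.pull_pull a' (Submodule.subtype _) e'
  rw [hn0, _root_.map_zero] at h0
  refine (SES.δ'_nat hs' hs ((Submodule.subtype _) ∘ₗ a') LinearMap.id (fac hle) (by ext; rfl) (by ext; rfl) e').trans ?_
  exact (congrArg _ h0.symm).trans (_root_.map_zero _)

theorem LC.tors {I : Ideal R} {N : Type u} [AddCommGroup N] [Module R N] {i : ℕ} (e : LC I N i) : ∃ n, ∀ r ∈ I ^ n, r • e = 0 := by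
  obtain ⟨n, e, rfl⟩ := LC.exists_of e
  refine ⟨n, fun r hr => ?_⟩
  have h0 : r • e = 0 := by
    rw [← EX.pull_id e, ← EX.pull_smul]
    have : (r • LinearMap.id : (R ⧸ I ^ n) →ₗ[R] (R ⧸ I ^ n)) = 0 := by
      ext
      simp only [LinearMap.comp_apply, LinearMap.smul_apply, LinearMap.id_apply]
      change Ideal.Quotient.mk (I ^ n) (r * 1) = 0
      rw [Ideal.Quotient.eq_zero_iff_mem]; simpa using hr
    rw [this, EX.pull_zero]
  rw [← _root_.map_smul, h0, _root_.map_zero]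

variable [IsLocalRing R]

theorem exists_gamma (N : Type u) [AddCommGroup N] [Module R N] [Module.Finite R N] :
    ∃ T : Submodule R N, (∃ k, ∀ r ∈ maximalIdeal R ^ k, ∀ x : T, r • x = 0) ∧
      ∃ x ∈ maximalIdeal R, IsSMulRegular (N ⧸ T) x := by
  obtain ⟨T, ⟨k, hk⟩, hmax⟩ := WellFounded.has_min (wellFounded_gt (α := Submodule R N))
    {T | ∃ k, ∀ r ∈ maximalIdeal R ^ k, ∀ x ∈ T, r • x = 0} ⟨⊥, 0, by simp⟩
  refine ⟨T, ⟨k, fun r hr x => Subtype.ext (hk r hr x x.2)⟩, exists_reg_of_ext _ ?_⟩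
  rw [EX.sub_iff]
  intro e
  obtain ⟨φ, rfl⟩ := EX.mk_surj e
  rw [EX.mk_eq_zero]
  obtain ⟨y, hy⟩ := T.mkQ_surjective (φ (Ideal.Quotient.mk _ 1))
  have hmy : ∀ r ∈ maximalIdeal R, r • y ∈ T := by
    intro r hr
    rw [← T.ker_mkQ, LinearMap.mem_ker, _root_.map_smul, hy, ← _root_.map_smul]
    have : r • (Ideal.Quotient.mk (maximalIdeal R) 1) = 0 := by
      change Ideal.Quotient.mk _ (r * 1) = 0
      rw [Ideal.Quotient.eq_zero_iff_mem]; simpa using hr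
    rw [this, _root_.map_zero]
  have hin : T ⊔ Submodule.span R {y} ∈ {T : Submodule R N | ∃ k, ∀ r ∈ maximalIdeal R ^ k, ∀ x ∈ T, r • x = 0} := by
    refine ⟨k + 1, fun r hr x hx => ?_⟩
    obtain ⟨t, ht, z, hz, rfl⟩ := Submodule.mem_sup.1 hx
    obtain ⟨c, rfl⟩ := Submodule.mem_span_singleton.1 hz
    have h1 : r • t = 0 := hk r (Ideal.pow_le_pow_right (by omega) hr) t ht
    have h2 : r • y = 0 := by
      rw [pow_succ] at hr
      clear h1 hx
      induction hr using Submodule.mul_induction_on' with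
      | mem_mul_mem a ha b hb => rw [mul_smul]; exact hk a ha _ (hmy b hb)
      | add a _ b _ h1 h2 => rw [add_smul, h1, h2, add_zero]
    rw [smul_add, h1, smul_comm, h2]; simp
  have hyT : y ∈ T := by
    by_contra hns
    refine hmax _ hin (lt_of_le_of_ne le_sup_left ?_)
    intro h
    exact hns (h ▸ (le_sup_right : _ ≤ T ⊔ Submodule.span R {y}) (Submodule.mem_span_singleton_self y))
  have h0 : φ (Ideal.Quotient.mk _ 1) = 0 := by rw [← hy]; simpa using hyT
  ext
  exact h0

theorem LC.vanish (s : ℕ) : ∀ (N : Type u) [AddCommGroup N] [Module R N] [Module.Finite R N]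
    (_ : Module.supportDim R N < (s : WithBot ℕ∞)) (i : ℕ) (_ : s ≤ i), Subsingleton (LC (maximalIdeal R) N i) := by
  induction s with
  | zero =>
    intro N _ _ _ h i hi
    have : Subsingleton N := by
      by_contra hns
      rw [not_subsingleton_iff_nontrivial] at hns
      have : (0 : WithBot ℕ∞) ≤ Module.supportDim R N := Order.krullDim_nonneg_iff.2 (Module.nonempty_support_iff.2 hns).to_subtype
      exact absurd h (by simpa using this)
    exact LC.sub_of_subsingleton
  | succ s ih =>
    intro N _ _ _ h i hi
    obtain ⟨i, rfl⟩ : ∃ j, i = j + 1 := ⟨i - 1, by omega⟩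
    obtain ⟨T, ⟨k, hk⟩, x, hx, hreg⟩ := exists_gamma (R := R) N
    refine LC.sub_mid (SES.of_mkQ T) (LC.sub_of_torsion _ k T hk i) ?_
    have h1 := Module.supportDim_quotSMulTop_succ_eq_supportDim hreg hx
    have h2 : Module.supportDim R (QuotSMulTop x (N ⧸ T)) < (s : WithBot ℕ∞) := by
      by_contra hns
      push Not at hns
      have h3 := Module.supportDim_le_of_surjective T.mkQ T.mkQ_surjective
      have h4 : ((s + 1 : ℕ) : WithBot ℕ∞) ≤ Module.supportDim R (QuotSMulTop x (N ⧸ T)) + 1 := by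
        push_cast; gcongr
      rw [h1] at h4
      exact absurd (h.trans_le (h4.trans h3)) (lt_irrefl _)
    have h3 := ih _ h2 i (by omega)
    have hs := SES.of_smul x hreg
    have hinj : ∀ e : LC (maximalIdeal R) (N ⧸ T) (i+1), x • e = 0 → e = 0 := by
      intro e he
      have : LC.map (maximalIdeal R) (i+1) (LinearMap.lsmul R (N ⧸ T) x) e = 0 := by
        have h4 : (LinearMap.lsmul R (N ⧸ T) x) = x • LinearMap.id := by ext; rfl
        rw [h4, LC.map_smul, LC.map_id, he]
      obtain ⟨y, rfl⟩ := LC.ex1 hs e this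
      have : y = 0 := h3.elim _ _
      rw [this, _root_.map_zero]
    refine LC.sub_of_forall fun e => ?_
    obtain ⟨n, hn⟩ := LC.tors e
    have h5 : ∀ n, x ^ n • e = 0 → e = 0 := by
      intro n
      induction n with
      | zero => intro h; simpa using h
      | succ n ih2 =>
        intro h
        rw [pow_succ', mul_smul] at h
        exact ih2 (hinj _ h)
    exact h5 n (hn _ (Ideal.pow_mem_pow hx n))
end LCV
end
end HL

namespace HL
open CategoryTheory Limits Opposite
noncomputable section
section GrS
variable {R : Type u} [CommRing R] [IsNoetherianRing R] [IsLocalRing R] {d : ℕ}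
open IsLocalRing Pointwise

variable (R) in
def Gr (E : Type u) [AddCommGroup E] [Module R E] (r : ℕ) : Prop :=
  ∀ p : Ideal R, p.IsPrime → Module.annihilator R E ≤ p → (r : ℕ∞) ≤ p.height

variable {E E' : Type u} [AddCommGroup E] [Module R E] [AddCommGroup E'] [Module R E']

theorem Gr.of_sub [Subsingleton E] (r : ℕ) : Gr R E r := by
  intro p hp h
  rw [Module.annihilator_eq_top_iff.2 ‹_›] at h
  exact absurd (top_le_iff.1 h) hp.ne_top

theorem Gr.triv (hR : CM R d) {r : ℕ} (h : Gr R E r) (hr : d < r) : Subsingleton E := by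
  rw [← Module.annihilator_eq_top_iff (R := R)]
  by_contra hns
  have h1 := h _ (maximalIdeal.isMaximal R).isPrime (le_maximalIdeal hns)
  rw [hR.dim] at h1
  norm_cast at h1
  omega

theorem Gr.mono {r r' : ℕ} (h : Gr R E r) (hle : Module.annihilator R E ≤ Module.annihilator R E') (hr : r' ≤ r) : Gr R E' r' :=
  fun p hp hp' => le_trans (by exact_mod_cast hr) (h p hp (hle.trans hp'))

theorem Gr.lc [Module.Finite R E] (hR : CM R d) {r i : ℕ} (h : Gr R E r) (hi : d < r + i) : Subsingleton (LC (maximalIdeal R) E i) := by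
  refine LC.vanish i E ?_ i le_rfl
  by_contra hns
  push Not at hns
  obtain ⟨l, hl⟩ := Order.le_krullDim_iff.1 hns
  have h1 : (r : ℕ∞) ≤ (l.head).1.asIdeal.height := h _ (l.head).1.isPrime (Module.annihilator_le_of_mem_support l.head.2)
  have h2 : (i : ℕ∞) ≤ Order.coheight (l.head).1 := by
    rw [← hl]
    have := Order.length_le_coheight (p := l.map Subtype.val (fun a b h => h)) (x := (l.head).1) (le_refl _)
    exact this
  have h3 := (add_le_add h1 h2).trans (ht_add_coht (l.head).1)
  rw [hR.dim] at h3
  norm_cast at h3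
  omega

theorem CM.lc_proj (hR : CM R d) (Q : Type u) [AddCommGroup Q] [Module R Q] [Module.Finite R Q] [Module.Projective R Q] {i : ℕ} (hi : i < d) :
    Subsingleton (LC (maximalIdeal R) Q i) := LC.sub_of_forall fun x => by
  obtain ⟨n, e, rfl⟩ := LC.exists_of x
  haveI := EX.sub_proj_right (P := Q) (hR.ext_pow n i hi)
  rw [Subsingleton.elim e 0, _root_.map_zero]

theorem CM.lc_quot (hR : CM R d) {r i : ℕ} {I : Ideal R} (h : Rg r I) (hi : i + r < d) :
    Subsingleton (LC (maximalIdeal R) (R ⧸ I) i) := LC.sub_of_forall fun x => by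
  obtain ⟨n, e, rfl⟩ := LC.exists_of x
  haveI := h.ext (hR.ext_pow n) i hi
  rw [Subsingleton.elim e 0, _root_.map_zero]

theorem CM.lemD (hR : CM R d) (s : ℕ) : ∀ (r : ℕ) (I : Ideal R), Rg r I → r + s = d → ∀ a : R,
    (∀ x : LC (maximalIdeal R) (R ⧸ I) s, a • x = 0) → a ∈ I := by
  induction s with
  | zero =>
    intro r I h hr a ha
    obtain rfl : r = d := by omega
    obtain ⟨n, hn⟩ := h.rad hR.dim
    have h1 := ha (LC.of _ _ 0 n (EX.mk (fac hn)))
    rw [← _root_.map_smul] at h1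
    obtain ⟨m, hm, h2⟩ := LC.of_zero h1
    have h3 : trm (maximalIdeal R) (R ⧸ I) 0 n m hm (a • EX.mk (fac hn)) = a • EX.mk (fac hn ∘ₗ fac (Ideal.pow_le_pow_right hm)) := by
      rw [_root_.map_smul]; unfold trm; rw [EX.pull_mk]
    rw [h3, ← EX.push_id (EX.mk _), ← EX.push_smul, EX.push_mk, EX.mk_eq_zero] at h2
    have h4 := LinearMap.congr_fun h2 (Ideal.Quotient.mk _ 1)
    rw [← Ideal.Quotient.eq_zero_iff_mem]
    have h5 : a • Ideal.Quotient.mk I 1 = 0 := h4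
    rw [← mul_one a]
    exact h5
  | succ s ih =>
    intro r I h hr a ha
    obtain ⟨y, hy, hreg⟩ := exists_reg_of_ext (maximalIdeal R) (N := R ⧸ I) (h.ext hR.ext 0 (by omega))
    have key : ∀ n : ℕ, a ∈ I ⊔ Ideal.span {y ^ (n + 1)} := by
      intro n
      have hreg' := hreg.pow (n + 1)
      have hy' : y ^ (n + 1) ∈ maximalIdeal R := Ideal.pow_mem_of_mem _ hy _ (by omega)
      refine ih (r + 1) _ (Rg.succ r I _ h hy' hreg') (by omega) a fun x => ?_
      have hs := SES.of_smul_quot I _ hreg'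
      haveI := hR.lc_quot h (i := s) (by omega)
      have h1 : LC.δ (maximalIdeal R) s hs (a • x) = 0 := by rw [_root_.map_smul, ha]
      obtain ⟨z, hz⟩ := LC.ex3 hs _ h1
      rw [← hz, Subsingleton.elim z 0, _root_.map_zero]
    rw [← Ideal.Quotient.eq_zero_iff_mem]
    have h2 : Ideal.Quotient.mk I a ∈ (⨅ n : ℕ, maximalIdeal R ^ n • ⊤ : Submodule R (R ⧸ I)) := by
      rw [Submodule.mem_iInf]
      intro n
      obtain ⟨b, hb, c, hc, hbc⟩ := Submodule.mem_sup.1 (key n)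
      obtain ⟨c, rfl⟩ := Ideal.mem_span_singleton'.1 hc
      have h3 : Ideal.Quotient.mk I a = y ^ (n + 1) • Ideal.Quotient.mk I c := by
        change _ = Ideal.Quotient.mk I (y ^ (n + 1) * c)
        rw [Ideal.Quotient.eq, ← hbc, mul_comm c]
        simpa using hb
      rw [h3]
      exact Submodule.smul_mem_smul (Ideal.pow_le_pow_right (by omega) (Ideal.pow_mem_pow hy (n + 1))) trivial
    rw [Ideal.iInf_pow_smul_eq_bot_of_isLocalRing _ (maximalIdeal.isMaximal R).ne_top] at h2
    exact h2

theorem CM.lemD' [Module.Finite R E] (hR : CM R d) {r s : ℕ} (h : Gr R E r) (hr : r + s = d)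
    (h0 : Subsingleton (LC (maximalIdeal R) E s)) : Gr R E (r + 1) := by
  by_cases hT : Module.annihilator R E = ⊤
  · haveI := Module.annihilator_eq_top_iff.1 hT
    exact Gr.of_sub _
  obtain ⟨I, hI, hIE⟩ := hR.exists_rg _ (le_maximalIdeal hT) r h
  have hsub : Subsingleton (E →ₗ[R] (R ⧸ I)) := by
    refine subsingleton_of_forall_eq 0 fun φ => ?_
    ext e
    obtain ⟨a, ha⟩ := Ideal.Quotient.mk_surjective (φ e)
    rw [LinearMap.zero_apply, ← ha, Ideal.Quotient.eq_zero_iff_mem]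
    refine hR.lemD s r I hI hr a fun x => ?_
    let ψ : (R ⧸ I) →ₗ[R] E := Submodule.liftQ I (LinearMap.toSpanSingleton R E e) (fun r hr => by
      rw [LinearMap.mem_ker, LinearMap.toSpanSingleton_apply]
      exact Module.mem_annihilator.1 (hIE hr) e)
    have h1 : φ ∘ₗ ψ = a • LinearMap.id := by
      apply Submodule.linearMap_qext
      ext
      change φ ((1 : R) • e) = a • Ideal.Quotient.mk I 1
      rw [one_smul, ← ha]
      change _ = Ideal.Quotient.mk I (a * 1)
      rw [mul_one]
    have h2 : a • x = LC.map _ s φ (LC.map _ s ψ x) := by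
      rw [LC.map_map, h1, LC.map_smul, LC.map_id]
    rw [h2, Subsingleton.elim (LC.map _ s ψ x) 0, _root_.map_zero]
  obtain ⟨x, hx, hreg⟩ := IsSMulRegular.subsingleton_linearMap_iff.1 hsub
  intro p hp hle
  exact (Rg.succ r I x hI (le_maximalIdeal hT hx) hreg).height p (sup_le (hIE.trans hle)
    ((Ideal.span_singleton_le_iff_mem _).2 (hle hx)))

theorem LC.map_sum {ι : Type} (t : Finset ι) {I : Ideal R} {s : ℕ} (f : ι → (E →ₗ[R] E')) (x : LC I E s) :
    LC.map I s (∑ i ∈ t, f i) x = ∑ i ∈ t, LC.map I s (f i) x := by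
  classical
  induction t using Finset.induction_on with
  | empty => simp [LC.map_zero]
  | insert a t ha ih => rw [Finset.sum_insert ha, Finset.sum_insert ha, LC.map_add, ih]

theorem CM.lemJ [Module.Finite R E] (hR : CM R d) {r s : ℕ} (h : Gr R E r) (hr : r + s = d)
    (J : Ideal R) (hJ : ∀ p : Ideal R, p.IsPrime → J ≤ p → ((r + 1 : ℕ) : ℕ∞) ≤ p.height)
    (h0 : ∀ a ∈ J, ∀ x : LC (maximalIdeal R) E s, a • x = 0) : Subsingleton (LC (maximalIdeal R) E s) := by
  obtain ⟨m, a, ha⟩ := Submodule.fg_iff_exists_fin_generating_family.1 (IsNoetherian.noetherian J)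
  let Φ : (Fin m → E) →ₗ[R] E := ∑ i, a i • LinearMap.proj i
  have haJ : ∀ i, a i ∈ J := fun i => ha ▸ Submodule.subset_span ⟨i, rfl⟩
  have hΦ : ∀ v, Φ v = ∑ i, a i • v i := by intro v; simp [Φ]
  have hs1 := SES.of_ker Φ.surjective_rangeRestrict
  have hs2 := SES.of_mkQ (LinearMap.range Φ)
  have hJr : J ≤ Module.annihilator R (E ⧸ LinearMap.range Φ) := by
    rw [← ha, Submodule.span_le]
    rintro _ ⟨i, rfl⟩
    rw [SetLike.mem_coe, Module.mem_annihilator]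
    intro x
    obtain ⟨x, rfl⟩ := Submodule.mkQ_surjective _ x
    rw [← _root_.map_smul, Submodule.mkQ_apply, Submodule.Quotient.mk_eq_zero]
    classical
    refine ⟨Pi.single i x, ?_⟩
    rw [hΦ, Finset.sum_eq_single i]
    · simp
    · intro j _ hj; simp [hj]
    · simp
  have hq : Gr R (E ⧸ LinearMap.range Φ) (r + 1) := fun p hp hle => hJ p hp (hJr.trans hle)
  haveI h1 := hq.lc hR (i := s) (by omega)
  have hk : Gr R (LinearMap.ker Φ.rangeRestrict) r := h.mono (fun c hc => by
    rw [Module.mem_annihilator] at hc ⊢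
    rintro ⟨v, hv⟩
    apply Subtype.ext
    funext i
    exact hc _) le_rfl
  haveI h2 := hk.lc hR (i := s + 1) (by omega)
  refine LC.sub_of_forall fun x => ?_
  obtain ⟨y, rfl⟩ := LC.ex2 hs2 x (Subsingleton.elim _ _)
  obtain ⟨z, rfl⟩ := LC.ex3 hs1 y (Subsingleton.elim _ _)
  rw [LC.map_map]
  have h3 : (LinearMap.range Φ).subtype ∘ₗ Φ.rangeRestrict = Φ := by ext; rfl
  rw [h3, LC.map_sum]
  refine Finset.sum_eq_zero fun i _ => ?_
  rw [LC.map_smul]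
  exact h0 _ (haJ i) _
end GrS
end
end HL

namespace HL
open CategoryTheory Limits Opposite
noncomputable section
section Fin1
variable {R : Type u} [CommRing R] [IsNoetherianRing R] [IsLocalRing R] {d : ℕ}
variable {M : Type u} [AddCommGroup M] [Module R M] [Module.Finite R M]
open IsLocalRing Pointwise

theorem CM.serre_one (hR : CM R d) (m : ℕ) (f : M →ₗ[R] (Fin m → R)) (hf : Function.Injective f) : SerreS R 1 M := by
  intro p hp
  have hht : p.height ≠ ⊤ := by
    intro h
    have h1 := Ideal.height_mono (IsLocalRing.le_maximalIdeal hp.ne_top)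
    rw [h, hR.dim] at h1
    simp at h1
  obtain ⟨h, hh⟩ := ENat.ne_top_iff_exists.1 hht
  have hA := hR.loc p h hh.symm
  let S := p.primeCompl
  haveI : Module.Finite (Localization.AtPrime p) (LocalizedModule S M) :=
    Module.Finite.of_isLocalizedModule S (LocalizedModule.mkLinearMap S M)
  rcases subsingleton_or_nontrivial (LocalizedModule S M) with hs | hnt
  · have : locDim R p M = ⊥ := by
      unfold locDim
      rw [← Module.supportDim_eq_ringKrullDim_quotient_annihilator, Module.supportDim_eq_bot_iff_subsingleton]
      exact hs
    rw [this]
    simp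
  · obtain ⟨f', hf'⟩ := tl_loc f hf S
    have h3 : locDim R p M = ((h : ℕ∞) : WithBot ℕ∞) := hA.dim_tl m f' hf'
    rw [h3]
    have h4 : min ((1 : ℕ) : WithBot ℕ∞) ((h : ℕ∞) : WithBot ℕ∞) = (((min 1 h : ℕ) : ℕ∞) : WithBot ℕ∞) := by
      push_cast; rfl
    rw [h4, WithBot.coe_le_coe]
    unfold locDepth
    rw [depth_iff]
    intro t ht
    obtain ⟨ht1, ht2⟩ := lt_min_iff.1 ht
    obtain rfl : t = 0 := by omega
    exact SES.sub_left0 (SES.of_inj hf') (EX.sub_proj_right (hA.ext 0 ht2))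

structure Cx (R : Type u) [CommRing R] where
  Q : ℕ → Type u
  [acg : ∀ i, AddCommGroup (Q i)]
  [mod : ∀ i, Module R (Q i)]
  [proj : ∀ i, Module.Projective R (Q i)]
  [fin : ∀ i, Module.Finite R (Q i)]
  b : (i : ℕ) → (Q i →ₗ[R] Q (i + 1))
  bb : ∀ i x, b (i + 1) (b i x) = 0

attribute [instance] Cx.acg Cx.mod Cx.proj Cx.fin

/-- the submodule `range (d i)*`. -/
abbrev Cx.N (F : Cx R) (i : ℕ) : Submodule R (F.Q (i+1)) := LinearMap.range (F.b i)
abbrev Cx.X (F : Cx R) (i : ℕ) : Type u := F.Q (i+1) ⧸ F.N i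

theorem Cx.le_ker (F : Cx R) (i : ℕ) : F.N i ≤ LinearMap.ker (F.b (i+1)).rangeRestrict := by
  rintro _ ⟨h, rfl⟩
  rw [LinearMap.mem_ker]
  apply Subtype.ext
  exact F.bb i h

def Cx.pr (F : Cx R) (i : ℕ) : F.X i →ₗ[R] F.N (i+1) := Submodule.liftQ _ (F.b (i+1)).rangeRestrict (F.le_ker i)
theorem Cx.pr_surj (F : Cx R) (i : ℕ) : Function.Surjective (F.pr i) := by
  intro y
  obtain ⟨x, hx⟩ := (F.b (i+1)).surjective_rangeRestrict y
  exact ⟨Submodule.Quotient.mk x, hx⟩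

abbrev Cx.e (F : Cx R) (i : ℕ) : Submodule R (F.X i) := LinearMap.ker (F.pr i)

theorem Cx.ann_e (F : Cx R) (i : ℕ) (p : Ideal R) [hp : p.IsPrime] : Module.annihilator R (F.e i) ≤ p ↔
    (¬ ∀ f : F.Q (i+1), F.b (i+1) f = 0 → ∃ s : p.primeCompl, ∃ h : F.Q i, F.b i h = (s : R) • f) := by
  have h1 : Module.annihilator R (F.e i) ≤ p ↔ (⟨p, hp⟩ : PrimeSpectrum R) ∈ Module.support R (F.e i) := 
    (Module.mem_support_iff_of_finite (R := R) (M := F.e i) (p := ⟨p, hp⟩)).symm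
  rw [h1, ← not_iff_not, not_not, Module.notMem_support_iff']
  constructor
  · intro H f hf
    obtain ⟨r, hr, h⟩ := H ⟨Submodule.Quotient.mk f, by
      rw [LinearMap.mem_ker]; exact Subtype.ext hf⟩
    refine ⟨⟨r, hr⟩, ?_⟩
    have h2 : (Submodule.Quotient.mk (r • f) : F.X i) = 0 := congrArg Subtype.val h
    rw [Submodule.Quotient.mk_eq_zero] at h2
    exact h2
  · rintro H ⟨x, hx⟩
    obtain ⟨f, rfl⟩ := Submodule.Quotient.mk_surjective _ x
    obtain ⟨s, h, hs⟩ := H f (congrArg Subtype.val hx)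
    refine ⟨s, s.2, ?_⟩
    apply Subtype.ext
    change (Submodule.Quotient.mk ((s : R) • f) : F.X i) = 0
    rw [Submodule.Quotient.mk_eq_zero]
    exact ⟨h, hs⟩

def Res.cx (F : Res R M) : Cx R where
  Q i := Module.Dual R (F.P i)
  b i := (F.d i).dualMap
  bb i h := by
    ext x
    change h (F.d i (F.d (i+1) x)) = 0
    have : F.d i (F.d (i+1) x) = 0 := by
      rw [← LinearMap.mem_ker, ← F.exact i]; exact ⟨x, rfl⟩
    rw [this, map_zero]

theorem CM.serre_gr (hR : CM R d) (F : Res R M) (m : ℕ) (f : M →ₗ[R] (Fin m → R)) (hf : Function.Injective f)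
    (n : ℕ) (hn : GZ R (LinearMap.range (F.d n))) (k : ℕ) :
    SerreS R k M ↔ ∀ i, Gr R (F.cx.e i) (i + 1 + k) := by
  rw [hR.serre_iff m f hf F n hn k]
  refine forall_congr' fun i => forall_congr' fun p => ?_
  refine forall_congr' fun hp => ?_
  rw [F.cx.ann_e i p]
  rfl

variable {F : Cx R}

theorem Cx.ses1 (F : Cx R) (i : ℕ) : SES (F.e i).subtype (F.pr i) := SES.of_ker (F.pr_surj i)
theorem Cx.ses2 (F : Cx R) (i : ℕ) : SES (F.N i).subtype (F.N i).mkQ := SES.of_mkQ (F.N i)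

theorem CM.N_zero (hR : CM R d) (F : Cx R) (i : ℕ) (hd : 0 < d) : Subsingleton (LC (maximalIdeal R) (F.N i) 0) :=
  LC.sub_left0 (F.ses2 i) (hR.lc_proj _ hd)
theorem CM.N_succ (hR : CM R d) (F : Cx R) (i t : ℕ) (hd : t + 1 < d) (h : Subsingleton (LC (maximalIdeal R) (F.X i) t)) :
    Subsingleton (LC (maximalIdeal R) (F.N i) (t+1)) :=
  LC.sub_left (F.ses2 i) h (hR.lc_proj _ hd)
theorem CM.X_of_N (hR : CM R d) (F : Cx R) (i t : ℕ) (hd : t < d) (h : Subsingleton (LC (maximalIdeal R) (F.N i) (t+1))) :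
    Subsingleton (LC (maximalIdeal R) (F.X i) t) :=
  LC.sub_right (F.ses2 i) (hR.lc_proj _ hd) h

theorem CM.fwd (hR : CM R d) (k : ℕ) (H : ∀ i, Gr R (F.e i) (i + 1 + k)) (u : ℕ) :
    ∀ i, d ≤ u + k + i → u < d → Subsingleton (LC (maximalIdeal R) (F.X i) u) := by
  induction u with
  | zero =>
    intro i hi hd
    exact LC.sub_mid (F.ses1 i) ((H i).lc hR (by omega)) (hR.N_zero F _ hd)
  | succ u ih =>
    intro i hi hd
    exact LC.sub_mid (F.ses1 i) ((H i).lc hR (by omega)) (hR.N_succ F _ _ hd (ih (i+1) (by omega) (by omega)))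

theorem CM.fwd' (hR : CM R d) (k : ℕ) (H : ∀ i, Gr R (F.e i) (i + 1 + k)) (i : ℕ) (h1 : d + 1 ≤ i + k) (h2 : i < d) :
    Subsingleton (LC (maximalIdeal R) (F.N 0) i) := by
  cases i with
  | zero => exact hR.N_zero F 0 h2
  | succ u => exact hR.N_succ F _ _ h2 (hR.fwd k H u 0 (by omega) (by omega))

variable (F) in
def Cx.J : ℕ → ℕ → Ideal R
  | 0, j => Module.annihilator R (F.e j)
  | w + 1, j => Module.annihilator R (F.e j) * Cx.J w (j + 1)

theorem Cx.J_ht (r : ℕ) (w : ℕ) : ∀ j, (∀ l ≥ j, Gr R (F.e l) r) → ∀ p : Ideal R, p.IsPrime → F.J w j ≤ p → (r : ℕ∞) ≤ p.height := by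
  induction w with
  | zero => intro j H p hp h; exact H j le_rfl p hp h
  | succ w ih =>
    intro j H p hp h
    rcases (hp.mul_le).1 h with h | h
    · exact H j le_rfl p hp h
    · exact ih (j+1) (fun l hl => H l (by omega)) p hp h

theorem ann_LC {E : Type u} [AddCommGroup E] [Module R E] {I : Ideal R} {i : ℕ} {a : R} (ha : a ∈ Module.annihilator R E) (x : LC I E i) : a • x = 0 := by
  have : a • (LinearMap.id : E →ₗ[R] E) = 0 := by ext y; exact Module.mem_annihilator.1 ha y
  rw [← LC.map_id x, ← LC.map_smul, this, LC.map_zero]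

theorem CM.kill (hR : CM R d) (w : ℕ) : ∀ j, w < d → ∀ a ∈ F.J w j, ∀ x : LC (maximalIdeal R) (F.X j) w, a • x = 0 := by
  induction w with
  | zero =>
    intro j hd a ha x
    haveI := hR.N_zero F (j+1) hd
    obtain ⟨y, rfl⟩ := LC.ex2 (F.ses1 j) x (Subsingleton.elim _ _)
    rw [← _root_.map_smul, ann_LC ha, _root_.map_zero]
  | succ w ih =>
    intro j hd a ha x
    change a ∈ Module.annihilator R (F.e j) * F.J w (j + 1) at ha
    induction ha using Submodule.mul_induction_on' with
    | add a _ b _ h1 h2 => rw [add_smul, h1, h2, add_zero]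
    | mem_mul_mem a ha b hb =>
      rw [mul_smul]
      have h1 : LC.map _ (w+1) (F.pr j) (b • x) = 0 := by
        haveI := hR.lc_proj (F.Q (j+1+1)) hd
        obtain ⟨z, hz⟩ := LC.ex1 (F.ses2 (j+1)) (LC.map _ (w+1) (F.pr j) x) (Subsingleton.elim _ _)
        rw [_root_.map_smul, ← hz, ← _root_.map_smul, ih (j+1) (by omega) b hb, _root_.map_zero]
      obtain ⟨y, hy⟩ := LC.ex2 (F.ses1 j) _ h1
      rw [← hy, ← _root_.map_smul, ann_LC ha, _root_.map_zero]

theorem CM.bwd (hR : CM R d) (c : ℕ) (H : ∀ i, Gr R (F.e i) (i + 1 + c)) (s0 : ℕ) (hs : s0 + c + 1 = d) 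
    (h0 : Subsingleton (LC (maximalIdeal R) (F.N 0) (s0 + 1))) : ∀ i, Gr R (F.e i) (i + 1 + (c + 1)) := by
  have A : ∀ i t, i + t = s0 → Subsingleton (LC (maximalIdeal R) (F.X i) t) := by
    intro i
    induction i with
    | zero =>
      intro t ht
      obtain rfl : t = s0 := by omega
      exact hR.X_of_N F 0 t (by omega) h0
    | succ i ih =>
      intro t ht
      refine hR.X_of_N F (i+1) t (by omega) ?_
      exact LC.sub_right (F.ses1 i) (ih (t+1) (by omega)) ((H i).lc hR (by omega))
  have B : ∀ t i, s0 < i + t → Gr R (F.e i) (i + 1 + (c + 1)) := by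
    intro t
    induction t with
    | zero =>
      intro i hi
      haveI := (H i).triv hR (by omega)
      exact Gr.of_sub _
    | succ t ih =>
      intro i hi
      by_cases hlt : s0 < i + t
      · exact ih i hlt
      have hit : i + t = s0 := by omega
      refine hR.lemD' (r := i + 1 + c) (s := t) (H i) (by omega) ?_
      have hA := A i t hit
      rcases t with _ | _ | w
      · exact LC.sub_left0 (F.ses1 i) hA
      · exact LC.sub_left (F.ses1 i) (hR.N_zero F _ (by omega)) hA
      · refine hR.lemJ (H i) (by omega) (F.J w (i+1)) ?_ ?_
        · refine Cx.J_ht _ w (i+1) fun l hl => ?_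
          exact (ih l (by omega)).mono le_rfl (by omega)
        · intro a ha x
          obtain ⟨y, rfl⟩ := LC.ex1 (F.ses1 i) x (Subsingleton.elim _ _)
          haveI := hR.lc_proj (F.Q (i+1+1)) (i := w+1) (by omega)
          obtain ⟨z, rfl⟩ := LC.ex1 (F.ses2 (i+1)) y (Subsingleton.elim _ _)
          rw [← _root_.map_smul, ← _root_.map_smul, hR.kill w (i+1) (by omega) a ha, _root_.map_zero, _root_.map_zero]
  intro i
  exact B (s0 + 1) i (by omega)

theorem CM.main (hR : CM R d) (F : Res R M) (m : ℕ) (f : M →ₗ[R] (Fin m → R)) (hf : Function.Injective f)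
    (n : ℕ) (hn : GZ R (LinearMap.range (F.d n))) (k : ℕ) :
    SerreS R k M ↔ ∀ i, d + 1 ≤ i + k → i < d → Subsingleton (LC (maximalIdeal R) (F.cx.N 0) i) := by
  constructor
  · intro h
    rw [hR.serre_gr F m f hf n hn] at h
    exact hR.fwd' k h
  · intro H
    rcases k with _ | k
    · intro p hp
      refine le_trans (min_le_left _ _) ?_
      exact_mod_cast WithBot.coe_le_coe.2 (zero_le (a := locDepth R p M))
    have key : ∀ c ≤ k, ∀ i, Gr R (F.cx.e i) (i + 1 + (c + 1)) := by
      intro c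
      induction c with
      | zero =>
        intro _
        exact (hR.serre_gr F m f hf n hn 1).1 (hR.serre_one m f hf)
      | succ c ih =>
        intro hc
        have h1 := ih (by omega)
        by_cases hd : c + 2 ≤ d
        · exact hR.bwd (c + 1) h1 (d - c - 2) (by omega) (H _ (by omega) (by omega))
        · intro i
          haveI := (h1 i).triv hR (by omega)
          exact Gr.of_sub _
    exact (hR.serre_gr F m f hf n hn (k+1)).2 (key k le_rfl)

end Fin1
end
end HL

namespace HL
open CategoryTheory Limits Opposite
noncomputable section
section Fin2

def ofMin {R M : Type u} [CommRing R] [AddCommGroup M] [Module R M] (F : MinRes R M) : Res R M where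
  P i := F.P i
  proj := F.projective
  fin := F.finite
  d := F.d
  ε := F.ε
  surj := F.surj
  exact0 := F.exact0
  exact := F.exact

theorem final {R : Type u} [CommRing R] [IsNoetherianRing R] [IsLocalRing R] (d : ℕ)
    (hdim : ringKrullDim R = ((d : ℕ∞) : WithBot ℕ∞))
    (hCM : rdepth R = (d : ℕ∞))
    (M : Type u) [AddCommGroup M] [Module R M] [Module.Finite R M]
    (F : MinRes R M) (hHL : IsHorizontallyLinked R M) (hfin : GDim R M < ⊤) (k : ℕ) :
    SerreS R k M ↔ ∀ i : ℕ, (d : ℤ) - k + 1 ≤ (i : ℤ) → (i : ℤ) ≤ (d : ℤ) - 1 →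
      Subsingleton (locCoh R (IsLocalRing.maximalIdeal R) i F.lambdaMod) := by
  have hR : CM R d := by
    constructor
    · exact (depth_iff (M := R) d).1 (le_of_eq hCM.symm)
    · have h1 := IsLocalRing.maximalIdeal_height_eq_ringKrullDim (R := R)
      rw [hdim] at h1
      exact_mod_cast h1
  obtain ⟨n, hn⟩ : ∃ n : ℕ, GDimLE R n (ModuleCat.of R M) := by
    by_contra hns
    push Not at hns
    refine absurd hfin (not_lt_of_ge (le_sInf ?_))
    rintro _ ⟨n, rfl, h⟩
    exact absurd h (hns n)
  obtain ⟨F', G, ⟨φ⟩⟩ := hHL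
  haveI := G.projective 1
  haveI := G.finite 1
  obtain ⟨m, s, π, hs⟩ := exists_retract (R := R) (Module.Dual R (G.P 1))
  have hsi : Function.Injective s := fun x y hxy => by
    have hx := LinearMap.congr_fun hs x
    have hy := LinearMap.congr_fun hs y
    simp only [LinearMap.comp_apply, LinearMap.id_apply] at hx hy
    rw [← hx, ← hy, hxy]
  let f : M →ₗ[R] (Fin m → R) := s ∘ₗ (Submodule.subtype (LinearMap.range (G.d 0).dualMap)) ∘ₗ φ.symm.toLinearMap
  have hf : Function.Injective f := hsi.comp (Subtype.val_injective.comp φ.symm.injective)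
  rw [hR.main (ofMin F) m f hf n ((ofMin F).omGZ n hn) k]
  refine forall_congr' fun i => ?_
  rw [locCoh_iff]
  constructor
  · intro h h1 h2; exact h (by omega) (by omega)
  · intro h h1 h2; exact h (by omega) (by omega)
end Fin2
end
end HL

section Statements

variable (R : Type u) [CommRing R] [IsNoetherianRing R]

theorem stmt15 [IsLocalRing R] (d : ℕ) (hdim : ringKrullDim R = ((d : ℕ∞) : WithBot ℕ∞))
    (hCM : rdepth R = (d : ℕ∞))
    (M : Type u) [AddCommGroup M] [Module R M] [Module.Finite R M]
    (F : MinRes R M) (hHL : IsHorizontallyLinked R M) (hfin : GDim R M < ⊤) (k : ℕ) :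
    SerreS R k M ↔ ∀ i : ℕ, (d : ℤ) - k + 1 ≤ (i : ℤ) → (i : ℤ) ≤ (d : ℤ) - 1 →
      Subsingleton (locCoh R (IsLocalRing.maximalIdeal R) i F.lambdaMod) := by
  exact HL.final d hdim hCM M F hHL hfin k

end Statements
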